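/- Global quantitative strong maximum principle in the unit ball. For every integer n ≥ 2, reals 0 < λ ≤ Λ, exponent q > n, and K > 0, there exist constants ε > 0 and c > 0 such that the following holds. Let b : B₁ → ℝ be continuous with b ≥ 0 and ‖b‖_{L^q(B₁)} ≤ K, and let u be a C² function on B₁ with u ≥ 0 such that g(x) := 𝓜⁻(D²u(x)) − b(x)|Du(x)| ≤ 0 for all x ∈ B₁. Then c·(∫_{B₁} (−g(x))^ε dx)^{1/ε} ≤ inf_{x ∈ B₁} u(x)/(1−|x|), the integral being a Lebesgue integral with values in [0,+∞]. -/

import Mathlib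

open MeasureTheory
open scoped ENNReal

/-- The Pucci minimal extremal operator `𝓜⁻(M)` with ellipticity constants `lam ≤ Lam`:
the infimum of `tr(A*M)` over symmetric matrices `A` with `lam•I ≤ A ≤ Lam•I`. -/
noncomputable def pucciMinus (n : ℕ) (lam Lam : ℝ) (M : Matrix (Fin n) (Fin n) ℝ) : ℝ :=
  sInf { t : ℝ | ∃ A : Matrix (Fin n) (Fin n) ℝ, A.IsSymm ∧
    (A - lam • (1 : Matrix (Fin n) (Fin n) ℝ)).PosSemidef ∧
    (Lam • (1 : Matrix (Fin n) (Fin n) ℝ) - A).PosSemidef ∧ t = (A * M).trace }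

/-- The Pucci maximal extremal operator `𝓜⁺(M)`. -/
noncomputable def pucciPlus (n : ℕ) (lam Lam : ℝ) (M : Matrix (Fin n) (Fin n) ℝ) : ℝ :=
  sSup { t : ℝ | ∃ A : Matrix (Fin n) (Fin n) ℝ, A.IsSymm ∧
    (A - lam • (1 : Matrix (Fin n) (Fin n) ℝ)).PosSemidef ∧
    (Lam • (1 : Matrix (Fin n) (Fin n) ℝ) - A).PosSemidef ∧ t = (A * M).trace }

/-- The Hessian matrix `D²u(x)` of `u` at `x`. -/
noncomputable def hess (n : ℕ) (u : EuclideanSpace ℝ (Fin n) → ℝ)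
    (x : EuclideanSpace ℝ (Fin n)) : Matrix (Fin n) (Fin n) ℝ :=
  fun i j => fderiv ℝ (fun y => fderiv ℝ u y (EuclideanSpace.single j (1 : ℝ))) x
    (EuclideanSpace.single i (1 : ℝ))

/-- The euclidean norm `|Du(x)|` of the gradient of `u` at `x`. -/
noncomputable def gradNorm (n : ℕ) (u : EuclideanSpace ℝ (Fin n) → ℝ)
    (x : EuclideanSpace ℝ (Fin n)) : ℝ := ‖fderiv ℝ u x‖

/-- The `L^p` norm `(∫_E |g|^p)^(1/p)`, as a Lebesgue integral valued in `[0,∞]`. -/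
noncomputable def LpNormE (n : ℕ) (p : ℝ) (g : EuclideanSpace ℝ (Fin n) → ℝ)
    (E : Set (EuclideanSpace ℝ (Fin n))) : ℝ≥0∞ :=
  (∫⁻ x in E, ENNReal.ofReal (|g x| ^ p)) ^ (1 / p)

/-- The last (`n`-th) coordinate `x_n` of a point of `ℝⁿ`. -/
def lastC (n : ℕ) (hn : 1 ≤ n) (x : EuclideanSpace ℝ (Fin n)) : ℝ := x ⟨n - 1, by omega⟩

/-- The open half-ball `B_R⁺ = {|x| < R, x_n > 0}`. -/
def halfBall (n : ℕ) (hn : 1 ≤ n) (R : ℝ) : Set (EuclideanSpace ℝ (Fin n)) :=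
  {x | ‖x‖ < R ∧ 0 < lastC n hn x}

/-- The flat boundary part `B_R⁰ = {|x| ≤ R, x_n = 0}`. -/
def flatB (n : ℕ) (hn : 1 ≤ n) (R : ℝ) : Set (EuclideanSpace ℝ (Fin n)) :=
  {x | ‖x‖ ≤ R ∧ lastC n hn x = 0}

/-- The norm `‖g‖_{L^{p,q}(B_R⁺)} = ‖g‖_{L^p(B_R⁺)} + ‖g‖_{L^q(B_R⁺ ∩ {x_n < d0})}`. -/
noncomputable def LpqNormHB (n : ℕ) (hn : 1 ≤ n) (p q d0 R : ℝ)
    (g : EuclideanSpace ℝ (Fin n) → ℝ) : ℝ≥0∞ :=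
  LpNormE n p g (halfBall n hn R) +
    LpNormE n q g {x ∈ halfBall n hn R | lastC n hn x < d0}

/-- The open cube `Q_ρ` of side `ρ` centered at `(0,…,0,ρ/2)`. -/
def cubeQ (n : ℕ) (hn : 1 ≤ n) (ρ : ℝ) : Set (EuclideanSpace ℝ (Fin n)) :=
  {x | (∀ i : Fin n, i.1 ≠ n - 1 → |x i| < ρ / 2) ∧ 0 < lastC n hn x ∧ lastC n hn x < ρ}

/-- The norm `‖g‖_{L^{p,q}(Q₂)} = ‖g‖_{L^p(Q₂)} + ‖g‖_{L^q(Q₂ ∩ {x_n < d0})}`. -/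
noncomputable def LpqNormQ (n : ℕ) (hn : 1 ≤ n) (p q d0 : ℝ)
    (g : EuclideanSpace ℝ (Fin n) → ℝ) : ℝ≥0∞ :=
  LpNormE n p g (cubeQ n hn 2) +
    LpNormE n q g {x ∈ cubeQ n hn 2 | lastC n hn x < d0}

/-! Let `u z < m (1 - |z|)` for some `z`; the task is to bound the `L^ε` size of `-g` by a multiple
of `m`. By doubling of lower bounds inside the ball and a Hopf-type barrier at the sphere, a bound
`u ≥ t` on a ball of radius `r` forces `u ≥ c r^N t (1 - |x|)` everywhere, so every ball of radius
`r` contains a point where `u ≤ m / (c r^N)`. For `M` of that size, `v = 1 - exp (-u / M)` is a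
supersolution with values in `[0, 1)`. The Alexandrov-Bakelman-Pucci argument shows that the set of
points which cannot be touched from below by a paraboloid of opening `4^j` loses a fixed fraction of
its measure whenever `j` grows by one. At a touching point with `b ≤ 2^j` the Hessian of `u` is
bounded below and its gradient above, whence `-g ≤ C m L^j`. The set where this fails thus has
geometrically small measure, and integrating over its layers gives the theorem. -/

section Development

open Set Metric Filter Topology
open scoped Gradient Matrix

section PucciOperator

variable {n : ℕ} {lam Lam : ℝ}

/-- The coefficient matrices over which the Pucci operators optimise: symmetric, with spectrum in
`[lam, Lam]`. -/
structure IsElliptic (lam Lam : ℝ) (A : Matrix (Fin n) (Fin n) ℝ) : Prop where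
  isSymm : A.IsSymm
  posSemidef_sub : (A - lam • (1 : Matrix (Fin n) (Fin n) ℝ)).PosSemidef
  sub_posSemidef : (Lam • (1 : Matrix (Fin n) (Fin n) ℝ) - A).PosSemidef

open scoped MatrixOrder in
theorem trace_mul_nonneg_of_posSemidef {m : Type*} [Fintype m]
    {A B : Matrix m m ℝ} (hA : A.PosSemidef) (hB : B.PosSemidef) : 0 ≤ (A * B).trace := by
  classical
  obtain ⟨C, rfl⟩ := CStarAlgebra.nonneg_iff_eq_star_mul_self.mp hB.nonneg
  rw [Matrix.star_eq_conjTranspose, ← Matrix.mul_assoc, Matrix.trace_mul_comm, ← Matrix.mul_assoc]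
  exact (hA.mul_mul_conjTranspose_same C).trace_nonneg

theorem det_le_trace_pow_of_posSemidef {m : Type*} [Fintype m] [DecidableEq m]
    {H : Matrix m m ℝ} (hH : H.PosSemidef) : H.det ≤ H.trace ^ Fintype.card m := by
  rw [hH.1.det_eq_prod_eigenvalues, hH.1.trace_eq_sum_eigenvalues]
  simp only [RCLike.ofReal_real_eq_id, id]
  calc ∏ i, hH.1.eigenvalues i ≤ ∏ _i : m, ∑ j, hH.1.eigenvalues j :=
        Finset.prod_le_prod (fun i _ => hH.eigenvalues_nonneg i) fun i _ =>
          Finset.single_le_sum (fun j _ => hH.eigenvalues_nonneg j) (Finset.mem_univ i)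
    _ = _ := by rw [Finset.prod_const, Finset.card_univ]

theorem exists_posSemidef_add_smul_one {m : Type*} [Finite m] [DecidableEq m]
    {H : Matrix m m ℝ} (hH : H.IsHermitian) :
    ∃ t : ℝ, 0 ≤ t ∧ (H + t • (1 : Matrix m m ℝ)).PosSemidef := by
  cases nonempty_fintype m
  set t : ℝ := ∑ i, |hH.eigenvalues i|
  refine ⟨t, by positivity, ?_⟩
  have hdiag : (Matrix.diagonal fun i => hH.eigenvalues i + t).PosSemidef :=
    Matrix.PosSemidef.diagonal fun i => by
      have := Finset.single_le_sum (fun j _ => abs_nonneg (hH.eigenvalues j)) (Finset.mem_univ i)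
      exact neg_le_iff_add_nonneg.1 ((neg_le_neg this).trans (neg_abs_le _))
  have hconj : H + t • (1 : Matrix m m ℝ) = Unitary.conjStarAlgAut ℝ _ hH.eigenvectorUnitary
      (Matrix.diagonal fun i => hH.eigenvalues i + t) := by
    conv_lhs => rw [hH.spectral_theorem]
    rw [← Matrix.diagonal_add, map_add, ← Matrix.smul_one_eq_diagonal, map_smul, map_one]
    rfl
  rw [hconj, Unitary.conjStarAlgAut_apply]
  exact hdiag.mul_mul_conjTranspose_same _

theorem isElliptic_smul_one (h : lam ≤ Lam) :
    IsElliptic lam Lam (lam • (1 : Matrix (Fin n) (Fin n) ℝ)) where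
  isSymm := by simp [Matrix.IsSymm]
  posSemidef_sub := by simpa using Matrix.PosSemidef.zero
  sub_posSemidef := by
    rw [← sub_smul]
    exact Matrix.PosSemidef.one.smul (sub_nonneg.2 h)

namespace IsElliptic

variable {A H : Matrix (Fin n) (Fin n) ℝ}

theorem mul_trace_le (hA : IsElliptic lam Lam A) (hH : H.PosSemidef) :
    lam * H.trace ≤ (A * H).trace := by
  have := trace_mul_nonneg_of_posSemidef hA.posSemidef_sub hH
  rw [Matrix.sub_mul, Matrix.trace_sub, Matrix.smul_mul, Matrix.one_mul, Matrix.trace_smul,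
    smul_eq_mul] at this
  linarith

theorem trace_le (hA : IsElliptic lam Lam A) : A.trace ≤ Lam * n := by
  have := hA.sub_posSemidef.trace_nonneg
  rw [Matrix.trace_sub, Matrix.trace_smul, Matrix.trace_one, Fintype.card_fin, smul_eq_mul] at this
  linarith

theorem neg_le_trace_mul (hA : IsElliptic lam Lam A) (hlam : 0 ≤ lam) {t : ℝ} (ht : 0 ≤ t)
    (hH : (H + t • (1 : Matrix (Fin n) (Fin n) ℝ)).PosSemidef) :
    -(Lam * n * t) ≤ (A * H).trace := by
  have hlow : 0 ≤ (A * (H + t • (1 : Matrix (Fin n) (Fin n) ℝ))).trace :=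
    (mul_nonneg hlam hH.trace_nonneg).trans (hA.mul_trace_le hH)
  rw [Matrix.mul_add, Matrix.trace_add, Matrix.mul_smul, Matrix.mul_one, Matrix.trace_smul,
    smul_eq_mul] at hlow
  linarith [mul_le_mul_of_nonneg_left hA.trace_le ht]

theorem le_trace_mul_smul_vecMulVec_sub (hA : IsElliptic lam Lam A) {p m : ℝ} (hp : 0 ≤ p)
    (hm : 0 ≤ m) (a : Fin n → ℝ) :
    p * (lam * (a ⬝ᵥ a)) - m * (Lam * n) ≤
      (A * (p • Matrix.vecMulVec a a - m • (1 : Matrix (Fin n) (Fin n) ℝ))).trace := by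
  have hrank : lam * (a ⬝ᵥ a) ≤ (A * Matrix.vecMulVec a a).trace := by
    simpa [Matrix.trace_vecMulVec] using
      hA.mul_trace_le (Matrix.posSemidef_vecMulVec_self_star a)
  rw [Matrix.mul_sub, Matrix.trace_sub, Matrix.mul_smul, Matrix.mul_smul, Matrix.trace_smul,
    Matrix.trace_smul, Matrix.mul_one, smul_eq_mul, smul_eq_mul]
  linarith [mul_le_mul_of_nonneg_left hrank hp, mul_le_mul_of_nonneg_left hA.trace_le hm]

end IsElliptic

variable {H P A : Matrix (Fin n) (Fin n) ℝ}

theorem exists_isElliptic_trace_mul_lt (h : lam ≤ Lam) {s : ℝ}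
    (hs : pucciMinus n lam Lam H < s) : ∃ A, IsElliptic lam Lam A ∧ (A * H).trace < s := by
  have hone := isElliptic_smul_one (n := n) h
  obtain ⟨_, ⟨A, h₁, h₂, h₃, rfl⟩, hA⟩ :=
    exists_lt_of_csInf_lt (by exact ⟨_, _, hone.1, hone.2, hone.3, rfl⟩) hs
  exact ⟨A, ⟨h₁, h₂, h₃⟩, hA⟩

theorem pucciMinus_le_trace_mul (hlam : 0 ≤ lam) (hH : H.IsHermitian)
    (hA : IsElliptic lam Lam A) : pucciMinus n lam Lam H ≤ (A * H).trace := by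
  obtain ⟨t, ht, hHt⟩ := exists_posSemidef_add_smul_one hH
  refine csInf_le ⟨-(Lam * n * t), ?_⟩ ⟨A, hA.1, hA.2, hA.3, rfl⟩
  rintro _ ⟨A', h₁, h₂, h₃, rfl⟩
  exact (IsElliptic.mk h₁ h₂ h₃).neg_le_trace_mul hlam ht hHt

theorem neg_le_pucciMinus (hlam : 0 ≤ lam) (h : lam ≤ Lam) {t : ℝ} (ht : 0 ≤ t)
    (hH : (H + t • (1 : Matrix (Fin n) (Fin n) ℝ)).PosSemidef) :
    -(Lam * n * t) ≤ pucciMinus n lam Lam H := by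
  have hone := isElliptic_smul_one (n := n) h
  refine le_csInf ⟨_, _, hone.1, hone.2, hone.3, rfl⟩ ?_
  rintro _ ⟨A, h₁, h₂, h₃, rfl⟩
  exact IsElliptic.neg_le_trace_mul ⟨h₁, h₂, h₃⟩ hlam ht hH

theorem mul_trace_sub_le_pucciMinus_sub (h : lam ≤ Lam) {c : ℝ} (hHP : (H - P).PosSemidef)
    (hP : ∀ A, IsElliptic lam Lam A → c ≤ (A * P).trace) :
    lam * (H - P).trace ≤ pucciMinus n lam Lam H - c := by
  refine le_of_forall_pos_le_add fun η hη => ?_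
  obtain ⟨A, hA, hAH⟩ := exists_isElliptic_trace_mul_lt h
    (lt_add_of_pos_right (pucciMinus n lam Lam H) hη)
  have hsplit : (A * (H - P)).trace = (A * H).trace - (A * P).trace := by
    rw [Matrix.mul_sub, Matrix.trace_sub]
  linarith [hA.mul_trace_le hHP, hP A hA]

end PucciOperator

section SecondDerivativeTest

theorem deriv_deriv_nonneg_of_isLocalMin {f : ℝ → ℝ} {t : ℝ} (hf : ContinuousAt f t)
    (hmin : IsLocalMin f t) : 0 ≤ deriv (deriv f) t := by
  by_contra! hneg
  have hmax : IsLocalMax f t := isLocalMax_of_deriv_deriv_neg hneg hmin.deriv_eq_zero hf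
  have hconst : f =ᶠ[𝓝 t] fun _ => f t := by
    filter_upwards [hmax, hmin] with s h₁ h₂ using le_antisymm h₁ h₂
  have hzero : deriv (deriv f) t = 0 := by simpa using hconst.deriv.deriv_eq
  exact hneg.ne hzero

variable {E : Type*} [NormedAddCommGroup E] [NormedSpace ℝ E] {w : E → ℝ} {x : E}

theorem differentiableAt_fderiv_of_contDiffAt (hw : ContDiffAt ℝ 2 w x) :
    DifferentiableAt ℝ (fderiv ℝ w) x :=
  (hw.fderiv_right (m := 1) (by norm_num)).differentiableAt (by norm_num)

theorem eventually_differentiableAt_of_contDiffAt (hw : ContDiffAt ℝ 2 w x) :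
    ∀ᶠ y in 𝓝 x, DifferentiableAt ℝ w y := by
  filter_upwards [hw.eventually (by simp)] with y hy using hy.differentiableAt (by norm_num)

theorem fderiv_fderiv_nonneg_of_isLocalMin (hw : ContDiffAt ℝ 2 w x) (hmin : IsLocalMin w x)
    (ξ : E) : 0 ≤ fderiv ℝ (fderiv ℝ w) x ξ ξ := by
  set γ : ℝ → E := fun t => x + t • ξ
  have hγ : ∀ t, HasDerivAt γ ξ t := fun t => by
    simpa [γ] using ((hasDerivAt_id t).smul_const ξ).const_add x
  have hγ₀ : γ 0 = x := by simp [γ]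
  have hγx : Tendsto γ (𝓝 0) (𝓝 x) := by simpa only [hγ₀] using (hγ 0).continuousAt.tendsto
  have hdiff : ∀ᶠ t in 𝓝 (0 : ℝ), HasDerivAt (w ∘ γ) (fderiv ℝ w (γ t) ξ) t := by
    filter_upwards [hγx.eventually (eventually_differentiableAt_of_contDiffAt hw)] with t ht
    exact ht.hasFDerivAt.comp_hasDerivAt t (hγ t)
  have hdiff₂ : HasDerivAt (fun t => fderiv ℝ w (γ t) ξ) (fderiv ℝ (fderiv ℝ w) x ξ ξ) 0 := by
    have : HasFDerivAt (fderiv ℝ w) (fderiv ℝ (fderiv ℝ w) x) (γ 0) := by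
      rw [hγ₀]; exact (differentiableAt_fderiv_of_contDiffAt hw).hasFDerivAt
    simpa using (this.comp_hasDerivAt 0 (hγ 0)).clm_apply (hasDerivAt_const (0 : ℝ) ξ)
  have hderiv : deriv (w ∘ γ) =ᶠ[𝓝 0] fun t => fderiv ℝ w (γ t) ξ := by
    filter_upwards [hdiff] with t ht using ht.deriv
  rw [← hdiff₂.deriv, ← hderiv.deriv_eq]
  refine deriv_deriv_nonneg_of_isLocalMin hdiff.self_of_nhds.continuousAt ?_
  filter_upwards [hγx.eventually hmin] with t ht
  simpa only [Function.comp_apply, hγ₀] using ht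

end SecondDerivativeTest

section Hessian

variable {n : ℕ} {u w : EuclideanSpace ℝ (Fin n) → ℝ} {x : EuclideanSpace ℝ (Fin n)}

theorem hess_apply_eq_fderiv_fderiv (hu : ContDiffAt ℝ 2 u x) (i j : Fin n) :
    hess n u x i j = fderiv ℝ (fderiv ℝ u) x (EuclideanSpace.single i (1 : ℝ))
      (EuclideanSpace.single j (1 : ℝ)) := by
  unfold hess
  rw [fderiv_clm_apply (differentiableAt_fderiv_of_contDiffAt hu) (by fun_prop)]
  simp

theorem hess_apply_of_hasFDerivAt (hu : ContDiffAt ℝ 2 u x)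
    {u' : EuclideanSpace ℝ (Fin n) → EuclideanSpace ℝ (Fin n) →L[ℝ] ℝ}
    {u'' : EuclideanSpace ℝ (Fin n) →L[ℝ] EuclideanSpace ℝ (Fin n) →L[ℝ] ℝ}
    (hu' : ∀ᶠ y in 𝓝 x, HasFDerivAt u (u' y) y) (hu'' : HasFDerivAt u' u'' x) (i j : Fin n) :
    hess n u x i j = u'' (EuclideanSpace.single i 1) (EuclideanSpace.single j 1) := by
  have : fderiv ℝ u =ᶠ[𝓝 x] u' := by filter_upwards [hu'] with y hy using hy.fderiv
  rw [hess_apply_eq_fderiv_fderiv hu, this.fderiv_eq, hu''.fderiv]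

theorem isHermitian_hess (hu : ContDiffAt ℝ 2 u x) : (hess n u x).IsHermitian := by
  ext i j
  rw [Matrix.conjTranspose_apply, star_trivial, hess_apply_eq_fderiv_fderiv hu,
    hess_apply_eq_fderiv_fderiv hu]
  exact hu.isSymmSndFDerivAt (by simp) _ _

theorem euclideanSpace_eq_sum_single (ξ : EuclideanSpace ℝ (Fin n)) :
    ξ = ∑ i, ξ i • EuclideanSpace.single i (1 : ℝ) := by
  simpa using ((EuclideanSpace.basisFun (Fin n) ℝ).sum_repr ξ).symm

theorem hess_mulVec_apply (hu : ContDiffAt ℝ 2 u x) (ξ : EuclideanSpace ℝ (Fin n)) (i : Fin n) :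
    (hess n u x *ᵥ ξ) i = fderiv ℝ (fderiv ℝ u) x ξ (EuclideanSpace.single i 1) := by
  rw [← hu.isSymmSndFDerivAt (by simp)]
  conv_rhs => rw [euclideanSpace_eq_sum_single ξ]
  simp only [Matrix.mulVec, dotProduct, hess_apply_eq_fderiv_fderiv hu, map_sum, map_smul,
    smul_eq_mul, mul_comm]

theorem dotProduct_hess_mulVec (hu : ContDiffAt ℝ 2 u x) (ξ : EuclideanSpace ℝ (Fin n)) :
    ξ ⬝ᵥ (hess n u x *ᵥ ξ) = fderiv ℝ (fderiv ℝ u) x ξ ξ := by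
  conv_rhs => arg 2; rw [euclideanSpace_eq_sum_single ξ]
  simp only [dotProduct, hess_mulVec_apply hu, map_sum, map_smul, smul_eq_mul]

theorem posSemidef_hess_of_isLocalMin (hw : ContDiffAt ℝ 2 w x) (hmin : IsLocalMin w x) :
    (hess n w x).PosSemidef :=
  Matrix.PosSemidef.of_dotProduct_mulVec_nonneg (isHermitian_hess hw) fun ξ => by
    rw [star_trivial, ← WithLp.ofLp_toLp 2 ξ, dotProduct_hess_mulVec hw]
    exact fderiv_fderiv_nonneg_of_isLocalMin hw hmin _

theorem hess_add (hu : ContDiffAt ℝ 2 u x) (hw : ContDiffAt ℝ 2 w x) :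
    hess n (fun y => u y + w y) x = hess n u x + hess n w x := by
  ext i j
  rw [hess_apply_of_hasFDerivAt (hu.add hw) (u' := fun y => fderiv ℝ u y + fderiv ℝ w y) _
    ((differentiableAt_fderiv_of_contDiffAt hu).hasFDerivAt.add
      (differentiableAt_fderiv_of_contDiffAt hw).hasFDerivAt)]
  · simp only [add_apply, Matrix.add_apply, hess_apply_eq_fderiv_fderiv hu,
      hess_apply_eq_fderiv_fderiv hw]
  · filter_upwards [eventually_differentiableAt_of_contDiffAt hu,
      eventually_differentiableAt_of_contDiffAt hw] with y h₁ h₂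
    exact h₁.hasFDerivAt.add h₂.hasFDerivAt

theorem hess_neg (hu : ContDiffAt ℝ 2 u x) : hess n (fun y => -u y) x = -hess n u x := by
  ext i j
  rw [hess_apply_of_hasFDerivAt hu.neg (u' := fun y => -fderiv ℝ u y) _
    (differentiableAt_fderiv_of_contDiffAt hu).hasFDerivAt.neg]
  · simp only [neg_apply, Matrix.neg_apply, hess_apply_eq_fderiv_fderiv hu]
  · filter_upwards [eventually_differentiableAt_of_contDiffAt hu] with y h₁
    exact h₁.hasFDerivAt.neg

theorem hess_sub (hu : ContDiffAt ℝ 2 u x) (hw : ContDiffAt ℝ 2 w x) :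
    hess n (fun y => u y - w y) x = hess n u x - hess n w x := by
  simp only [sub_eq_add_neg, hess_add hu hw.neg, hess_neg hw]

theorem gradient_apply (w : EuclideanSpace ℝ (Fin n) → ℝ) (x : EuclideanSpace ℝ (Fin n))
    (i : Fin n) : ∇ w x i = fderiv ℝ w x (EuclideanSpace.single i 1) := by
  rw [← inner_gradient_left, EuclideanSpace.inner_single_right]
  simp

theorem norm_gradient (w : EuclideanSpace ℝ (Fin n) → ℝ) (x : EuclideanSpace ℝ (Fin n)) :
    ‖∇ w x‖ = gradNorm n w x :=
  (InnerProductSpace.toDual ℝ _).symm.norm_map _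

theorem gradient_dotProduct_self (w : EuclideanSpace ℝ (Fin n) → ℝ)
    (x : EuclideanSpace ℝ (Fin n)) :
    (∇ w x).ofLp ⬝ᵥ (∇ w x).ofLp = gradNorm n w x ^ 2 := by
  rw [← norm_gradient, EuclideanSpace.real_norm_sq_eq]
  simp only [dotProduct, sq]

theorem hess_comp {f f' : ℝ → ℝ} {f'' : ℝ} (hw : ContDiffAt ℝ 2 w x)
    (hf : ∀ s, HasDerivAt f (f' s) s) (hf' : HasDerivAt f' f'' (w x)) (hfc : ContDiff ℝ 2 f) :
    hess n (fun y => f (w y)) x =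
      f'' • Matrix.vecMulVec (∇ w x).ofLp (∇ w x).ofLp + f' (w x) • hess n w x := by
  ext i j
  have hfw' : HasFDerivAt (fun y => f' (w y)) (f'' • fderiv ℝ w x) x :=
    hf'.comp_hasFDerivAt x (hw.differentiableAt (by norm_num)).hasFDerivAt
  have hcomp : ContDiffAt ℝ 2 (fun y => f (w y)) x := hfc.contDiffAt.comp x hw
  rw [hess_apply_of_hasFDerivAt hcomp (u' := fun y => f' (w y) • fderiv ℝ w y)
    _ (hfw'.fun_smul (differentiableAt_fderiv_of_contDiffAt hw).hasFDerivAt)]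
  · simp [hess_apply_eq_fderiv_fderiv hw, Matrix.vecMulVec, gradient_apply]
    ring
  · filter_upwards [eventually_differentiableAt_of_contDiffAt hw] with y hy
    exact (hf (w y)).comp_hasFDerivAt y hy.hasFDerivAt

theorem gradNorm_comp {f : ℝ → ℝ} {f' : ℝ} (hw : DifferentiableAt ℝ w x)
    (hf : HasDerivAt f f' (w x)) :
    gradNorm n (fun y => f (w y)) x = |f'| * gradNorm n w x := by
  unfold gradNorm
  rw [show fderiv ℝ (fun y => f (w y)) x = f' • fderiv ℝ w x from
    (hf.comp_hasFDerivAt x hw.hasFDerivAt).fderiv, norm_smul, Real.norm_eq_abs]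

theorem hasFDerivAt_gradient (hw : ContDiffAt ℝ 2 w x) :
    HasFDerivAt (∇ w) (LinearMap.toContinuousLinearMap (Matrix.toEuclideanLin (hess n w x))) x := by
  have hdual := (InnerProductSpace.toDual ℝ (EuclideanSpace ℝ (Fin n))).symm.toContinuousLinearEquiv
    |>.toContinuousLinearMap.hasFDerivAt.comp x
      (differentiableAt_fderiv_of_contDiffAt hw).hasFDerivAt
  refine hdual.congr_fderiv ?_
  ext v i
  have hcoord : ∀ ξ : EuclideanSpace ℝ (Fin n), ξ i = inner ℝ ξ (EuclideanSpace.single i 1) :=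
    fun ξ => by simp [EuclideanSpace.inner_single_right]
  change ((InnerProductSpace.toDual ℝ (EuclideanSpace ℝ (Fin n))).symm
    (fderiv ℝ (fderiv ℝ w) x v)) i = (hess n w x *ᵥ v) i
  rw [hess_mulVec_apply hw, hcoord, InnerProductSpace.toDual_symm_apply]

end Hessian

section Paraboloid

section InnerProductSpace

variable {F : Type*} [NormedAddCommGroup F] [InnerProductSpace ℝ F]

theorem contDiff_paraboloid (c k : ℝ) (z : F) (L : F →L[ℝ] ℝ) :
    ContDiff ℝ 2 fun y => c * ‖y - z‖ ^ 2 + L y + k := by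
  have : ContDiff ℝ 2 fun y : F => ‖y - z‖ ^ 2 := (contDiff_id.sub contDiff_const).norm_sq ℝ
  fun_prop

theorem hasFDerivAt_paraboloid (c k : ℝ) (z x : F) (L : F →L[ℝ] ℝ) :
    HasFDerivAt (fun y => c * ‖y - z‖ ^ 2 + L y + k) ((2 * c) • innerSL ℝ (x - z) + L) x := by
  have hsq := (((hasFDerivAt_id x).sub_const z).norm_sq).const_mul c
  refine ((hsq.add L.hasFDerivAt).add_const k).congr_fderiv ?_
  ext v
  simp
  ring

end InnerProductSpace

variable {n : ℕ}

theorem hess_paraboloid (c k : ℝ) (z x : EuclideanSpace ℝ (Fin n))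
    (L : EuclideanSpace ℝ (Fin n) →L[ℝ] ℝ) :
    hess n (fun y => c * ‖y - z‖ ^ 2 + L y + k) x =
      (2 * c) • (1 : Matrix (Fin n) (Fin n) ℝ) := by
  ext i j
  have hD : HasFDerivAt (fun y => (2 * c) • innerSL ℝ (y - z) + L) ((2 * c) • innerSL ℝ) x :=
    (((innerSL ℝ).hasFDerivAt.comp x ((hasFDerivAt_id x).sub_const z)).const_smul
      (2 * c)).add_const L
  rw [hess_apply_of_hasFDerivAt (contDiff_paraboloid c k z L).contDiffAt
    (Eventually.of_forall fun y => hasFDerivAt_paraboloid c k z y L) hD]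
  have : innerSL ℝ (EuclideanSpace.single i (1 : ℝ)) (EuclideanSpace.single j (1 : ℝ)) =
      if i = j then 1 else 0 := by
    simp [innerSL_apply_apply, EuclideanSpace.inner_single_left]
  simp [this, Matrix.one_apply]

theorem hess_mul_norm_sub_sq (c : ℝ) (z x : EuclideanSpace ℝ (Fin n)) :
    hess n (fun y => c * ‖y - z‖ ^ 2) x = (2 * c) • (1 : Matrix (Fin n) (Fin n) ℝ) := by
  simpa using hess_paraboloid c 0 z x 0

theorem gradNorm_mul_norm_sub_sq (c : ℝ) (z x : EuclideanSpace ℝ (Fin n)) :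
    gradNorm n (fun y => c * ‖y - z‖ ^ 2) x = 2 * |c| * ‖x - z‖ := by
  have := (hasFDerivAt_paraboloid c 0 z x 0).fderiv
  simp only [add_zero, zero_apply] at this
  rw [gradNorm, this, norm_smul, innerSL_apply_norm, Real.norm_eq_abs, abs_mul, abs_two]

end Paraboloid

section ContactSet

variable {E : Type*} [NormedAddCommGroup E] [NormedSpace ℝ E]

/-- The points of `Ω` at which the concave paraboloid of opening `a` tangent to the graph of `w`
stays below `w` on `S`. -/
def contactSet (Ω S : Set E) (w : E → ℝ) (a : ℝ) : Set E :=
  {x ∈ Ω | ∀ z ∈ S, w x + fderiv ℝ w x (z - x) - a / 2 * ‖z - x‖ ^ 2 ≤ w z}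

variable {Ω S : Set E} {w : E → ℝ} {a : ℝ}

theorem contactSet_subset : contactSet Ω S w a ⊆ Ω := fun _ hx => hx.1

theorem contactSet_mono {a' : ℝ} (h : a ≤ a') : contactSet Ω S w a ⊆ contactSet Ω S w a' :=
  fun x hx => ⟨hx.1, fun z hz => le_trans (by gcongr) (hx.2 z hz)⟩

theorem measurableSet_contactSet [MeasurableSpace E] [OpensMeasurableSpace E] (hΩ : IsOpen Ω)
    (hw : ContinuousOn w Ω) (hw' : ContinuousOn (fderiv ℝ w) Ω) :
    MeasurableSet (contactSet Ω S w a) := by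
  set gap : E → E → ℝ := fun z x => w z - (w x + fderiv ℝ w x (z - x) - a / 2 * ‖z - x‖ ^ 2)
  have hgap : ∀ z, ContinuousOn (gap z) Ω := fun z =>
    continuousOn_const.sub ((hw.add (hw'.clm_apply (by fun_prop))).sub (by fun_prop))
  have heq : contactSet Ω S w a = Ω \ ⋃ z ∈ S, Ω ∩ gap z ⁻¹' Iio 0 := by
    ext x
    simp only [contactSet, gap, mem_ofPred_eq, Set.mem_sdiff, mem_iUnion, mem_inter_iff,
      mem_preimage, mem_Iio, sub_neg, not_exists, not_and, not_lt]
    exact and_congr_right fun hx => ⟨fun h z hz _ => h z hz, fun h z hz => h z hz hx⟩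
  rw [heq]
  exact hΩ.measurableSet.diff (isOpen_biUnion fun z _ =>
    (hgap z).isOpen_inter_preimage hΩ isOpen_Iio).measurableSet

theorem continuousOn_of_contDiffAt (hw : ∀ x ∈ Ω, ContDiffAt ℝ 2 w x) : ContinuousOn w Ω :=
  fun x hx => (hw x hx).continuousAt.continuousWithinAt

theorem continuousOn_fderiv_of_contDiffAt (hw : ∀ x ∈ Ω, ContDiffAt ℝ 2 w x) :
    ContinuousOn (fderiv ℝ w) Ω :=
  fun x hx => (differentiableAt_fderiv_of_contDiffAt (hw x hx)).continuousAt.continuousWithinAt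

end ContactSet

section AreaFormula

variable {n : ℕ} {w F : EuclideanSpace ℝ (Fin n) → ℝ} {Ω S : Set (EuclideanSpace ℝ (Fin n))}

theorem posSemidef_hess_add_of_mem_contactSet {a : ℝ} {x : EuclideanSpace ℝ (Fin n)}
    (hS : S ∈ 𝓝 x) (hw : ContDiffAt ℝ 2 w x) (hx : x ∈ contactSet Ω S w a) :
    (hess n w x + a • (1 : Matrix (Fin n) (Fin n) ℝ)).PosSemidef := by
  set k : ℝ := fderiv ℝ w x x - w x
  have hpar : ContDiffAt ℝ 2 (fun z => a / 2 * ‖z - x‖ ^ 2 + (-fderiv ℝ w x) z + k) x :=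
    (contDiff_paraboloid _ _ _ _).contDiffAt
  have hhess : hess n w x + a • (1 : Matrix (Fin n) (Fin n) ℝ) =
      hess n (fun z => w z + (a / 2 * ‖z - x‖ ^ 2 + (-fderiv ℝ w x) z + k)) x := by
    rw [hess_add hw hpar, hess_paraboloid, mul_div_cancel₀ _ (two_ne_zero' ℝ)]
  rw [hhess]
  refine posSemidef_hess_of_isLocalMin (hw.add hpar) ?_
  filter_upwards [hS] with z hz
  have := hx.2 z hz
  simp only [map_sub, neg_apply, sub_self, norm_zero, k] at this ⊢
  linarith

theorem volume_gradient_image_le_lintegral {E : Set (EuclideanSpace ℝ (Fin n))}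
    (hE : MeasurableSet E) (hw : ∀ x ∈ E, ContDiffAt ℝ 2 w x)
    (hpsd : ∀ x ∈ E, (hess n w x).PosSemidef) (hF : ∀ x ∈ E, (hess n w x).trace ≤ F x) :
    volume (∇ w '' E) ≤ ∫⁻ x in E, ENNReal.ofReal (F x ^ n) := by
  refine (addHaar_image_le_lintegral_abs_det_fderiv volume hE
    (fun x hx => (hasFDerivAt_gradient (hw x hx)).hasFDerivWithinAt)).trans ?_
  refine setLIntegral_mono' hE fun x hx => ENNReal.ofReal_le_ofReal ?_
  rw [LinearMap.det_toContinuousLinearMap, Matrix.toEuclideanLin, Matrix.toLpLin_eq_toLin,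
    LinearMap.det_toLin, abs_of_nonneg (hpsd x hx).det_nonneg]
  have hdet := det_le_trace_pow_of_posSemidef (hpsd x hx)
  rw [Fintype.card_fin] at hdet
  exact hdet.trans (pow_le_pow_left₀ (hpsd x hx).trace_nonneg (hF x hx) n)

/-- The scale factor normalising volumes: a ball of radius `r` in `ℝⁿ` has volume
`(ballScale n * r) ^ n`. -/
noncomputable def ballScale (n : ℕ) : ℝ :=
  volume.real (ball (0 : EuclideanSpace ℝ (Fin n)) 1) ^ (1 / n : ℝ)

theorem ballScale_pos (n : ℕ) : 0 < ballScale n :=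
  Real.rpow_pos_of_pos (ENNReal.toReal_pos (measure_ball_pos _ _ one_pos).ne'
    measure_ball_lt_top.ne) _

theorem volume_ball_eq_ballScale_mul_pow (hn : n ≠ 0) (x : EuclideanSpace ℝ (Fin n)) {r : ℝ}
    (hr : 0 ≤ r) : volume (ball x r) = ENNReal.ofReal ((ballScale n * r) ^ n) := by
  have : Nonempty (Fin n) := ⟨⟨0, Nat.pos_of_ne_zero hn⟩⟩
  have hscale : ballScale n ^ n = volume.real (ball (0 : EuclideanSpace ℝ (Fin n)) 1) := by
    rw [ballScale, one_div, Real.rpow_inv_natCast_pow measureReal_nonneg hn]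
  rw [Measure.addHaar_ball volume x hr, finrank_euclideanSpace_fin, mul_pow, hscale, mul_comm,
    ENNReal.ofReal_mul measureReal_nonneg, measureReal_def,
    ENNReal.ofReal_toReal measure_ball_lt_top.ne]

end AreaFormula

section AlexandrovBakelmanPucci

theorem gradient_eq_and_mem_contactSet_of_isMinOn {F : Type*} [NormedAddCommGroup F]
    [InnerProductSpace ℝ F] [CompleteSpace F] {w : F → ℝ} {Ω S : Set F} {p x : F} (hΩ : IsOpen Ω)
    (hΩS : Ω ⊆ S) (hx : x ∈ Ω) (hw : DifferentiableAt ℝ w x)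
    (hmin : IsMinOn (fun z => w z - inner ℝ p z) S x) : ∇ w x = p ∧ x ∈ contactSet Ω S w 0 := by
  have hgrad : HasGradientAt w p x := by
    have hloc := hmin.isLocalMin (mem_of_superset (hΩ.mem_nhds hx) hΩS)
    have hfd := hw.hasFDerivAt
    rw [sub_eq_zero.1 (hloc.hasFDerivAt_eq_zero (hfd.sub (innerSL ℝ p).hasFDerivAt))] at hfd
    exact hasGradientAt_iff_hasFDerivAt.2 hfd
  refine ⟨hgrad.gradient, hx, fun z hz => ?_⟩
  have := isMinOn_iff.1 hmin z hz
  rw [hgrad.fderiv_apply, inner_sub_right]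
  linarith

theorem exists_mem_contactSet_gradient_eq {F : Type*} [NormedAddCommGroup F]
    [InnerProductSpace ℝ F] [CompleteSpace F] {w : F → ℝ} {Ω S : Set F} {p x₀ : F}
    (hS : IsCompact S) (hΩ : IsOpen Ω) (hΩS : Ω ⊆ S) (hw : ContinuousOn w S)
    (hdiff : ∀ x ∈ Ω, DifferentiableAt ℝ w x) (hbd : ∀ x ∈ S, x ∉ Ω → 0 ≤ w x) (hx₀ : x₀ ∈ S)
    (hp : ∀ x ∈ S, inner ℝ p (x - x₀) < -w x₀) :
    ∃ x ∈ contactSet Ω S w 0, ∇ w x = p := by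
  obtain ⟨x, hxS, hmin⟩ := hS.exists_isMinOn ⟨x₀, hx₀⟩
    (hw.sub (Continuous.continuousOn (by fun_prop : Continuous fun x => inner ℝ p x)))
  have hxΩ : x ∈ Ω := by
    by_contra hxΩ
    have hx₀min := isMinOn_iff.1 hmin x₀ hx₀
    have hpx := hp x hxS
    rw [inner_sub_right] at hpx
    simp only [Pi.sub_apply] at hx₀min
    linarith [hbd x hxS hxΩ]
  obtain ⟨hgrad, hcontact⟩ :=
    gradient_eq_and_mem_contactSet_of_isMinOn hΩ hΩS hxΩ (hdiff x hxΩ) hmin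
  exact ⟨x, hcontact, hgrad⟩

variable {n : ℕ} {lam Lam G H : ℝ} {u φ b : EuclideanSpace ℝ (Fin n) → ℝ}

theorem trace_hess_sub_le_of_supersolution (hlam : 0 < lam) (hLam : lam ≤ Lam)
    {x : EuclideanSpace ℝ (Fin n)} (hu : ContDiffAt ℝ 2 u x) (hφ : ContDiffAt ℝ 2 φ x)
    (hb : 0 ≤ b x) (hsup : pucciMinus n lam Lam (hess n u x) ≤ b x * gradNorm n u x)
    (hsub : ∀ A, IsElliptic lam Lam A → 0 ≤ (A * hess n φ x).trace) (hφG : gradNorm n φ x ≤ G)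
    (hH : gradNorm n (fun y => u y - φ y) x ≤ H)
    (hpsd : (hess n (fun y => u y - φ y) x).PosSemidef) :
    (hess n (fun y => u y - φ y) x).trace ≤ b x * ((G + H) / lam) := by
  have hgrad : gradNorm n u x ≤ G + H := by
    have hfd : fderiv ℝ (fun y => u y - φ y) x = fderiv ℝ u x - fderiv ℝ φ x :=
      fderiv_fun_sub (hu.differentiableAt (by norm_num)) (hφ.differentiableAt (by norm_num))
    rw [gradNorm, hfd] at hH
    exact (norm_le_norm_add_norm_sub' _ _).trans (add_le_add hφG hH)
  rw [hess_sub hu hφ] at hpsd ⊢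
  have htrace := mul_trace_sub_le_pucciMinus_sub hLam hpsd hsub
  rw [mul_div_assoc', le_div_iff₀ hlam, mul_comm _ lam]
  linarith [mul_le_mul_of_nonneg_left hgrad hb]

theorem le_mul_add_of_ball_subset_gradient_image (hn : n ≠ 0) (hlam : 0 < lam) (hG : 0 ≤ G)
    (hH : 0 ≤ H) {η : ℝ} (hη : 0 ≤ η) {w : EuclideanSpace ℝ (Fin n) → ℝ}
    {Ω E : Set (EuclideanSpace ℝ (Fin n))} (hΩ : MeasurableSet Ω) (hE : MeasurableSet E)
    (hEΩ : E ⊆ Ω) (hw : ∀ x ∈ E, ContDiffAt ℝ 2 w x) (hpsd : ∀ x ∈ E, (hess n w x).PosSemidef)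
    (htrace : ∀ x ∈ E, (hess n w x).trace ≤ b x * ((G + H) / lam))
    (hbη : ∫⁻ x in Ω, ENNReal.ofReal (b x ^ n) ≤ ENNReal.ofReal (η ^ n))
    (hball : ball 0 H ⊆ ∇ w '' E) : H ≤ η / (lam * ballScale n) * (G + H) := by
  have hω := ballScale_pos n
  set A := (G + H) / lam
  have : 0 ≤ A := by positivity
  have hvol : ENNReal.ofReal ((ballScale n * H) ^ n) ≤ ENNReal.ofReal ((A * η) ^ n) := by
    calc ENNReal.ofReal ((ballScale n * H) ^ n)
        = volume (ball (0 : EuclideanSpace ℝ (Fin n)) H) :=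
          (volume_ball_eq_ballScale_mul_pow hn 0 hH).symm
      _ ≤ volume (∇ w '' E) := measure_mono hball
      _ ≤ ∫⁻ x in E, ENNReal.ofReal ((b x * A) ^ n) :=
          volume_gradient_image_le_lintegral hE hw hpsd htrace
      _ ≤ ∫⁻ x in Ω, ENNReal.ofReal ((b x * A) ^ n) := lintegral_mono_set hEΩ
      _ = ∫⁻ x in Ω, ENNReal.ofReal (A ^ n) * ENNReal.ofReal (b x ^ n) :=
          setLIntegral_congr_fun hΩ fun x _ => by
            rw [← ENNReal.ofReal_mul (by positivity), ← mul_pow, mul_comm]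
      _ = ENNReal.ofReal (A ^ n) * ∫⁻ x in Ω, ENNReal.ofReal (b x ^ n) :=
          lintegral_const_mul' _ _ ENNReal.ofReal_ne_top
      _ ≤ ENNReal.ofReal (A ^ n) * ENNReal.ofReal (η ^ n) := by gcongr
      _ = ENNReal.ofReal ((A * η) ^ n) := by rw [← ENNReal.ofReal_mul (by positivity), ← mul_pow]
  rw [ENNReal.ofReal_le_ofReal_iff (by positivity)] at hvol
  have hlin : ballScale n * H ≤ A * η := le_of_pow_le_pow_left₀ hn (by positivity) hvol
  calc H ≤ A * η / ballScale n := by rwa [le_div_iff₀ hω, mul_comm]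
    _ = η / (lam * ballScale n) * (G + H) := by simp only [A]; field_simp

theorem ball_subset_gradient_image_contactSet {F : Type*} [NormedAddCommGroup F]
    [InnerProductSpace ℝ F] [CompleteSpace F] {w : F → ℝ} {Ω S : Set F} {c x₀ : F} {H ρ : ℝ}
    (hS : IsCompact S) (hΩ : IsOpen Ω) (hΩS : Ω ⊆ S) (hSc : S ⊆ closedBall c ρ) (hρ : 0 < ρ)
    (hw : ContinuousOn w S) (hdiff : ∀ x ∈ Ω, DifferentiableAt ℝ w x)
    (hbd : ∀ x ∈ S, x ∉ Ω → 0 ≤ w x) (hx₀ : x₀ ∈ S) (hH : H * (2 * ρ) ≤ -w x₀) :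
    ball 0 H ⊆ ∇ w '' (contactSet Ω S w 0 ∩ (Ω ∩ ∇ w ⁻¹' ball 0 H)) := by
  intro p hp
  obtain ⟨x, hx, rfl⟩ := exists_mem_contactSet_gradient_eq hS hΩ hΩS hw hdiff hbd hx₀ (p := p)
    fun x hx => by
      have hdist : ‖x - x₀‖ ≤ 2 * ρ := by
        rw [← dist_eq_norm, two_mul]
        exact (dist_triangle_right _ _ c).trans (add_le_add (hSc hx) (hSc hx₀))
      calc inner ℝ p (x - x₀) ≤ ‖p‖ * ‖x - x₀‖ := real_inner_le_norm _ _
        _ ≤ ‖p‖ * (2 * ρ) := by gcongr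
        _ < H * (2 * ρ) := by gcongr; exact mem_ball_zero_iff.1 hp
        _ ≤ -w x₀ := hH
  exact ⟨x, ⟨hx, contactSet_subset hx, hp⟩, rfl⟩

/-- `tr(A D²φ) ≥ 0` for all elliptic `A` says `𝓜⁻(D²φ) ≥ 0`, so `φ` is a subsolution of the
drift-free equation; the price for the drift is the error term. -/
theorem abp_comparison (hn : n ≠ 0) (hlam : 0 < lam) (hLam : lam ≤ Lam)
    {S Ω : Set (EuclideanSpace ℝ (Fin n))} {c : EuclideanSpace ℝ (Fin n)} {ρ η : ℝ}
    (hS : IsCompact S) (hΩ : IsOpen Ω) (hΩS : Ω ⊆ S) (hSc : S ⊆ closedBall c ρ)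
    (hρ : 0 < ρ) (hG : 0 ≤ G) (hη : 0 ≤ η)
    (hu : ∀ x ∈ S, ContDiffAt ℝ 2 u x) (hφ : ∀ x ∈ S, ContDiffAt ℝ 2 φ x)
    (hb : ∀ x ∈ Ω, 0 ≤ b x)
    (hsup : ∀ x ∈ Ω, pucciMinus n lam Lam (hess n u x) ≤ b x * gradNorm n u x)
    (hsub : ∀ x ∈ Ω, ∀ A, IsElliptic lam Lam A → 0 ≤ (A * hess n φ x).trace)
    (hφG : ∀ x ∈ Ω, gradNorm n φ x ≤ G) (hbd : ∀ x ∈ S, x ∉ Ω → φ x ≤ u x)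
    (hbη : ∫⁻ x in Ω, ENNReal.ofReal (b x ^ n) ≤ ENNReal.ofReal (η ^ n))
    (hsmall : η / (lam * ballScale n) ≤ 1 / 2) {x₀ : EuclideanSpace ℝ (Fin n)} (hx₀ : x₀ ∈ S) :
    φ x₀ - 4 * ρ * G * (η / (lam * ballScale n)) ≤ u x₀ := by
  by_contra! hcon
  have hω := ballScale_pos n
  set κ := η / (lam * ballScale n)
  have : 0 ≤ κ := by positivity
  set w : EuclideanSpace ℝ (Fin n) → ℝ := fun y => u y - φ y
  obtain ⟨H, hH⟩ : ∃ H, H * (2 * ρ) = -w x₀ := ⟨-w x₀ / (2 * ρ), by field_simp⟩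
  have hgap : 2 * κ * G < H := by
    refine lt_of_mul_lt_mul_right (a := 2 * ρ) ?_ (by positivity)
    rw [hH]; simp only [w]; linarith
  have hHpos : 0 < H := lt_of_le_of_lt (by positivity) hgap
  have hw : ∀ x ∈ S, ContDiffAt ℝ 2 w x := fun x hx => (hu x hx).sub (hφ x hx)
  have hwΩ : ∀ x ∈ Ω, ContDiffAt ℝ 2 w x := fun x hx => hw x (hΩS hx)
  have hcont : ContinuousOn (∇ w) Ω := fun x hx =>
    (hasFDerivAt_gradient (hwΩ x hx)).continuousAt.continuousWithinAt
  set E := contactSet Ω S w 0 ∩ (Ω ∩ ∇ w ⁻¹' ball 0 H)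
  have hEmeas : MeasurableSet E :=
    (measurableSet_contactSet hΩ (continuousOn_of_contDiffAt hwΩ)
      (continuousOn_fderiv_of_contDiffAt hwΩ)).inter
      (hcont.isOpen_inter_preimage hΩ isOpen_ball).measurableSet
  have hpsd : ∀ x ∈ E, (hess n w x).PosSemidef := fun x hx => by
    simpa using posSemidef_hess_add_of_mem_contactSet
      (mem_of_superset (hΩ.mem_nhds hx.2.1) hΩS) (hwΩ x hx.2.1) hx.1
  have htrace : ∀ x ∈ E, (hess n w x).trace ≤ b x * ((G + H) / lam) := fun x hx =>
    trace_hess_sub_le_of_supersolution hlam hLam (hu x (hΩS hx.2.1)) (hφ x (hΩS hx.2.1))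
      (hb x hx.2.1) (hsup x hx.2.1) (hsub x hx.2.1) (hφG x hx.2.1)
      (by rw [← norm_gradient]; exact (mem_ball_zero_iff.1 hx.2.2).le) (hpsd x hx)
  have hball : ball 0 H ⊆ ∇ w '' E := ball_subset_gradient_image_contactSet hS hΩ hΩS hSc hρ
    (continuousOn_of_contDiffAt hw) (fun x hx => (hwΩ x hx).differentiableAt (by norm_num))
    (fun x hx hxΩ => sub_nonneg.2 (hbd x hx hxΩ)) hx₀ hH.le
  have hkey := le_mul_add_of_ball_subset_gradient_image hn hlam hG hHpos.le hη hΩ.measurableSet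
    hEmeas (fun x hx => hx.2.1) (fun x hx => hwΩ x hx.2.1) hpsd htrace hbη hball
  linarith [mul_le_mul_of_nonneg_right hsmall hHpos.le]

end AlexandrovBakelmanPucci

section Drift

variable {n : ℕ} {lam Lam q K γ : ℝ} {b u : EuclideanSpace ℝ (Fin n) → ℝ}

/-- A drift on the unit ball whose `L^n` norm over a ball of radius `ρ` is at most `K ρ ^ γ`.
By Hölder's inequality, an `L^q` bound with `q > n` gives `γ = 1 - n / q`. -/
structure IsMorreyDrift (n : ℕ) (K γ : ℝ) (b : EuclideanSpace ℝ (Fin n) → ℝ) : Prop where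
  aemeasurable : AEMeasurable b (volume.restrict (ball 0 1))
  nonneg : ∀ x ∈ ball (0 : EuclideanSpace ℝ (Fin n)) 1, 0 ≤ b x
  lintegral_le : ∀ x, ∀ ρ ≥ 0, ∫⁻ y in ball 0 1 ∩ closedBall x ρ, ENNReal.ofReal (b y ^ n) ≤
    ENNReal.ofReal ((K * ρ ^ γ) ^ n)

/-- A nonnegative `C²` supersolution `u` of `𝓜⁻(D²u) - b |Du| ≤ 0` in the unit ball. -/
structure IsNonnegSupersolution (n : ℕ) (lam Lam : ℝ) (b u : EuclideanSpace ℝ (Fin n) → ℝ) :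
    Prop where
  contDiffAt : ∀ x ∈ ball (0 : EuclideanSpace ℝ (Fin n)) 1, ContDiffAt ℝ 2 u x
  nonneg : ∀ x ∈ ball (0 : EuclideanSpace ℝ (Fin n)) 1, 0 ≤ u x
  pucciMinus_le : ∀ x ∈ ball (0 : EuclideanSpace ℝ (Fin n)) 1,
    pucciMinus n lam Lam (hess n u x) ≤ b x * gradNorm n u x

theorem setLIntegral_pow_le_of_LpNormE_le (hn : n ≠ 0) (hq : (n : ℝ) < q)
    {E : Set (EuclideanSpace ℝ (Fin n))} (hE : MeasurableSet E)
    (hb : AEMeasurable b (volume.restrict E)) (hb₀ : ∀ x ∈ E, 0 ≤ b x) :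
    ∫⁻ x in E, ENNReal.ofReal (b x ^ n) ≤ LpNormE n q b E ^ n * volume E ^ (1 - n / q : ℝ) := by
  have hn₀ : (0 : ℝ) < n := Nat.cast_pos.2 (Nat.pos_of_ne_zero hn)
  have hq₀ : 0 < q := hn₀.trans hq
  have hconj : (q / n).HolderConjugate (1 - n / q)⁻¹ :=
    Real.holderConjugate_iff.2 ⟨(one_lt_div hn₀).2 hq, by rw [inv_div, inv_inv]; ring⟩
  have hpow : ∀ x ∈ E, ENNReal.ofReal (b x ^ n) ^ (q / n) = ENNReal.ofReal (|b x| ^ q) := by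
    intro x hx
    rw [ENNReal.ofReal_rpow_of_nonneg (pow_nonneg (hb₀ x hx) n) (by positivity),
      abs_of_nonneg (hb₀ x hx), ← Real.rpow_natCast, ← Real.rpow_mul (hb₀ x hx),
      mul_div_cancel₀ _ hn₀.ne']
  have hexp : 1 / (q / n) = 1 / q * n := by rw [one_div_div, one_div_mul_eq_div]
  have hexp' : 1 / (1 - n / q)⁻¹ = 1 - n / q := by rw [one_div, inv_inv]
  have holder := ENNReal.lintegral_mul_le_Lp_mul_Lq (volume.restrict E) hconj
    (hb.pow_const n).ennreal_ofReal (aemeasurable_const (b := (1 : ℝ≥0∞)))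
  simpa only [Pi.mul_apply, mul_one, ENNReal.one_rpow, setLIntegral_const, one_mul,
    setLIntegral_congr_fun hE hpow, LpNormE, ← ENNReal.rpow_natCast, ← ENNReal.rpow_mul, hexp,
    hexp'] using holder

theorem isMorreyDrift_of_LpNormE_le (hn : n ≠ 0) (hq : (n : ℝ) < q) (hK : 0 ≤ K)
    (hb : AEMeasurable b (volume.restrict (ball 0 1)))
    (hb₀ : ∀ x ∈ ball (0 : EuclideanSpace ℝ (Fin n)) 1, 0 ≤ b x)
    (hbK : LpNormE n q b (ball 0 1) ≤ ENNReal.ofReal K) :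
    IsMorreyDrift n (K * ballScale n ^ (1 - n / q)) (1 - n / q) b where
  aemeasurable := hb
  nonneg := hb₀
  lintegral_le x ρ hρ := by
    have hq₀ : 0 < q := (Nat.cast_nonneg n).trans_lt hq
    have hγ : 0 ≤ 1 - n / q := sub_nonneg.2 ((div_le_one hq₀).2 hq.le)
    have hω := ballScale_pos n
    set E := ball (0 : EuclideanSpace ℝ (Fin n)) 1 ∩ closedBall x ρ
    have hnorm : LpNormE n q b E ≤ ENNReal.ofReal K :=
      (ENNReal.rpow_le_rpow (lintegral_mono_set inter_subset_left) (by positivity)).trans hbK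
    have hvol : volume E ≤ ENNReal.ofReal ((ballScale n * ρ) ^ n) := by
      have : Nonempty (Fin n) := ⟨⟨0, Nat.pos_of_ne_zero hn⟩⟩
      rw [← volume_ball_eq_ballScale_mul_pow hn x hρ, ← Measure.addHaar_closedBall_eq_addHaar_ball]
      exact measure_mono inter_subset_right
    calc ∫⁻ y in E, ENNReal.ofReal (b y ^ n)
        ≤ LpNormE n q b E ^ n * volume E ^ (1 - n / q : ℝ) :=
          setLIntegral_pow_le_of_LpNormE_le hn hq
            (measurableSet_ball.inter measurableSet_closedBall) (hb.mono_set inter_subset_left)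
            fun y hy => hb₀ y hy.1
      _ ≤ ENNReal.ofReal K ^ n * ENNReal.ofReal ((ballScale n * ρ) ^ n) ^ (1 - n / q : ℝ) := by
          gcongr
      _ = ENNReal.ofReal ((K * ballScale n ^ (1 - n / q) * ρ ^ (1 - n / q)) ^ n) := by
          rw [ENNReal.ofReal_rpow_of_nonneg (by positivity) hγ, ← ENNReal.ofReal_pow hK,
            ← ENNReal.ofReal_mul (by positivity), mul_assoc, ← Real.mul_rpow hω.le hρ, mul_pow K,
            ← Real.rpow_pow_comm (by positivity)]

namespace IsMorreyDrift

theorem setLIntegral_le (hb : IsMorreyDrift n K γ b) {E : Set (EuclideanSpace ℝ (Fin n))}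
    {x : EuclideanSpace ℝ (Fin n)} {ρ : ℝ} (hρ : 0 ≤ ρ) (hE : E ⊆ ball 0 1)
    (hEρ : E ⊆ closedBall x ρ) :
    ∫⁻ y in E, ENNReal.ofReal (b y ^ n) ≤ ENNReal.ofReal ((K * ρ ^ γ) ^ n) :=
  (lintegral_mono_set (subset_inter hE hEρ)).trans (hb.lintegral_le x ρ hρ)

theorem volume_lt_le (hb : IsMorreyDrift n K γ b) {T : ℝ} (hT : 0 < T) :
    volume {y ∈ ball (0 : EuclideanSpace ℝ (Fin n)) 1 | T < b y} ≤
      ENNReal.ofReal ((K / T) ^ n) := by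
  have hTn : 0 < T ^ n := pow_pos hT n
  calc volume {y ∈ ball (0 : EuclideanSpace ℝ (Fin n)) 1 | T < b y}
      ≤ volume ({y | ENNReal.ofReal (T ^ n) ≤ ENNReal.ofReal (b y ^ n)} ∩ ball 0 1) :=
        measure_mono fun y hy =>
          ⟨ENNReal.ofReal_le_ofReal (pow_le_pow_left₀ hT.le hy.2.le n), hy.1⟩
    _ ≤ volume.restrict (ball 0 1) {y | ENNReal.ofReal (T ^ n) ≤ ENNReal.ofReal (b y ^ n)} :=
        Measure.le_restrict_apply _ _
    _ ≤ (∫⁻ y in ball 0 1, ENNReal.ofReal (b y ^ n)) / ENNReal.ofReal (T ^ n) :=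
        meas_ge_le_lintegral_div (hb.aemeasurable.pow_const n).ennreal_ofReal
          (ENNReal.ofReal_pos.2 hTn).ne' ENNReal.ofReal_ne_top
    _ ≤ ENNReal.ofReal (K ^ n) / ENNReal.ofReal (T ^ n) := by
        gcongr
        simpa using hb.setLIntegral_le zero_le_one subset_rfl ball_subset_closedBall
    _ = ENNReal.ofReal ((K / T) ^ n) := by rw [← ENNReal.ofReal_div_of_pos hTn, div_pow]

end IsMorreyDrift

end Drift

section Doubling

/-- The growth of a lower bound from a ball to the concentric ball of twice the radius, at a cost
of a factor `c` and as long as the radius is at most `s` times the distance to the unit sphere. -/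
def HasDoubling {E : Type*} [SeminormedAddCommGroup E] (s c : ℝ) (u : E → ℝ) : Prop :=
  ∀ z : E, ∀ ρ > 0, ρ ≤ s * (1 - ‖z‖) → ∀ t ≥ 0, (∀ x ∈ ball z ρ, t ≤ u x) →
    ∀ x ∈ ball z (2 * ρ), c * t ≤ u x

variable {n : ℕ} {lam Lam K γ t R : ℝ} {k : ℕ} {y z : EuclideanSpace ℝ (Fin n)}

theorem exists_forall_mul_rpow_le {C θ : ℝ} (hγ : 0 < γ) (hC : 0 < C) (hθ : 0 < θ) :
    ∃ R₀ > 0, ∀ R, 0 ≤ R → R ≤ R₀ → C * R ^ γ ≤ θ := by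
  refine ⟨(θ / C) ^ γ⁻¹, by positivity, fun R hR hRR₀ => ?_⟩
  rw [← le_div_iff₀' hC, ← Real.rpow_inv_rpow (x := θ / C) (by positivity) hγ.ne']
  gcongr

theorem exists_nat_mul_add_one_ge {a b : ℝ} (hb : 0 < b) : ∃ k : ℕ, a ≤ (k + 1) * b := by
  obtain ⟨k, hk⟩ := exists_nat_ge (a / b)
  exact ⟨k, by rw [div_le_iff₀ hb] at hk; linarith⟩

theorem hasDerivAt_mul_one_sub_pow (a s : ℝ) (k : ℕ) :
    HasDerivAt (fun s => a * (1 - s) ^ (k + 1)) (-(a * (k + 1)) * (1 - s) ^ k) s := by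
  refine ((((hasDerivAt_id s).const_sub 1).fun_pow (k + 1)).const_mul a).congr_deriv ?_
  push_cast
  simp only [id]
  ring

/-- The radial barrier on the ball of radius `R` around `z`, of height `t`; for large `k` it is a
subsolution away from the centre. -/
noncomputable def radialBarrier (k : ℕ) (t R : ℝ) (z y : EuclideanSpace ℝ (Fin n)) : ℝ :=
  t * (1 - (R ^ 2)⁻¹ * ‖y - z‖ ^ 2) ^ (k + 2)

theorem contDiff_mul_norm_sub_sq {F : Type*} [NormedAddCommGroup F] [InnerProductSpace ℝ F] (c : ℝ)
    (z : F) : ContDiff ℝ 2 fun y => c * ‖y - z‖ ^ 2 := by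
  simpa using contDiff_paraboloid c 0 z 0

theorem contDiff_radialBarrier : ContDiff ℝ 2 (radialBarrier k t R z) :=
  contDiff_const.mul ((contDiff_const.sub (contDiff_mul_norm_sub_sq _ z)).pow _)

theorem trace_mul_hess_radialBarrier_nonneg {A : Matrix (Fin n) (Fin n) ℝ}
    (hA : IsElliptic lam Lam A) (hlam : 0 < lam) (hLam : lam ≤ Lam) (ht : 0 ≤ t) (hR : 0 < R)
    (hk : 50 * Lam * n ≤ (k + 1) * (4 * lam)) (hy : R / 5 ≤ ‖y - z‖) (hyR : ‖y - z‖ ≤ R) :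
    0 ≤ (A * hess n (radialBarrier k t R z) y).trace := by
  have hLam₀ : 0 < Lam := hlam.trans_le hLam
  set σ := (R ^ 2)⁻¹ * ‖y - z‖ ^ 2 with hσ
  have hσR : σ = (‖y - z‖ / R) ^ 2 := by rw [hσ, div_pow, inv_mul_eq_div]
  have hσ₁ : σ ≤ 1 := by rw [hσR]; exact pow_le_one₀ (by positivity) ((div_le_one hR).2 hyR)
  have hσ₂ : 1 / 25 ≤ σ := by
    have : (1 / 5 : ℝ) ≤ ‖y - z‖ / R := (le_div_iff₀ hR).2 (by linarith)
    rw [hσR]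
    nlinarith
  have : 0 ≤ 1 - σ := sub_nonneg.2 hσ₁
  set m := t * (k + 2) * (R ^ 2)⁻¹ * (1 - σ) ^ k
  have hm : 0 ≤ m := by positivity
  have hhess : hess n (radialBarrier k t R z) y =
      (t * (k + 2) * (k + 1) * (1 - σ) ^ k) • Matrix.vecMulVec
        (∇ (fun y => (R ^ 2)⁻¹ * ‖y - z‖ ^ 2) y).ofLp (∇ (fun y => (R ^ 2)⁻¹ * ‖y - z‖ ^ 2) y).ofLp
        - (2 * m * (1 - σ)) • (1 : Matrix (Fin n) (Fin n) ℝ) := by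
    unfold radialBarrier
    rw [hess_comp (contDiff_mul_norm_sub_sq _ z).contDiffAt
      (hasDerivAt_mul_one_sub_pow t · (k + 1)) (hasDerivAt_mul_one_sub_pow _ _ k) (by fun_prop),
      hess_mul_norm_sub_sq]
    simp only [m, hσ]
    push_cast
    module
  rw [hhess]
  refine le_trans ?_ (hA.le_trace_mul_smul_vecMulVec_sub (by positivity) (by positivity) _)
  rw [gradient_dotProduct_self, gradNorm_mul_norm_sub_sq,
    abs_of_pos (by positivity : 0 < (R ^ 2)⁻¹)]
  calc (0 : ℝ) ≤ m * ((k + 1) * (4 * lam) * σ - 2 * (1 - σ) * (Lam * n)) := by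
        have h₁ : 50 * Lam * n * (1 / 25) ≤ (k + 1) * (4 * lam) * σ := by gcongr
        have h₂ : 2 * (1 - σ) * (Lam * n) ≤ 2 * 1 * (Lam * n) := by gcongr; linarith
        exact mul_nonneg hm (by linarith)
    _ = _ := by simp only [m, hσ]; ring

theorem gradNorm_radialBarrier_le (ht : 0 ≤ t) (hR : 0 < R) (hyR : ‖y - z‖ ≤ R) :
    gradNorm n (radialBarrier k t R z) y ≤ 2 * (k + 2) * t / R := by
  set σ := (R ^ 2)⁻¹ * ‖y - z‖ ^ 2 with hσ
  have hσ₁ : σ ≤ 1 := by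
    rw [hσ, inv_mul_le_one₀ (by positivity)]
    exact pow_le_pow_left₀ (norm_nonneg _) hyR 2
  have hσ₀ : 0 ≤ 1 - σ := sub_nonneg.2 hσ₁
  have hpow : (1 - σ) ^ (k + 1) ≤ 1 := pow_le_one₀ hσ₀ (sub_le_self 1 (by positivity))
  unfold radialBarrier
  rw [gradNorm_comp ((contDiff_mul_norm_sub_sq _ z).differentiable (by norm_num)).differentiableAt
    (hasDerivAt_mul_one_sub_pow t _ (k + 1)), gradNorm_mul_norm_sub_sq, neg_mul, abs_neg,
    abs_of_nonneg (by positivity), abs_of_pos (by positivity)]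
  calc t * ((k + 1 : ℕ) + 1) * (1 - σ) ^ (k + 1) * (2 * (R ^ 2)⁻¹ * ‖y - z‖)
      ≤ t * ((k + 1 : ℕ) + 1) * 1 * (2 * (R ^ 2)⁻¹ * R) := by gcongr
    _ = 2 * (k + 2) * t / R := by push_cast; field_simp; ring

theorem radialBarrier_le (ht : 0 ≤ t) (hyR : ‖y - z‖ ≤ R) : radialBarrier k t R z y ≤ t := by
  refine mul_le_of_le_one_right ht (pow_le_one₀ (sub_nonneg.2 ?_) (sub_le_self 1 (by positivity)))
  exact inv_mul_le_one_of_le₀ (pow_le_pow_left₀ (norm_nonneg _) hyR 2) (by positivity)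

theorem radialBarrier_eq_zero (hR : 0 < R) (hyR : ‖y - z‖ = R) : radialBarrier k t R z y = 0 := by
  rw [radialBarrier, hyR, inv_mul_cancel₀ (by positivity), sub_self, zero_pow (by omega), mul_zero]

theorem le_radialBarrier (ht : 0 ≤ t) (hR : 0 < R) (hy : ‖y - z‖ ≤ R / 2) :
    (3 / 4) ^ (k + 2) * t ≤ radialBarrier k t R z y := by
  have hsq : (R ^ 2)⁻¹ * ‖y - z‖ ^ 2 ≤ 1 / 4 := by
    calc (R ^ 2)⁻¹ * ‖y - z‖ ^ 2 ≤ (R ^ 2)⁻¹ * (R / 2) ^ 2 := by gcongr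
      _ = 1 / 4 := by field_simp; norm_num
  rw [radialBarrier, mul_comm]
  gcongr
  linarith

variable {b u : EuclideanSpace ℝ (Fin n) → ℝ}

theorem radialBarrier_sub_le_of_supersolution (hn : n ≠ 0) (hlam : 0 < lam) (hLam : lam ≤ Lam)
    (hk : 50 * Lam * n ≤ (k + 1) * (4 * lam)) (hK : 0 < K)
    (hb : IsMorreyDrift n K γ b) (hu : IsNonnegSupersolution n lam Lam b u) (ht : 0 ≤ t)
    (hR : 0 < R) (hzR : ‖z‖ + R < 1) (hsmall : K / (lam * ballScale n) * R ^ γ ≤ 1 / 2)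
    (hut : ∀ x ∈ ball z (R / 4), t ≤ u x) (hy : R / 5 ≤ ‖y - z‖) (hyR : ‖y - z‖ ≤ R) :
    radialBarrier k t R z y - 8 * (k + 2) * t * (K / (lam * ballScale n) * R ^ γ) ≤ u y := by
  set S : Set (EuclideanSpace ℝ (Fin n)) := {y | R / 5 ≤ ‖y - z‖ ∧ ‖y - z‖ ≤ R}
  set Ω : Set (EuclideanSpace ℝ (Fin n)) := {y | R / 5 < ‖y - z‖ ∧ ‖y - z‖ < R}
  have hnorm : Continuous fun y : EuclideanSpace ℝ (Fin n) => ‖y - z‖ := by fun_prop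
  have hSR : S ⊆ closedBall z R := fun y hy => mem_closedBall_iff_norm.2 hy.2
  have hS₁ : S ⊆ ball 0 1 := fun y hy => by
    rw [mem_ball_zero_iff]
    linarith [hy.2, norm_le_norm_add_norm_sub' y z]
  have hS : IsCompact S := (isCompact_closedBall z R).of_isClosed_subset
    ((isClosed_le continuous_const hnorm).inter (isClosed_le hnorm continuous_const)) hSR
  have hΩ : IsOpen Ω := (isOpen_lt continuous_const hnorm).inter (isOpen_lt hnorm continuous_const)
  have hΩS : Ω ⊆ S := fun y hy => ⟨hy.1.le, hy.2.le⟩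
  have hbd : ∀ x ∈ S, x ∉ Ω → radialBarrier k t R z x ≤ u x := fun x hx hxΩ => by
    rcases hx.1.eq_or_lt with hinner | houter
    · exact (radialBarrier_le ht hx.2).trans
        (hut x (mem_ball_iff_norm.2 (by linarith)))
    · have hxR : ‖x - z‖ = R := le_antisymm hx.2 (not_lt.1 fun h => hxΩ ⟨houter, h⟩)
      exact (radialBarrier_eq_zero hR hxR).trans_le (hu.nonneg x (hS₁ hx))
  have hκ : K * R ^ γ / (lam * ballScale n) = K / (lam * ballScale n) * R ^ γ := by ring
  have habp := abp_comparison hn hlam hLam hS hΩ hΩS hSR hR (G := 2 * (k + 2) * t / R)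
    (by positivity) (η := K * R ^ γ) (by positivity) (fun x hx => hu.contDiffAt x (hS₁ hx))
    (fun x _ => contDiff_radialBarrier.contDiffAt) (fun x hx => hb.nonneg x (hS₁ (hΩS hx)))
    (fun x hx => hu.pucciMinus_le x (hS₁ (hΩS hx)))
    (fun x hx A hA => trace_mul_hess_radialBarrier_nonneg hA hlam hLam ht hR hk hx.1.le hx.2.le)
    (fun x hx => gradNorm_radialBarrier_le ht hR hx.2.le) hbd
    (hb.setLIntegral_le hR.le (hΩS.trans hS₁) (hΩS.trans hSR)) (by rwa [hκ])
    (show y ∈ S from ⟨hy, hyR⟩)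
  rw [hκ] at habp
  convert habp using 2
  field_simp
  ring

theorem exists_hasDoubling (hn : n ≠ 0) (hlam : 0 < lam) (hLam : lam ≤ Lam) (hγ : 0 < γ)
    (hK : 0 < K) :
    ∃ s c : ℝ, 0 < s ∧ s ≤ 1 / 8 ∧ 0 < c ∧ c ≤ 1 ∧ ∀ b u : EuclideanSpace ℝ (Fin n) → ℝ,
      IsMorreyDrift n K γ b → IsNonnegSupersolution n lam Lam b u → HasDoubling s c u := by
  obtain ⟨k, hk⟩ := exists_nat_mul_add_one_ge (a := 50 * Lam * n) (b := 4 * lam) (by positivity)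
  have hω := ballScale_pos n
  set δ : ℝ := (3 / 4) ^ (k + 2)
  have hδ : 0 < δ := by positivity
  have hδ₁ : δ ≤ 1 := pow_le_one₀ (by norm_num) (by norm_num)
  set θ : ℝ := δ / (16 * (k + 2))
  have hθ : θ ≤ 1 / 2 := by
    rw [div_le_iff₀ (by positivity)]
    linarith [(Nat.cast_nonneg k : (0 : ℝ) ≤ k)]
  obtain ⟨R₀, hR₀, hsmall⟩ := exists_forall_mul_rpow_le (C := K / (lam * ballScale n)) (θ := θ) hγ
    (by positivity) (by positivity)
  refine ⟨min (R₀ / 4) (1 / 8), δ / 2, by positivity, min_le_right _ _, by positivity,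
    by linarith, fun b u hb hu z ρ hρ hρs t ht hut x hx => ?_⟩
  have hd : 0 < 1 - ‖z‖ := pos_of_mul_pos_right (hρ.trans_le hρs) (by positivity)
  have hρR₀ : ρ ≤ R₀ / 4 * 1 := hρs.trans (by gcongr; exacts [min_le_left _ _, by simp])
  have hρd : ρ ≤ 1 / 8 * (1 - ‖z‖) := hρs.trans (by gcongr; exact min_le_right _ _)
  rw [mem_ball_iff_norm] at hx
  by_cases hx₅ : ‖x - z‖ < 4 * ρ / 5
  · exact (mul_le_of_le_one_left ht (by linarith)).trans
      (hut x (mem_ball_iff_norm.2 (by linarith)))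
  have hκ := hsmall (4 * ρ) (by positivity) (by linarith)
  have hcomp := radialBarrier_sub_le_of_supersolution hn hlam hLam hk hK hb hu ht
    (R := 4 * ρ) (by positivity) (by linarith) (hκ.trans hθ)
    (by rwa [mul_div_cancel_left₀ _ (by norm_num)]) (not_lt.1 hx₅) (by linarith)
  have hlow := le_radialBarrier (k := k) ht (by positivity : 0 < 4 * ρ)
    (by linarith : ‖x - z‖ ≤ 4 * ρ / 2)
  have herr : 8 * (k + 2) * t * (K / (lam * ballScale n) * (4 * ρ) ^ γ) ≤ δ / 2 * t := by
    calc 8 * (k + 2) * t * (K / (lam * ballScale n) * (4 * ρ) ^ γ) ≤ 8 * (k + 2) * t * θ := by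
          gcongr
      _ = δ / 2 * t := by simp only [θ]; field_simp; ring
  linarith

end Doubling

section BoundaryLayer

/-- The lower bound of `u` by `a (1 - ‖x‖²)` at distance at least about `r` from the unit sphere;
`1 - ‖x‖²` is a smooth substitute for the distance to the sphere. -/
def HasLayerBound {E : Type*} [SeminormedAddCommGroup E] (a r : ℝ) (u : E → ℝ) : Prop :=
  ∀ x, r ≤ 1 - ‖x‖ ^ 2 → a * (1 - ‖x‖ ^ 2) ≤ u x

variable {n : ℕ} {lam Lam K γ a B m δ E r ρ θ : ℝ} {p y : EuclideanSpace ℝ (Fin n)}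

theorem lt_one_of_le_one_sub_sq {s t : ℝ} (hs : 0 < s) (h : s ≤ 1 - t ^ 2) : t < 1 := by nlinarith

/-- The barrier used to push a lower bound by a multiple of `1 - ‖y‖²` from `{r ≤ 1 - ‖y‖²}` towards
the sphere, near the boundary point `p`. The term `B (1 - ‖y‖²)²` makes it a subsolution, and `m`
bounds the size of that term relative to `1 - ‖y‖²`. -/
noncomputable def layerBarrier (a m B δ E : ℝ) (p y : EuclideanSpace ℝ (Fin n)) : ℝ :=
  a * ((1 - m) * (1 - ‖y‖ ^ 2) + B * (1 - ‖y‖ ^ 2) ^ 2 - δ) - a * E * ‖y - p‖ ^ 2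

theorem contDiff_layerProfile : ContDiff ℝ 2 fun y : EuclideanSpace ℝ (Fin n) =>
    a * ((1 - m) * (1 - 1 * ‖y - 0‖ ^ 2) + B * (1 - 1 * ‖y - 0‖ ^ 2) ^ 2 - δ) := by
  have := contDiff_mul_norm_sub_sq 1 (0 : EuclideanSpace ℝ (Fin n))
  fun_prop

theorem layerBarrier_eq : layerBarrier a m B δ E p = fun y =>
    a * ((1 - m) * (1 - 1 * ‖y - 0‖ ^ 2) + B * (1 - 1 * ‖y - 0‖ ^ 2) ^ 2 - δ)
      - a * E * ‖y - p‖ ^ 2 := by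
  funext y
  rw [layerBarrier, one_mul, sub_zero]

theorem contDiff_layerBarrier : ContDiff ℝ 2 (layerBarrier a m B δ E p) := by
  rw [layerBarrier_eq]
  exact contDiff_layerProfile.sub (contDiff_mul_norm_sub_sq _ p)

theorem hasDerivAt_layerProfile (a m B δ s : ℝ) :
    HasDerivAt (fun s => a * ((1 - m) * (1 - s) + B * (1 - s) ^ 2 - δ))
      (-(a * (1 - m + 2 * B * (1 - s)))) s := by
  have h := (hasDerivAt_id s).const_sub 1
  refine ((((h.const_mul (1 - m)).add ((h.fun_pow 2).const_mul B)).sub_const δ).const_mul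
    a).congr_deriv ?_
  push_cast
  simp only [id]
  ring

theorem hess_layerBarrier : hess n (layerBarrier a m B δ E p) y =
    (2 * (a * B)) • Matrix.vecMulVec
      (∇ (fun y : EuclideanSpace ℝ (Fin n) => 1 * ‖y - 0‖ ^ 2) y).ofLp
      (∇ (fun y : EuclideanSpace ℝ (Fin n) => 1 * ‖y - 0‖ ^ 2) y).ofLp
      - (2 * (a * (1 - m + 2 * B * (1 - ‖y‖ ^ 2) + E))) • (1 : Matrix (Fin n) (Fin n) ℝ) := by
  have hderiv : ∀ s, HasDerivAt (fun s => -(a * (1 - m + 2 * B * (1 - s)))) (2 * (a * B)) s :=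
    fun s => (((((hasDerivAt_id s).const_sub 1).const_mul (2 * B)).const_add
      (1 - m)).const_mul a).neg.congr_deriv (by ring)
  rw [layerBarrier_eq, hess_sub contDiff_layerProfile.contDiffAt
    (contDiff_mul_norm_sub_sq _ p).contDiffAt,
    hess_comp (contDiff_mul_norm_sub_sq 1 0).contDiffAt (hasDerivAt_layerProfile a m B δ)
      (hderiv _) (by fun_prop), hess_mul_norm_sub_sq, hess_mul_norm_sub_sq, sub_zero, one_mul]
  module

theorem trace_mul_hess_layerBarrier_nonneg {A : Matrix (Fin n) (Fin n) ℝ}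
    (hA : IsElliptic lam Lam A) (hlam : 0 < lam) (hLam : lam ≤ Lam) (ha : 0 ≤ a) (hB : 0 ≤ B)
    (hBE : B * lam = Lam * n * (1 + E)) (hm : 0 ≤ m) (hm₁ : m ≤ 1) (hE : 0 ≤ E)
    (hr : 2 * Lam * n * r ≤ lam) (hy : 1 / 2 ≤ ‖y‖ ^ 2) (hy₁ : ‖y‖ ^ 2 ≤ 1)
    (hyr : 1 - ‖y‖ ^ 2 ≤ r) : 0 ≤ (A * hess n (layerBarrier a m B δ E p) y).trace := by
  have hLam₀ : 0 < Lam := hlam.trans_le hLam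
  have : 0 ≤ 1 - m := sub_nonneg.2 hm₁
  have : 0 ≤ 1 - ‖y‖ ^ 2 := sub_nonneg.2 hy₁
  rw [hess_layerBarrier]
  refine le_trans ?_ (hA.le_trace_mul_smul_vecMulVec_sub (by positivity) (by positivity) _)
  rw [gradient_dotProduct_self, gradNorm_mul_norm_sub_sq, sub_zero, abs_one, mul_one]
  calc (0 : ℝ) ≤ a * (8 * B * lam * ‖y‖ ^ 2
        - 2 * (1 - m + 2 * B * (1 - ‖y‖ ^ 2) + E) * (Lam * n)) := by
        have hgrad : 8 * B * lam * (1 / 2) ≤ 8 * B * lam * ‖y‖ ^ 2 := by gcongr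
        have hlap : 2 * (1 - m + 2 * B * (1 - ‖y‖ ^ 2) + E) * (Lam * n) ≤
            2 * (1 + 2 * B * r + E) * (Lam * n) := by gcongr; linarith
        have hBr : B * (2 * Lam * n * r) ≤ B * lam := by gcongr
        exact mul_nonneg ha (by linarith)
    _ = _ := by ring

theorem gradNorm_layerBarrier_le (ha : 0 ≤ a) (hB : 0 ≤ B) (hm : m ≤ 1 / 2)
    (hE : 0 ≤ E) (hy : ‖y‖ ^ 2 ≤ 1) (hBm : B * (1 - ‖y‖ ^ 2) ≤ m) (hEy : E * ‖y - p‖ ≤ 4) :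
    gradNorm n (layerBarrier a m B δ E p) y ≤ 12 * a := by
  have : 0 ≤ 1 - ‖y‖ ^ 2 := sub_nonneg.2 hy
  have : 0 ≤ 1 - m := by linarith
  have hy₁ : ‖y‖ ≤ 1 := (sq_le_one_iff₀ (norm_nonneg y)).1 hy
  have htri : gradNorm n (layerBarrier a m B δ E p) y ≤ gradNorm n (fun y =>
      a * ((1 - m) * (1 - 1 * ‖y - 0‖ ^ 2) + B * (1 - 1 * ‖y - 0‖ ^ 2) ^ 2 - δ)) y
      + gradNorm n (fun y => a * E * ‖y - p‖ ^ 2) y := by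
    unfold gradNorm
    rw [layerBarrier_eq, fderiv_fun_sub
      (contDiff_layerProfile.differentiable (by norm_num)).differentiableAt
      ((contDiff_mul_norm_sub_sq _ p).differentiable (by norm_num)).differentiableAt]
    exact norm_sub_le _ _
  refine htri.trans ?_
  rw [gradNorm_comp ((contDiff_mul_norm_sub_sq 1 0).differentiable (by norm_num)).differentiableAt
    (hasDerivAt_layerProfile a m B δ _), gradNorm_mul_norm_sub_sq, gradNorm_mul_norm_sub_sq,
    sub_zero, one_mul, abs_neg, abs_one, abs_of_nonneg (by positivity),
    abs_of_nonneg (by positivity)]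
  have hprofile : a * (1 - m + 2 * B * (1 - ‖y‖ ^ 2)) * (2 * 1 * ‖y‖) ≤ a * 2 * (2 * 1 * 1) := by
    gcongr
    linarith
  have hpenalty : a * (E * ‖y - p‖) ≤ a * 4 := by gcongr
  linarith

theorem layerBarrier_le (ha : 0 ≤ a) (hy : ‖y‖ ^ 2 ≤ 1) (hBm : B * (1 - ‖y‖ ^ 2) ≤ m) :
    layerBarrier a m B δ E p y ≤ a * (1 - ‖y‖ ^ 2 - E * ‖y - p‖ ^ 2 - δ) := by
  have hD : B * (1 - ‖y‖ ^ 2) * (1 - ‖y‖ ^ 2) ≤ m * (1 - ‖y‖ ^ 2) :=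
    mul_le_mul_of_nonneg_right hBm (sub_nonneg.2 hy)
  rw [layerBarrier, mul_assoc a E, ← mul_sub]
  exact mul_le_mul_of_nonneg_left (by linarith) ha

theorem le_layerBarrier (ha : 0 ≤ a) (hB : 0 ≤ B) :
    a * ((1 - m) * (1 - ‖y‖ ^ 2) - E * ‖y - p‖ ^ 2 - δ) ≤ layerBarrier a m B δ E p y := by
  have hD : 0 ≤ B * (1 - ‖y‖ ^ 2) ^ 2 := by positivity
  rw [layerBarrier, mul_assoc a E, ← mul_sub]
  exact mul_le_mul_of_nonneg_left (by linarith) ha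

theorem norm_sub_inv_norm_smul_le {F : Type*} [NormedAddCommGroup F] [NormedSpace ℝ F] {x : F}
    (hx : x ≠ 0) (hx₁ : ‖x‖ ≤ 1) : ‖x - ‖x‖⁻¹ • x‖ ≤ 1 - ‖x‖ ^ 2 := by
  have hpos : 0 < ‖x‖ := norm_pos_iff.2 hx
  have hdist : ‖x - ‖x‖⁻¹ • x‖ = 1 - ‖x‖ := by
    rw [show x - ‖x‖⁻¹ • x = (1 - ‖x‖⁻¹) • x by module, norm_smul, Real.norm_eq_abs,
      abs_of_nonpos (sub_nonpos.2 (one_le_inv₀ hpos |>.2 hx₁))]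
    field_simp
    ring
  nlinarith

variable {b u : EuclideanSpace ℝ (Fin n) → ℝ}

theorem layerBarrier_le_of_eq_or (ha : 0 ≤ a) (hE : 0 ≤ E) (hrE : r ≤ E * ρ ^ 2) (huy : 0 ≤ u y)
    (hint : r ≤ 1 - ‖y‖ ^ 2 → a * (1 - ‖y‖ ^ 2) ≤ u y) (hy : ‖y‖ ^ 2 ≤ 1)
    (hBm : B * (1 - ‖y‖ ^ 2) ≤ m) (hyr : 1 - ‖y‖ ^ 2 ≤ r) (hδ : 0 ≤ δ)
    (hbd : 1 - ‖y‖ ^ 2 = r ∨ 1 - ‖y‖ ^ 2 = δ ∨ ‖y - p‖ = ρ) : layerBarrier a m B δ E p y ≤ u y := by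
  refine (layerBarrier_le ha hy hBm).trans ?_
  have hpen : 0 ≤ E * ‖y - p‖ ^ 2 := by positivity
  rcases hbd with hr | hδ' | hρ
  · exact (mul_le_mul_of_nonneg_left (by linarith) ha).trans (hint hr.ge)
  · exact (mul_nonpos_of_nonneg_of_nonpos ha (by linarith)).trans huy
  · exact (mul_nonpos_of_nonneg_of_nonpos ha (by rw [hρ]; linarith)).trans huy

theorem layerBarrier_sub_le_of_supersolution (hn : n ≠ 0) (hlam : 0 < lam) (hLam : lam ≤ Lam)
    (hK : 0 < K) (hb : IsMorreyDrift n K γ b) (hu : IsNonnegSupersolution n lam Lam b u)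
    (ha : 0 ≤ a) (hB : 0 ≤ B) (hBE : B * lam = Lam * n * (1 + E)) (hBm : B * r ≤ m)
    (hm : m ≤ 1 / 2) (hE : 0 ≤ E) (hδ : 0 < δ) (hr : r ≤ 1 / 2) (hrLam : 2 * Lam * n * r ≤ lam)
    (hρ : 0 < ρ) (hEρ : E * ρ ≤ 4) (hrE : r ≤ E * ρ ^ 2)
    (hsmall : K / (lam * ballScale n) * ρ ^ γ ≤ 1 / 2)
    (hint : HasLayerBound a r u)
    (hy : δ ≤ 1 - ‖y‖ ^ 2) (hyr : 1 - ‖y‖ ^ 2 ≤ r) (hyρ : ‖y - p‖ ≤ ρ) :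
    layerBarrier a m B δ E p y - 48 * a * (K / (lam * ballScale n)) * (ρ * ρ ^ γ) ≤ u y := by
  set S : Set (EuclideanSpace ℝ (Fin n)) := {y | (δ ≤ 1 - ‖y‖ ^ 2 ∧ 1 - ‖y‖ ^ 2 ≤ r) ∧ ‖y - p‖ ≤ ρ}
  set Ω : Set (EuclideanSpace ℝ (Fin n)) := {y | (δ < 1 - ‖y‖ ^ 2 ∧ 1 - ‖y‖ ^ 2 < r) ∧ ‖y - p‖ < ρ}
  have hdist : Continuous fun y : EuclideanSpace ℝ (Fin n) => ‖y - p‖ := by fun_prop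
  have hD : Continuous fun y : EuclideanSpace ℝ (Fin n) => 1 - ‖y‖ ^ 2 := by fun_prop
  have hSρ : S ⊆ closedBall p ρ := fun y hy => mem_closedBall_iff_norm.2 hy.2
  have hS₁ : S ⊆ ball 0 1 := fun y hy =>
    mem_ball_zero_iff.2 (lt_one_of_le_one_sub_sq hδ hy.1.1)
  have hS : IsCompact S := (isCompact_closedBall p ρ).of_isClosed_subset
    (((isClosed_le continuous_const hD).inter (isClosed_le hD continuous_const)).inter
      (isClosed_le hdist continuous_const)) hSρ
  have hΩ : IsOpen Ω := ((isOpen_lt continuous_const hD).inter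
    (isOpen_lt hD continuous_const)).inter (isOpen_lt hdist continuous_const)
  have hΩS : Ω ⊆ S := fun y hy => ⟨⟨hy.1.1.le, hy.1.2.le⟩, hy.2.le⟩
  have hBD : ∀ x ∈ S, B * (1 - ‖x‖ ^ 2) ≤ m := fun x hx =>
    (mul_le_mul_of_nonneg_left hx.1.2 hB).trans hBm
  have hm₀ : 0 ≤ m := (mul_nonneg hB (hδ.le.trans (hy.trans hyr))).trans hBm
  have hsq : ∀ x ∈ S, ‖x‖ ^ 2 ≤ 1 := fun x hx => by linarith [hx.1.1]
  have hbd : ∀ x ∈ S, x ∉ Ω → layerBarrier a m B δ E p x ≤ u x := fun x hx hxΩ => by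
    refine layerBarrier_le_of_eq_or ha hE hrE (hu.nonneg x (hS₁ hx)) (hint x) (hsq x hx)
      (hBD x hx) hx.1.2 hδ.le ?_
    contrapose! hxΩ
    exact ⟨⟨hx.1.1.lt_of_ne' hxΩ.2.1, hx.1.2.lt_of_ne hxΩ.1⟩, hx.2.lt_of_ne hxΩ.2.2⟩
  have hκ : K * ρ ^ γ / (lam * ballScale n) = K / (lam * ballScale n) * ρ ^ γ := by ring
  have habp := abp_comparison hn hlam hLam hS hΩ hΩS hSρ hρ (G := 12 * a) (by positivity)
    (η := K * ρ ^ γ) (by positivity) (fun x hx => hu.contDiffAt x (hS₁ hx))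
    (fun x _ => contDiff_layerBarrier.contDiffAt) (fun x hx => hb.nonneg x (hS₁ (hΩS hx)))
    (fun x hx => hu.pucciMinus_le x (hS₁ (hΩS hx)))
    (fun x hx A hA => trace_mul_hess_layerBarrier_nonneg hA hlam hLam ha hB hBE hm₀
      (by linarith) hE hrLam (by linarith [hx.1.2]) (hsq x (hΩS hx)) hx.1.2.le)
    (fun x hx => gradNorm_layerBarrier_le ha hB hm hE (hsq x (hΩS hx)) (hBD x (hΩS hx))
      (le_trans (by gcongr; exact hx.2.le) hEρ)) hbd
    (hb.setLIntegral_le hρ.le (hΩS.trans hS₁) (hΩS.trans hSρ)) (by rwa [hκ])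
    (show y ∈ S from ⟨⟨hy, hyr⟩, hyρ⟩)
  rw [hκ] at habp
  linarith

end BoundaryLayer

section Hopf

variable {n : ℕ} {lam Lam K γ a r : ℝ} {b u : EuclideanSpace ℝ (Fin n) → ℝ}

theorem exists_layerRadius (hγ : 0 < γ) (hγ₁ : γ ≤ 1) (hr : 0 < r) (hr₁ : r ≤ 1) :
    ∃ ρ > 0, ρ ^ 2 * r ^ (γ / 2) = r ^ 2 ∧ r ≤ ρ ∧ ρ * ρ ^ γ ≤ r * r ^ (γ / 2) := by
  refine ⟨r ^ (1 - γ / 4), by positivity, ?_, ?_, ?_⟩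
  · rw [← Real.rpow_natCast, ← Real.rpow_natCast, ← Real.rpow_mul hr.le, ← Real.rpow_add hr]
    congr 1
    push_cast
    ring
  · simpa using Real.rpow_le_rpow_of_exponent_ge hr hr₁ (by linarith : 1 - γ / 4 ≤ 1)
  · calc r ^ (1 - γ / 4) * (r ^ (1 - γ / 4)) ^ γ = r ^ ((1 - γ / 4) * (1 + γ)) := by
          rw [← Real.rpow_mul hr.le, ← Real.rpow_add hr]; congr 1; ring
      _ ≤ r ^ (1 + γ / 2) := Real.rpow_le_rpow_of_exponent_ge hr hr₁ (by nlinarith)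
      _ = r * r ^ (γ / 2) := by rw [Real.rpow_add hr, Real.rpow_one]

/-- The relative loss, per unit of `r ^ (γ / 2)`, when a lower bound by a multiple of `1 - ‖x‖²`
is pushed from depth `r` to depth `r / 2`. -/
noncomputable def layerLoss (n : ℕ) (lam Lam K : ℝ) : ℝ :=
  5 * (Lam * n / lam) + 5 + 96 * (K / (lam * ballScale n))

theorem layerLoss_pos (hlam : 0 < lam) (hLam : lam ≤ Lam) (hK : 0 ≤ K) :
    0 < layerLoss n lam Lam K := by
  have hLam₀ : 0 < Lam := hlam.trans_le hLam
  have hω := ballScale_pos n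
  unfold layerLoss
  positivity

theorem mul_one_sub_layerLoss_mul_le {θ D m s δ e : ℝ} (ha : 0 ≤ a) (hD : 0 ≤ D)
    (hm : m ≤ 5 * (Lam * n / lam) * θ) (hs : s ≤ 4 * θ * D) (hδ : δ ≤ θ * D)
    (he : K / (lam * ballScale n) * e ≤ K / (lam * ballScale n) * (2 * D * θ)) :
    a * (1 - layerLoss n lam Lam K * θ) * D ≤
      a * ((1 - m) * D - s - δ) - 48 * a * (K / (lam * ballScale n)) * e := by
  set κ := K / (lam * ballScale n)
  have hmD := mul_le_mul_of_nonneg_right hm hD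
  calc a * (1 - layerLoss n lam Lam K * θ) * D
      = a * (D - 5 * (Lam * n / lam) * θ * D - 4 * θ * D - θ * D - 48 * (κ * (2 * D * θ))) := by
        rw [layerLoss]; ring
    _ ≤ a * ((1 - m) * D - s - δ - 48 * (κ * e)) := by gcongr; linarith
    _ = a * ((1 - m) * D - s - δ) - 48 * a * κ * e := by ring

theorem HasLayerBound.mul_le_of_half_le {ρ θ : ℝ} {x : EuclideanSpace ℝ (Fin n)} (hn : n ≠ 0)
    (hlam : 0 < lam) (hLam : lam ≤ Lam) (hK : 0 < K) (hb : IsMorreyDrift n K γ b)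
    (hu : IsNonnegSupersolution n lam Lam b u) (hint : HasLayerBound a r u) (ha : 0 ≤ a)
    (hr : 0 < r) (hr₂ : r ≤ 1 / 2) (hrLam : 2 * Lam * n * r ≤ lam) (hθ : 0 < θ) (hθ₁ : θ ≤ 1)
    (hrθ : r ≤ θ) (hloss : layerLoss n lam Lam K * θ ≤ 1 / 2) (hρ : 0 < ρ)
    (hρθ : ρ ^ 2 * θ = r ^ 2) (hrρ : r ≤ ρ) (hργ : ρ * ρ ^ γ ≤ r * θ)
    (hx : r / 2 ≤ 1 - ‖x‖ ^ 2) (hxr : 1 - ‖x‖ ^ 2 < r) :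
    a * (1 - layerLoss n lam Lam K * θ) * (1 - ‖x‖ ^ 2) ≤ u x := by
  have hω := ballScale_pos n
  have hLam₀ : 0 < Lam := hlam.trans_le hLam
  set D := 1 - ‖x‖ ^ 2 with hD
  have hD₀ : 0 < D := by linarith
  have hx₀ : x ≠ 0 := fun h => by norm_num [hD, h] at hxr; linarith
  have hxp : ‖x - ‖x‖⁻¹ • x‖ ≤ D :=
    norm_sub_inv_norm_smul_le hx₀ (sq_le_one_iff₀ (norm_nonneg x) |>.1 (by linarith))
  -- This slope makes the barrier nonpositive on the lateral boundary `‖y - p‖ = ρ`.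
  set E := 4 * r / ρ ^ 2 with hE
  have hEr : E * r = 4 * θ := by rw [hE]; field_simp; linarith
  set κ := K / (lam * ballScale n)
  set m := Lam * n / lam * (1 + E) * r with hm
  have hmθ : m ≤ 5 * (Lam * n / lam) * θ := by
    calc m = Lam * n / lam * (r + E * r) := by rw [hm]; ring
      _ ≤ Lam * n / lam * (θ + 4 * θ) := by rw [hEr]; gcongr
      _ = _ := by ring
  have hCθ : layerLoss n lam Lam K * θ = 5 * (Lam * n / lam) * θ + 5 * θ + 96 * κ * θ := by
    rw [layerLoss]; ring
  have hκθ : 0 ≤ κ * θ := by positivity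
  have hC₁θ : 0 ≤ 5 * (Lam * n / lam) * θ := by positivity
  have hργθ : ρ ^ γ ≤ θ := le_of_mul_le_mul_left (hργ.trans (by gcongr)) hρ
  have hδD : θ * r / 2 ≤ θ * D := by rw [mul_div_assoc]; gcongr
  have hcomp := layerBarrier_sub_le_of_supersolution hn hlam hLam hK hb hu (p := ‖x‖⁻¹ • x)
    (m := m) ha (by positivity) (by field_simp) hm.ge (by linarith) (by positivity : 0 ≤ E)
    (by positivity : 0 < θ * r / 2) hr₂ hrLam hρ
    (by rw [hE, div_mul_eq_mul_div, div_le_iff₀ (by positivity)]; nlinarith)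
    (by rw [hE, div_mul_cancel₀ _ (by positivity)]; linarith)
    (le_trans (mul_le_mul_of_nonneg_left hργθ (by positivity)) (by linarith)) hint
    (hδD.trans (mul_le_of_le_one_left hD₀.le hθ₁)) hxr.le (by linarith)
  refine le_trans ?_ hcomp
  have hpen : E * ‖x - ‖x‖⁻¹ • x‖ ^ 2 ≤ 4 * θ * D := by
    calc E * ‖x - ‖x‖⁻¹ • x‖ ^ 2 ≤ E * (r * D) := by rw [sq]; gcongr; linarith
      _ = 4 * θ * D := by rw [← mul_assoc, hEr]
  have hDθ : r * θ ≤ 2 * D * θ := by gcongr; linarith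
  exact (mul_one_sub_layerLoss_mul_le ha hD₀.le hmθ hpen hδD
    (mul_le_mul_of_nonneg_left (hργ.trans hDθ) (by positivity))).trans
    (sub_le_sub_right (le_layerBarrier ha (by positivity)) _)

theorem HasLayerBound.half (hn : n ≠ 0) (hlam : 0 < lam) (hLam : lam ≤ Lam) (hγ : 0 < γ)
    (hγ₁ : γ ≤ 1) (hK : 0 < K) (hb : IsMorreyDrift n K γ b)
    (hu : IsNonnegSupersolution n lam Lam b u) (hint : HasLayerBound a r u) (ha : 0 ≤ a)
    (hr : 0 < r) (hr₂ : r ≤ 1 / 2) (hrLam : 2 * Lam * n * r ≤ lam)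
    (hloss : layerLoss n lam Lam K * r ^ (γ / 2) ≤ 1 / 2) :
    HasLayerBound (a * (1 - layerLoss n lam Lam K * r ^ (γ / 2))) (r / 2) u := by
  intro x hx
  obtain ⟨ρ, hρ, hρθ, hrρ, hργ⟩ := exists_layerRadius hγ hγ₁ hr (by linarith)
  rcases le_or_gt r (1 - ‖x‖ ^ 2) with hxr | hxr
  · have hC := layerLoss_pos (n := n) hlam hLam hK.le
    refine le_trans (mul_le_mul_of_nonneg_right ?_ (by linarith)) (hint x hxr)
    exact mul_le_of_le_one_right ha (sub_le_self 1 (by positivity))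
  · have hrθ : r ≤ r ^ (γ / 2) := by
      simpa using Real.rpow_le_rpow_of_exponent_ge hr (by linarith) (by linarith : γ / 2 ≤ 1)
    exact hint.mul_le_of_half_le hn hlam hLam hK hb hu ha hr hr₂ hrLam (by positivity)
      (Real.rpow_le_one hr.le (by linarith) (by positivity)) hrθ hloss hρ hρθ hrρ hργ hx hxr

theorem mul_one_add_half_le {a x y s : ℝ} (ha : 0 ≤ a) (hx : 0 ≤ x) (hx₁ : x ≤ 1)
    (hs : s ≤ (x - y) / 2) (hyx : y ≤ x) :
    a * ((1 + y) / 2) ≤ a * ((1 + x) / 2) * (1 - s) := by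
  have h : (1 + x) / 2 * s ≤ 1 * ((x - y) / 2) :=
    (mul_le_mul_of_nonneg_left hs (by linarith)).trans
      (mul_le_mul_of_nonneg_right (by linarith) (by linarith))
  rw [mul_assoc]
  exact mul_le_mul_of_nonneg_left (by linarith) ha

theorem HasLayerBound.iterate_half (hn : n ≠ 0) (hlam : 0 < lam) (hLam : lam ≤ Lam) (hγ : 0 < γ)
    (hγ₁ : γ ≤ 1) (hK : 0 < K) (hb : IsMorreyDrift n K γ b)
    (hu : IsNonnegSupersolution n lam Lam b u) (hint : HasLayerBound a r u) (ha : 0 ≤ a)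
    (hr : 0 < r) (hr₂ : r ≤ 1 / 2) (hrLam : 2 * Lam * n * r ≤ lam)
    (hloss : layerLoss n lam Lam K * r ^ (γ / 2) ≤ (1 - (1 / 2) ^ (γ / 2)) / 2) (k : ℕ) :
    HasLayerBound (a * ((1 + ((1 / 2) ^ (γ / 2)) ^ k) / 2)) (r * (1 / 2) ^ k) u := by
  have hLam₀ : 0 < Lam := hlam.trans_le hLam
  set μ : ℝ := (1 / 2) ^ (γ / 2)
  have hμ : 0 < μ := by positivity
  have hμ₁ : μ < 1 := Real.rpow_lt_one (by norm_num) (by norm_num) (by positivity)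
  induction k with
  | zero => simpa using hint
  | succ k ih =>
    have hμk : μ ^ k ≤ 1 := pow_le_one₀ hμ.le hμ₁.le
    have hrk : r * (1 / 2) ^ k ≤ r :=
      mul_le_of_le_one_right hr.le (pow_le_one₀ (by norm_num) (by norm_num))
    have hlossk : layerLoss n lam Lam K * (r * (1 / 2) ^ k) ^ (γ / 2) ≤
        (μ ^ k - μ ^ (k + 1)) / 2 := by
      rw [Real.mul_rpow hr.le (by positivity), ← Real.rpow_pow_comm one_half_pos.le, ← mul_assoc]
      calc _ ≤ (1 - μ) / 2 * μ ^ k := by gcongr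
        _ = _ := by ring
    have hhalf := ih.half hn hlam hLam hγ hγ₁ hK hb hu (by positivity) (by positivity)
      (hrk.trans hr₂) (le_trans (by gcongr) hrLam)
      (hlossk.trans (by linarith [pow_pos hμ (k + 1)]))
    intro x hx
    have hx' : r * (1 / 2) ^ k / 2 ≤ 1 - ‖x‖ ^ 2 := by rw [pow_succ] at hx; linarith
    have hD : 0 ≤ 1 - ‖x‖ ^ 2 := le_trans (by positivity) hx
    refine le_trans (mul_le_mul_of_nonneg_right ?_ hD) (hhalf x hx')
    exact mul_one_add_half_le ha (by positivity) hμk hlossk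
      (pow_le_pow_of_le_one hμ.le hμ₁.le k.le_succ)

theorem exists_half_mul_le_of_hasLayerBound (hn : n ≠ 0) (hlam : 0 < lam) (hLam : lam ≤ Lam)
    (hγ : 0 < γ) (hγ₁ : γ ≤ 1) (hK : 0 < K) :
    ∃ r > 0, r ≤ 1 ∧ ∀ b u : EuclideanSpace ℝ (Fin n) → ℝ, IsMorreyDrift n K γ b →
      IsNonnegSupersolution n lam Lam b u → ∀ a ≥ 0, HasLayerBound a r u →
        ∀ x ∈ ball 0 1, a / 2 * (1 - ‖x‖ ^ 2) ≤ u x := by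
  have hLam₀ : 0 < Lam := hlam.trans_le hLam
  have : (0 : ℝ) < n := Nat.cast_pos.2 (Nat.pos_of_ne_zero hn)
  have hμ₁ : (1 / 2 : ℝ) ^ (γ / 2) < 1 :=
    Real.rpow_lt_one (by norm_num) (by norm_num) (by positivity)
  obtain ⟨R, hR, hsmall⟩ := exists_forall_mul_rpow_le (half_pos hγ)
    (layerLoss_pos (n := n) hlam hLam hK.le) (half_pos (sub_pos.2 hμ₁))
  set r := min (1 / 2) (min R (lam / (2 * Lam * n)))
  have hr : 0 < r := by positivity
  have hr₂ : r ≤ 1 / 2 := min_le_left _ _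
  have hrLam : 2 * Lam * n * r ≤ lam :=
    (le_div_iff₀' (by positivity)).1 ((min_le_right _ _).trans (min_le_right _ _))
  refine ⟨r, hr, by linarith, fun b u hb hu a ha hint x hx => ?_⟩
  have hD : 0 < 1 - ‖x‖ ^ 2 :=
    sub_pos.2 ((sq_lt_one_iff₀ (norm_nonneg x)).2 (mem_ball_zero_iff.1 hx))
  obtain ⟨k, hk⟩ := exists_pow_lt_of_lt_one (div_pos hD hr) (by norm_num : (1 / 2 : ℝ) < 1)
  rw [lt_div_iff₀' hr] at hk
  refine le_trans ?_ (hint.iterate_half hn hlam hLam hγ hγ₁ hK hb hu ha hr hr₂ hrLam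
    (hsmall r hr.le ((min_le_right _ _).trans (min_le_left _ _))) k x hk.le)
  have hμk : 0 ≤ a * ((1 / 2 : ℝ) ^ (γ / 2)) ^ k := by positivity
  gcongr
  linarith

end Hopf

section Propagation

variable {F : Type*} [NormedAddCommGroup F] {u : F → ℝ} {s c t r : ℝ} {z : F}

/-- The growth of a lower bound `t` on a ball of radius `r`, small compared with the distance from
its centre to the unit sphere, to a lower bound by `c r ^ N t` times the distance to the sphere on
the whole unit ball. -/
def HasPropagation (s c : ℝ) (N : ℕ) (u : F → ℝ) : Prop :=
  ∀ x : F, ∀ r > 0, r ≤ s * (1 - ‖x‖) → ∀ t ≥ 0, (∀ y ∈ ball x r, t ≤ u y) →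
    ∀ z ∈ ball 0 1, c * r ^ N * t * (1 - ‖z‖) ≤ u z

theorem HasDoubling.le_ball_of_le_two_pow_mul (hu : HasDoubling s c u) (hc : 0 < c) (hc₁ : c ≤ 1)
    (hr : 0 < r) (hrs : r ≤ s * (1 - ‖z‖)) (ht : 0 ≤ t) (hball : ∀ x ∈ ball z r, t ≤ u x) {j : ℕ}
    (hj : s * (1 - ‖z‖) ≤ 2 ^ j * r) : ∀ x ∈ ball z (s * (1 - ‖z‖)), c ^ j * t ≤ u x := by
  induction j generalizing r t with
  | zero =>
    rw [pow_zero, one_mul] at *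
    exact fun x hx => hball x (ball_subset_ball hj hx)
  | succ j ih =>
    intro x hx
    rw [pow_succ, mul_assoc]
    rcases le_or_gt (2 * r) (s * (1 - ‖z‖)) with h | h
    · exact ih (by linarith) h (by positivity) (hu z r hr hrs t ht hball)
        (by rw [pow_succ] at hj; linarith) x hx
    · exact (mul_le_of_le_one_left (by positivity) (pow_le_one₀ hc.le hc₁)).trans
        (hu z r hr hrs t ht hball x (ball_subset_ball h.le hx))

variable [NormedSpace ℝ F]

theorem exists_norm_eq_max_sub (z : F) {a : ℝ} (ha : 0 ≤ a) :
    ∃ z' : F, ‖z'‖ = max (‖z‖ - a) 0 ∧ ‖z' - z‖ ≤ a := by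
  rcases le_or_gt ‖z‖ a with hz | hz
  · exact ⟨0, by simpa using hz, by simpa using hz⟩
  have hz₀ : 0 < ‖z‖ := ha.trans_lt hz
  have hratio : 0 ≤ 1 - a / ‖z‖ := sub_nonneg.2 ((div_le_one hz₀).2 hz.le)
  refine ⟨(1 - a / ‖z‖) • z, ?_, ?_⟩
  · rw [norm_smul, Real.norm_of_nonneg hratio, max_eq_left (sub_nonneg.2 hz.le)]
    field_simp
  · rw [show (1 - a / ‖z‖) • z - z = -((a / ‖z‖) • z) by module, norm_neg, norm_smul,
      Real.norm_of_nonneg (by positivity), div_mul_cancel₀ _ hz₀.ne']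

theorem HasDoubling.le_ball_zero (hu : HasDoubling s c u) (hc : 0 < c) (hs : 0 < s) (hs₁ : s ≤ 1)
    (hz : ‖z‖ < 1) (ht : 0 ≤ t) (hball : ∀ x ∈ ball z (s * (1 - ‖z‖)), t ≤ u x) {j : ℕ}
    (hj : 1 ≤ (1 + s / 2) ^ j * (1 - ‖z‖)) : ∀ x ∈ ball 0 s, c ^ j * t ≤ u x := by
  induction j generalizing z t with
  | zero =>
    have hz₀ : z = 0 := norm_le_zero_iff.1 (by linarith)
    simpa [hz₀] using hball
  | succ j ih =>
    have : 0 < 1 - ‖z‖ := sub_pos.2 hz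
    obtain ⟨z', hz', hzz'⟩ := exists_norm_eq_max_sub z (a := s / 2 * (1 - ‖z‖)) (by positivity)
    have hd' : 1 - ‖z'‖ = min ((1 + s / 2) * (1 - ‖z‖)) 1 := by
      rw [hz', ← min_sub_sub_left, sub_zero]; ring_nf
    have hsub : ball z' (s * (1 - ‖z'‖)) ⊆ ball z (2 * (s * (1 - ‖z‖))) := by
      refine ball_subset_ball' ?_
      have hsd : s * (1 - ‖z'‖) ≤ s * ((1 + 1 / 2) * (1 - ‖z‖)) := by
        rw [hd']; gcongr; exact (min_le_left _ _).trans (by gcongr)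
      rw [dist_eq_norm]
      linarith
    have hj' : 1 ≤ (1 + s / 2) ^ j * (1 - ‖z'‖) := by
      rw [hd', mul_min_of_nonneg _ _ (by positivity), ← mul_assoc, ← pow_succ, mul_one]
      exact le_min hj (one_le_pow₀ (by linarith))
    have hz'₁ : ‖z'‖ < 1 := by rw [hz']; exact max_lt (by nlinarith) one_pos
    intro x hx
    rw [pow_succ, mul_assoc]
    exact ih hz'₁ (by positivity)
      (fun y hy => hu z _ (by positivity) le_rfl t ht hball y (hsub hy)) hj' x hx

theorem HasDoubling.le_ball_of_norm_le (hu : HasDoubling s c u) (hc : 0 < c) (hs : 0 < s)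
    (hr : 0 < r) (ht : 0 ≤ t) (hball : ∀ x ∈ ball 0 (s * r), t ≤ u x) {j : ℕ}
    (hz : ‖z‖ ≤ j * (s * r)) (hzr : ‖z‖ ≤ 1 - r) : ∀ x ∈ ball z (s * r), c ^ j * t ≤ u x := by
  induction j generalizing z with
  | zero =>
    have hz₀ : z = 0 := norm_le_zero_iff.1 (by simpa using hz)
    simpa [hz₀] using hball
  | succ j ih =>
    have hsr : 0 < s * r := by positivity
    obtain ⟨z', hz', hzz'⟩ := exists_norm_eq_max_sub z hsr.le
    have hz'z : ‖z'‖ ≤ ‖z‖ := by rw [hz']; exact max_le (by linarith) (norm_nonneg z)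
    have hz'j : ‖z'‖ ≤ j * (s * r) := by
      push_cast at hz
      rw [hz']
      exact max_le (by linarith) (by positivity)
    intro x hx
    rw [pow_succ', mul_assoc]
    refine hu z' (s * r) hsr (by gcongr; linarith) _ (by positivity)
      (ih hz'j (hz'z.trans hzr)) x (ball_subset_ball' ?_ hx)
    rw [dist_comm, dist_eq_norm]
    linarith

theorem exists_pow_mul_ge_one_and_pow_le_pow {A c : ℝ} (hA : 1 < A) (hA₂ : A ≤ 2) (hc : 0 < c) :
    ∃ N : ℕ, ∀ r : ℝ, 0 < r → r ≤ 1 → ∃ i : ℕ, 1 ≤ A ^ i * r ∧ (r / 2) ^ N ≤ c ^ i := by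
  obtain ⟨N, hN⟩ := exists_pow_lt_of_lt_one hc (inv_lt_one_of_one_lt₀ hA)
  refine ⟨N, fun r hr hr₁ => ?_⟩
  obtain ⟨m, hm, hm'⟩ := exists_nat_pow_near ((one_le_inv₀ hr).2 hr₁) hA
  refine ⟨m + 1, ?_, ?_⟩
  · exact ((inv_lt_iff_one_lt_mul₀ hr).1 hm').le
  have hAm : A ^ (m + 1) ≤ (r / 2)⁻¹ := by
    rw [pow_succ, inv_div, div_eq_inv_mul]
    gcongr
  calc (r / 2) ^ N ≤ ((A ^ (m + 1))⁻¹) ^ N := by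
        gcongr; exact le_inv_of_le_inv₀ (by positivity) hAm
    _ = (A⁻¹ ^ N) ^ (m + 1) := by rw [← inv_pow, ← pow_mul, ← pow_mul, mul_comm]
    _ ≤ c ^ (m + 1) := by gcongr

theorem exists_mul_pow_mul_le_of_hasDoubling {r₀ : ℝ} (hs : 0 < s) (hs₁ : s ≤ 1) (hc : 0 < c)
    (hc₁ : c ≤ 1) (hr₀ : 0 < r₀) (hr₀₁ : r₀ ≤ 1) :
    ∃ c' > 0, ∃ N : ℕ, ∀ u : F → ℝ, HasDoubling s c u → ∀ x : F, ∀ r > 0, r ≤ s * (1 - ‖x‖) →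
      ∀ t ≥ 0, (∀ y ∈ ball x r, t ≤ u y) → ∀ w, ‖w‖ ≤ 1 - r₀ → c' * r ^ N * t ≤ u w := by
  obtain ⟨N₁, hN₁⟩ := exists_pow_mul_ge_one_and_pow_le_pow one_lt_two le_rfl hc
  obtain ⟨N₂, hN₂⟩ := exists_pow_mul_ge_one_and_pow_le_pow (A := 1 + s / 2) (by linarith)
    (by linarith) hc
  obtain ⟨J, hJ⟩ := exists_nat_ge (1 / (s * r₀))
  rw [div_le_iff₀ (by positivity)] at hJ
  refine ⟨c ^ J * (1 / 2) ^ (N₁ + N₂), by positivity, N₁ + N₂, ?_⟩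
  intro u hu x r hr hrs t ht hball w hw
  have hd : 0 < 1 - ‖x‖ := pos_of_mul_pos_right (hr.trans_le hrs) hs.le
  have hd₁ : 1 - ‖x‖ ≤ 1 := sub_le_self 1 (norm_nonneg x)
  have hrd : r ≤ 1 - ‖x‖ := hrs.trans (mul_le_of_le_one_left hd.le hs₁)
  obtain ⟨i, hi, hri⟩ := hN₁ r hr (by linarith)
  obtain ⟨j, hj, hdj⟩ := hN₂ (1 - ‖x‖) hd hd₁
  have hcentre : ∀ y ∈ ball 0 s, c ^ j * (c ^ i * t) ≤ u y :=
    hu.le_ball_zero hc hs hs₁ (by linarith) (by positivity)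
      (hu.le_ball_of_le_two_pow_mul hc hc₁ hr hrs ht hball
        ((by nlinarith : _ ≤ (1 : ℝ)).trans hi)) hj
  have hcount : (1 / 2) ^ (N₁ + N₂) * r ^ (N₁ + N₂) * t ≤ c ^ j * (c ^ i * t) := by
    have hrj : (r / 2) ^ N₂ ≤ c ^ j := le_trans (by gcongr) hdj
    calc (1 / 2) ^ (N₁ + N₂) * r ^ (N₁ + N₂) * t = (r / 2) ^ N₂ * ((r / 2) ^ N₁ * t) := by
          rw [← mul_pow, pow_add]; ring
      _ ≤ c ^ j * (c ^ i * t) := by gcongr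
  calc c ^ J * (1 / 2) ^ (N₁ + N₂) * r ^ (N₁ + N₂) * t
      = c ^ J * ((1 / 2) ^ (N₁ + N₂) * r ^ (N₁ + N₂) * t) := by ring
    _ ≤ c ^ J * (c ^ j * (c ^ i * t)) := by gcongr
    _ ≤ u w := hu.le_ball_of_norm_le hc hs hr₀ (by positivity)
      (fun y hy => hcentre y (ball_subset_ball (mul_le_of_le_one_right hs.le hr₀₁) hy))
      (by linarith) hw w (mem_ball_self (by positivity))

theorem exists_hasPropagation_of_hasDoubling {r₀ : ℝ} (hs : 0 < s) (hs₁ : s ≤ 1) (hc : 0 < c)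
    (hc₁ : c ≤ 1) (hr₀ : 0 < r₀) (hr₀₁ : r₀ ≤ 1) :
    ∃ c' > 0, ∃ N : ℕ, ∀ u : F → ℝ, HasDoubling s c u →
      (∀ a ≥ 0, HasLayerBound a r₀ u → ∀ x ∈ ball 0 1, a / 2 * (1 - ‖x‖ ^ 2) ≤ u x) →
        HasPropagation s c' N u := by
  obtain ⟨c', hc', N, hN⟩ := exists_mul_pow_mul_le_of_hasDoubling (F := F) hs hs₁ hc hc₁
    (half_pos hr₀) (by linarith)
  refine ⟨c' / 2, by positivity, N, fun u hu hhopf x r hr hrs t ht hball z hz => ?_⟩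
  have hlayer : HasLayerBound (c' * r ^ N * t) r₀ u := fun w hw =>
    (mul_le_of_le_one_right (by positivity) (by linarith [sq_nonneg ‖w‖])).trans
      (hN u hu x r hr hrs t ht hball w (by nlinarith [norm_nonneg w]))
  refine le_trans ?_ (hhopf _ (by positivity) hlayer z hz)
  rw [div_mul_eq_mul_div, div_mul_eq_mul_div]
  gcongr
  exact pow_le_of_le_one (norm_nonneg z) (mem_ball_zero_iff.1 hz).le two_ne_zero

end Propagation

section

variable {n : ℕ} {lam Lam K γ : ℝ}

theorem exists_hasPropagation (hn : n ≠ 0) (hlam : 0 < lam) (hLam : lam ≤ Lam) (hγ : 0 < γ)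
    (hγ₁ : γ ≤ 1) (hK : 0 < K) :
    ∃ s c : ℝ, ∃ N : ℕ, 0 < s ∧ s ≤ 1 / 8 ∧ 0 < c ∧ ∀ b u : EuclideanSpace ℝ (Fin n) → ℝ,
      IsMorreyDrift n K γ b → IsNonnegSupersolution n lam Lam b u → HasPropagation s c N u := by
  obtain ⟨s, c, hs, hs₈, hc, hc₁, hdoubling⟩ := exists_hasDoubling hn hlam hLam hγ hK
  obtain ⟨r₀, hr₀, hr₀₁, hhopf⟩ := exists_half_mul_le_of_hasLayerBound hn hlam hLam hγ hγ₁ hK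
  obtain ⟨c', hc', N, hN⟩ := exists_hasPropagation_of_hasDoubling
    (F := EuclideanSpace ℝ (Fin n)) hs (by linarith) hc hc₁ hr₀ hr₀₁
  exact ⟨s, c', N, hs, hs₈, hc', fun b u hb hu => hN u (hdoubling b u hb hu) (hhopf b u hb hu)⟩

end

section AffineMinorant

variable {F : Type*} [NormedAddCommGroup F] [InnerProductSpace ℝ F] {S Ω : Set F} {φ : F → ℝ}
  {z P : F} {c : ℝ}

/-- The affine function with slope `P` and value `c` at `z` lies below `φ` on `S`. -/
def IsAffineMinorant (S : Set F) (φ : F → ℝ) (z : F) (c : ℝ) (P : F) : Prop :=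
  ∀ ζ ∈ S, c + inner ℝ P (ζ - z) ≤ φ ζ

/-- `c` is the value at `z` of the convex envelope of `φ` over `S`, and `P` is a slope of the
envelope at `z`. -/
structure IsEnvelopeSupport (S : Set F) (φ : F → ℝ) (z : F) (c : ℝ) (P : F) : Prop where
  isAffineMinorant : IsAffineMinorant S φ z c P
  le : ∀ c' P', IsAffineMinorant S φ z c' P' → c' ≤ c

theorem IsAffineMinorant.rebase (h : IsAffineMinorant S φ z c P) (y : F) :
    IsAffineMinorant S φ y (c + inner ℝ P (y - z)) P := fun ζ hζ => by
  rw [add_assoc, ← inner_add_right, sub_add_sub_cancel']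
  exact h ζ hζ

theorem IsAffineMinorant.norm_slope_mul_le (h : IsAffineMinorant S φ z c P) {r m M : ℝ}
    (hr : 0 ≤ r) (hzr : closedBall z r ⊆ S) (hc : m ≤ c) (hM : ∀ ζ ∈ S, φ ζ ≤ M) :
    r * ‖P‖ ≤ M - m := by
  have hS : z + (r / ‖P‖) • P ∈ S := hzr <| by
    rw [mem_closedBall, dist_self_add_left, norm_smul, norm_div, norm_norm,
      Real.norm_of_nonneg hr]
    exact mul_le_of_le_div₀ hr (norm_nonneg _) le_rfl
  have hval := (h _ hS).trans (hM _ hS)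
  have hinner : r / ‖P‖ * ‖P‖ ^ 2 = r * ‖P‖ := by
    rcases eq_or_ne ‖P‖ 0 with hP | hP
    · simp [hP]
    · field_simp
  rw [add_sub_cancel_left, inner_smul_right, real_inner_self_eq_norm_sq, hinner] at hval
  linarith

theorem isClosed_setOf_isAffineMinorant (S : Set F) (φ : F → ℝ) (z : F) :
    IsClosed {t : ℝ × F | IsAffineMinorant S φ z t.1 t.2} := by
  simp only [IsAffineMinorant, Set.ofPred_forall]
  exact isClosed_biInter fun ζ _ => isClosed_le (by fun_prop) continuous_const

theorem exists_isEnvelopeSupport [FiniteDimensional ℝ F] (hS : IsCompact S)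
    (hφ : ContinuousOn φ S) (hz : S ∈ 𝓝 z) : ∃ c P, IsEnvelopeSupport S φ z c P := by
  obtain ⟨r, hr, hrS⟩ := nhds_basis_closedBall.mem_iff.1 hz
  obtain ⟨m, hm⟩ := hS.bddBelow_image hφ
  obtain ⟨M, hM⟩ := hS.bddAbove_image hφ
  simp only [mem_lowerBounds, mem_upperBounds, forall_mem_image] at hm hM
  set T : Set (ℝ × F) := {t | m ≤ t.1} ∩ {t | IsAffineMinorant S φ z t.1 t.2}
  have hTclosed : IsClosed T :=
    (isClosed_le continuous_const continuous_fst).inter (isClosed_setOf_isAffineMinorant S φ z)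
  have hTbdd : T ⊆ Icc m (φ z) ×ˢ closedBall 0 ((M - m) / r) := fun t ht => by
    refine ⟨⟨ht.1, by simpa using ht.2 z (mem_of_mem_nhds hz)⟩, ?_⟩
    rw [mem_closedBall_zero_iff, le_div_iff₀ hr, mul_comm]
    exact ht.2.norm_slope_mul_le hr.le hrS ht.1 hM
  have hT : IsCompact T :=
    (isCompact_Icc.prod (isCompact_closedBall 0 _)).of_isClosed_subset hTclosed hTbdd
  have hmT : (m, 0) ∈ T := ⟨le_refl m, fun ζ hζ => by simpa using hm hζ⟩
  obtain ⟨t, ht, hmax⟩ := hT.exists_isMaxOn ⟨_, hmT⟩ continuous_fst.continuousOn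
  refine ⟨t.1, t.2, ht.2, fun c P h => ?_⟩
  rcases le_total m c with hc | hc
  · exact hmax (show (c, P) ∈ T from ⟨hc, h⟩)
  · exact hc.trans ht.1

theorem IsEnvelopeSupport.inner_slope_sub_nonneg {z' P' : F} {c' : ℝ}
    (h : IsEnvelopeSupport S φ z c P) (h' : IsEnvelopeSupport S φ z' c' P') :
    0 ≤ inner ℝ (P - P') (z - z') := by
  have hle := h.le _ _ (h'.isAffineMinorant.rebase z)
  have hle' := h'.le _ _ (h.isAffineMinorant.rebase z')
  rw [← neg_sub z z', inner_neg_right] at hle'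
  rw [inner_sub_left]
  linarith

theorem IsEnvelopeSupport.mul_norm_sub_le {z' P' : F} {c' m : ℝ}
    (h : IsEnvelopeSupport S φ z c P) (h' : IsEnvelopeSupport S φ z' c' P') :
    m * ‖z - z'‖ ≤ ‖P + m • z - (P' + m • z')‖ := by
  rcases (norm_nonneg (z - z')).eq_or_lt' with hz | hz
  · simp [hz]
  refine le_of_mul_le_mul_right ?_ hz
  calc m * ‖z - z'‖ * ‖z - z'‖ = m * ‖z - z'‖ ^ 2 := by ring
    _ ≤ inner ℝ (P - P') (z - z') + m * ‖z - z'‖ ^ 2 :=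
      le_add_of_nonneg_left (h.inner_slope_sub_nonneg h')
    _ = inner ℝ (P + m • z - (P' + m • z')) (z - z') := by
      rw [add_sub_add_comm, ← smul_sub, inner_add_left, real_inner_smul_left,
        real_inner_self_eq_norm_sq]
    _ ≤ ‖P + m • z - (P' + m • z')‖ * ‖z - z'‖ := real_inner_le_norm _ _

theorem differentiableAt_add_half_mul_norm_sq {x : F} (hφ : DifferentiableAt ℝ φ x) (m : ℝ) :
    DifferentiableAt ℝ (fun y => φ y + m / 2 * ‖y‖ ^ 2) x :=
  hφ.fun_add ((hasStrictFDerivAt_norm_sq x).hasFDerivAt.const_mul _).differentiableAt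

theorem fderiv_add_half_mul_norm_sq {x : F} (hφ : DifferentiableAt ℝ φ x) (m : ℝ) :
    fderiv ℝ (fun y => φ y + m / 2 * ‖y‖ ^ 2) x = fderiv ℝ φ x + m • innerSL ℝ x := by
  have hsq := (hasStrictFDerivAt_norm_sq x).hasFDerivAt.const_mul (m / 2)
  rw [(hφ.hasFDerivAt.fun_add hsq).fderiv, ← Nat.cast_smul_eq_nsmul ℝ, smul_smul, Nat.cast_two,
    div_mul_cancel₀ _ (two_ne_zero' ℝ)]

theorem contactSet_add_half_mul_norm_sq (hφ : ∀ x ∈ Ω, DifferentiableAt ℝ φ x) (a m : ℝ) :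
    contactSet Ω S (fun y => φ y + m / 2 * ‖y‖ ^ 2) a = contactSet Ω S φ (a + m) := by
  ext x
  refine and_congr_right fun hx => forall₂_congr fun z _ => ?_
  have hz : ‖z‖ ^ 2 = ‖x‖ ^ 2 + 2 * inner ℝ x (z - x) + ‖z - x‖ ^ 2 := by
    rw [← norm_add_sq_real, add_sub_cancel]
  beta_reduce
  rw [fderiv_add_half_mul_norm_sq (hφ x hx), hz, add_apply, smul_apply, innerSL_apply_apply,
    smul_eq_mul, ← sub_nonneg, ← sub_nonneg (b := φ x + _ - _)]
  ring_nf

variable [CompleteSpace F]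

theorem gradient_add_half_mul_norm_sq {x : F} (hφ : DifferentiableAt ℝ φ x) (m : ℝ) :
    ∇ (fun y => φ y + m / 2 * ‖y‖ ^ 2) x = ∇ φ x + m • x := by
  refine ext_inner_right ℝ fun h => ?_
  rw [← (differentiableAt_add_half_mul_norm_sq hφ m).hasGradientAt.fderiv_apply,
    fderiv_add_half_mul_norm_sq hφ, add_apply, hφ.hasGradientAt.fderiv_apply, inner_add_left,
    real_inner_smul_left, smul_apply, innerSL_apply_apply, smul_eq_mul]

theorem isAffineMinorant_of_mem_contactSet {x : F} (hφ : DifferentiableAt ℝ φ x)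
    (hx : x ∈ contactSet Ω S φ 0) : IsAffineMinorant S φ x (φ x) (∇ φ x) := fun ζ hζ => by
  have := hx.2 ζ hζ
  rwa [zero_div, zero_mul, sub_zero, hφ.hasGradientAt.fderiv_apply] at this

theorem IsEnvelopeSupport.eq_of_mem_contactSet {x : F} {m : ℝ} (h : IsEnvelopeSupport S φ z c P)
    (hΩS : Ω ⊆ S) (hφ : DifferentiableAt ℝ φ x) (hx : x ∈ contactSet Ω S φ 0) (hm : 0 < m)
    (hgrad : ∇ φ x = P + m • (z - x)) : x = z := by
  have hle := h.le _ _ ((isAffineMinorant_of_mem_contactSet hφ hx).rebase z)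
  have hge := h.isAffineMinorant x (hΩS (contactSet_subset hx))
  rw [hgrad, inner_add_left, real_inner_smul_left, real_inner_self_eq_norm_sq] at hle
  rw [← neg_sub z x, inner_neg_right] at hge
  have hsq : m * ‖z - x‖ ^ 2 ≤ 0 := by linarith
  have hnorm : ‖z - x‖ ^ 2 ≤ 0 := nonpos_of_mul_nonpos_right hsq hm
  exact (sub_eq_zero.1 (norm_eq_zero.1 (pow_eq_zero_iff two_ne_zero |>.1
    (hnorm.antisymm (sq_nonneg _))))).symm

/-- The minimum point of `φ + m/2 ‖·‖² - ⟪P + m z, ·⟫` is the proximal point of `z` for `φ` tilted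
by the slope of its envelope at `z`. -/
theorem IsEnvelopeSupport.exists_mem_contactSet_sdiff (h : IsEnvelopeSupport S φ z c P)
    (hS : IsCompact S) (hΩ : IsOpen Ω) (hΩS : Ω ⊆ S) (hφ : ContinuousOn φ S)
    (hφ' : ∀ x ∈ Ω, DifferentiableAt ℝ φ x) (hz : z ∉ contactSet Ω S φ 0) {m ρ : ℝ} (hm : 0 < m)
    (hρ : 0 ≤ ρ) (hzρ : closedBall z ρ ⊆ Ω) (hc : φ z ≤ c + m / 2 * ρ ^ 2) :
    ∃ x ∈ contactSet Ω S φ m \ contactSet Ω S φ 0,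
      ‖x - z‖ ≤ ρ ∧ ∇ (fun y => φ y + m / 2 * ‖y‖ ^ 2) x = P + m • z := by
  have hzS : z ∈ S := hΩS (hzρ (mem_closedBall_self hρ))
  obtain ⟨x, hxS, hmin⟩ := hS.exists_isMinOn ⟨z, hzS⟩
    ((hφ.add (Continuous.continuousOn (by fun_prop : Continuous fun y => m / 2 * ‖y‖ ^ 2))).sub
      (Continuous.continuousOn (by fun_prop : Continuous fun y => inner ℝ (P + m • z) y)))
  have hxρ : ‖x - z‖ ≤ ρ := by
    have hxz := isMinOn_iff.1 hmin z hzS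
    have hge := h.isAffineMinorant x hxS
    simp only [Pi.add_apply, Pi.sub_apply, inner_add_left, real_inner_smul_left,
      real_inner_self_eq_norm_sq, inner_sub_right] at hxz hge
    have hsq : m / 2 * ‖x - z‖ ^ 2 ≤ m / 2 * ρ ^ 2 := by
      rw [norm_sub_sq_real, real_inner_comm]
      linarith
    exact le_of_sq_le_sq (le_of_mul_le_mul_left hsq (half_pos hm)) hρ
  have hxΩ : x ∈ Ω := hzρ (mem_closedBall_iff_norm.2 hxρ)
  obtain ⟨hgrad, hcontact⟩ := gradient_eq_and_mem_contactSet_of_isMinOn hΩ hΩS hxΩ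
    (differentiableAt_add_half_mul_norm_sq (hφ' x hxΩ) m) hmin
  refine ⟨x, ⟨?_, fun hx₀ => hz ?_⟩, hxρ, hgrad⟩
  · rwa [contactSet_add_half_mul_norm_sq hφ', zero_add] at hcontact
  · rw [← h.eq_of_mem_contactSet hΩS (hφ' x hxΩ) hx₀ hm]
    · exact hx₀
    · rw [smul_sub, add_sub, eq_sub_iff_add_eq, ← gradient_add_half_mul_norm_sq (hφ' x hxΩ)]
      exact hgrad

end AffineMinorant

section ContactMeasure

theorem measure_le_of_mul_norm_sub_le {F : Type*} [NormedAddCommGroup F] [NormedSpace ℝ F]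
    [FiniteDimensional ℝ F] [MeasurableSpace F] [BorelSpace F] (μ : Measure F)
    [μ.IsAddHaarMeasure] {κ : ℝ} (hκ : 0 < κ) {Z : Set F} {f : F → F}
    (h : ∀ z ∈ Z, ∀ z' ∈ Z, κ * ‖z - z'‖ ≤ ‖f z - f z'‖) :
    μ Z ≤ ENNReal.ofReal (κ⁻¹ ^ Module.finrank ℝ F) * μ (f '' Z) := by
  have hanti : AntilipschitzWith κ⁻¹.toNNReal (Z.domRestrict f) :=
    AntilipschitzWith.of_le_mul_dist fun z z' => by
      rw [Real.coe_toNNReal _ (inv_nonneg.2 hκ.le), inv_mul_eq_div, le_div_iff₀ hκ, mul_comm,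
        Subtype.dist_eq, dist_eq_norm, dist_eq_norm]
      exact h z z.2 z' z'.2
  have hdim : (0 : ℝ) ≤ Module.finrank ℝ F := Nat.cast_nonneg _
  have hhaus := hanti.le_hausdorffMeasure_image hdim univ
  rw [← isometry_subtype_coe.hausdorffMeasure_image (Or.inl hdim), image_univ, image_univ,
    Subtype.range_coe, range_domRestrict, ENNReal.rpow_natCast, ENNReal.ofNNReal_toNNReal,
    ← ENNReal.ofReal_pow (inv_nonneg.2 hκ.le)] at hhaus
  rw [Measure.isAddLeftInvariant_eq_smul μ (μH[Module.finrank ℝ F]), Measure.smul_apply,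
    Measure.smul_apply, ENNReal.smul_def, ENNReal.smul_def, smul_eq_mul, smul_eq_mul, mul_left_comm]
  gcongr

theorem volume_le_volume_gradient_image_contactSet {F : Type*} [NormedAddCommGroup F]
    [InnerProductSpace ℝ F] [FiniteDimensional ℝ F] [MeasurableSpace F] [BorelSpace F]
    {S Ω Z : Set F} {φ : F → ℝ} (hS : IsCompact S) (hΩ : IsOpen Ω) (hΩS : Ω ⊆ S)
    (hφ : ContinuousOn φ S) (hφ' : ∀ x ∈ Ω, DifferentiableAt ℝ φ x) {m ρ : ℝ} (hm : 0 < m)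
    (hρ : 0 ≤ ρ) (hZ : ∀ z ∈ Z, z ∉ contactSet Ω S φ 0) (hZΩ : ∀ z ∈ Z, closedBall z ρ ⊆ Ω)
    (hZφ : ∀ z ∈ Z, ∃ c P, IsAffineMinorant S φ z c P ∧ φ z ≤ c + m / 2 * ρ ^ 2) :
    volume Z ≤ ENNReal.ofReal (m⁻¹ ^ Module.finrank ℝ F) *
      volume (∇ (fun y => φ y + m / 2 * ‖y‖ ^ 2) ''
        {x ∈ contactSet Ω S φ m \ contactSet Ω S φ 0 | ∃ z ∈ Z, ‖x - z‖ ≤ ρ}) := by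
  have hZnhds : ∀ z ∈ Z, S ∈ 𝓝 z := fun z hz =>
    mem_of_superset (hΩ.mem_nhds (hZΩ z hz (mem_closedBall_self hρ))) hΩS
  choose! c P hcP using fun z hz => exists_isEnvelopeSupport hS hφ (hZnhds z hz)
  refine (measure_le_of_mul_norm_sub_le volume hm (f := fun z => P z + m • z) fun z hz z' hz' =>
    (hcP z hz).mul_norm_sub_le (hcP z' hz')).trans ?_
  gcongr
  rintro _ ⟨z, hz, rfl⟩
  obtain ⟨c', P', hminorant, hc'⟩ := hZφ z hz
  obtain ⟨x, hx, hxz, hgrad⟩ := (hcP z hz).exists_mem_contactSet_sdiff hS hΩ hΩS hφ hφ' (hZ z hz)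
    hm hρ (hZΩ z hz) (hc'.trans (by gcongr; exact (hcP z hz).le _ _ hminorant))
  exact ⟨x, ⟨hx, z, hz, hxz⟩, hgrad⟩

theorem volume_le_of_notMem_contactSet {F : Type*} [NormedAddCommGroup F] [InnerProductSpace ℝ F]
    [FiniteDimensional ℝ F] [MeasurableSpace F] [BorelSpace F] {S Ω Z : Set F} {v : F → ℝ}
    (hS : IsCompact S) (hΩ : IsOpen Ω) (hΩS : Ω ⊆ S) (hv : ContinuousOn v S)
    (hv' : ∀ x ∈ Ω, DifferentiableAt ℝ v x) (hv₀ : ∀ x ∈ S, 0 ≤ v x) (hv₁ : ∀ x ∈ S, v x ≤ 1)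
    {a ρ : ℝ} (ha : 0 < a) (hρ : 0 ≤ ρ) (haρ : 1 ≤ a * ρ ^ 2)
    (hZ : ∀ z ∈ Z, z ∉ contactSet Ω S v a) (hZΩ : ∀ z ∈ Z, closedBall z ρ ⊆ Ω) :
    volume Z ≤ ENNReal.ofReal ((3 * a)⁻¹ ^ Module.finrank ℝ F) *
      volume (∇ (fun y => v y + 4 * a / 2 * ‖y‖ ^ 2) ''
        {x ∈ contactSet Ω S v (4 * a) \ contactSet Ω S v a | ∃ z ∈ Z, ‖x - z‖ ≤ ρ}) := by
  set φ : F → ℝ := fun y => v y + a / 2 * ‖y‖ ^ 2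
  have hφ : ContinuousOn φ S :=
    hv.add (Continuous.continuousOn (by fun_prop : Continuous fun y => a / 2 * ‖y‖ ^ 2))
  have hφcontact : ∀ m, contactSet Ω S φ m = contactSet Ω S v (m + a) :=
    fun m => contactSet_add_half_mul_norm_sq hv' m a
  have hsum : (fun y => φ y + 3 * a / 2 * ‖y‖ ^ 2) = fun y => v y + 4 * a / 2 * ‖y‖ ^ 2 := by
    ext y; simp only [φ]; ring
  have hvol := volume_le_volume_gradient_image_contactSet hS hΩ hΩS hφ
    (fun x hx => differentiableAt_add_half_mul_norm_sq (hv' x hx) a) (m := 3 * a) (by positivity)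
    hρ (fun z hz => by rw [hφcontact, zero_add]; exact hZ z hz) hZΩ fun z hz =>
      ⟨a / 2 * ‖z‖ ^ 2, a • z, fun ζ hζ => ?_, ?_⟩
  · rwa [hsum, hφcontact, hφcontact, zero_add, show 3 * a + a = 4 * a by ring] at hvol
  · have hsq : ‖ζ‖ ^ 2 = ‖z‖ ^ 2 + 2 * inner ℝ z (ζ - z) + ‖ζ - z‖ ^ 2 := by
      rw [← norm_add_sq_real, add_sub_cancel]
    simp only [φ]
    rw [hsq, real_inner_smul_left]
    linarith [hv₀ ζ hζ, mul_nonneg ha.le (sq_nonneg ‖ζ - z‖)]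
  · simp only [φ]
    linarith [hv₁ z (hΩS (hZΩ z hz (mem_closedBall_self hρ)))]

theorem mul_norm_gradient_le_of_mem_contactSet {F : Type*} [NormedAddCommGroup F]
    [InnerProductSpace ℝ F] [CompleteSpace F] {S Ω : Set F} {v : F → ℝ} {x : F} {a ρ M : ℝ}
    (hv : DifferentiableAt ℝ v x) (hx : x ∈ contactSet Ω S v a) (ha : 0 ≤ a) (hρ : 0 ≤ ρ)
    (hxρ : closedBall x ρ ⊆ S) (hvx : 0 ≤ v x) (hM : ∀ ζ ∈ S, v ζ ≤ M) :
    ρ * ‖∇ v x‖ ≤ M + a / 2 * ρ ^ 2 := by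
  have hminorant : IsAffineMinorant (closedBall x ρ) (fun ζ => v ζ + a / 2 * ‖ζ - x‖ ^ 2) x (v x)
      (∇ v x) := fun ζ hζ => by
    have := hx.2 ζ (hxρ hζ)
    rw [hv.hasGradientAt.fderiv_apply] at this
    linarith
  have hle := hminorant.norm_slope_mul_le hρ subset_rfl hvx (M := M + a / 2 * ρ ^ 2)
    fun ζ hζ => by
      have hζρ := mem_closedBall_iff_norm.1 hζ
      have := hM ζ (hxρ hζ)
      gcongr
  rwa [sub_zero] at hle

end ContactMeasure

section MeasureDecay

variable {n : ℕ} {lam Lam K γ : ℝ} {b v : EuclideanSpace ℝ (Fin n) → ℝ}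

theorem trace_hess_add_smul_one_le (hlam : 0 < lam) (hLam : lam ≤ Lam)
    {x : EuclideanSpace ℝ (Fin n)} {a f : ℝ} (ha : 0 ≤ a)
    (hpsd : (hess n v x + a • (1 : Matrix (Fin n) (Fin n) ℝ)).PosSemidef)
    (hf : pucciMinus n lam Lam (hess n v x) ≤ f) :
    (hess n v x + a • (1 : Matrix (Fin n) (Fin n) ℝ)).trace ≤ (Lam * n * a + f) / lam := by
  rw [← sub_neg_eq_add] at hpsd ⊢
  have htrace := mul_trace_sub_le_pucciMinus_sub hLam hpsd (c := -(Lam * n * a)) fun A hA => by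
    rw [Matrix.mul_neg, Matrix.trace_neg, Matrix.mul_smul, Matrix.mul_one, Matrix.trace_smul,
      smul_eq_mul, neg_le_neg_iff, mul_comm a]
    exact mul_le_mul_of_nonneg_right hA.trace_le ha
  rw [le_div_iff₀ hlam, mul_comm]
  linarith

theorem setLIntegral_add_mul_pow_le {α : Type*} [MeasurableSpace α] {μ : Measure α} {E : Set α}
    (hE : MeasurableSet E) {f : α → ℝ} (hf : ∀ x ∈ E, 0 ≤ f x) {p r : ℝ} (hp : 0 ≤ p)
    (hr : 0 ≤ r) (n : ℕ) :
    ∫⁻ x in E, ENNReal.ofReal ((p + r * f x) ^ n) ∂μ ≤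
      ENNReal.ofReal ((2 * p) ^ n) * μ E +
        ENNReal.ofReal ((2 * r) ^ n) * ∫⁻ x in E, ENNReal.ofReal (f x ^ n) ∂μ := by
  have hpow : ∀ x ∈ E, (p + r * f x) ^ n ≤ (2 * p) ^ n + (2 * r) ^ n * f x ^ n := fun x hx => by
    have hrf : 0 ≤ r * f x := mul_nonneg hr (hf x hx)
    calc (p + r * f x) ^ n ≤ 2 ^ (n - 1) * (p ^ n + (r * f x) ^ n) := add_pow_le hp hrf n
      _ ≤ 2 ^ n * (p ^ n + (r * f x) ^ n) := by gcongr <;> simp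
      _ = (2 * p) ^ n + (2 * r) ^ n * f x ^ n := by rw [mul_add, mul_pow, mul_pow, mul_pow]; ring
  calc ∫⁻ x in E, ENNReal.ofReal ((p + r * f x) ^ n) ∂μ
      ≤ ∫⁻ x in E, (ENNReal.ofReal ((2 * p) ^ n) +
          ENNReal.ofReal ((2 * r) ^ n) * ENNReal.ofReal (f x ^ n)) ∂μ :=
        setLIntegral_mono' hE fun x hx => by
          rw [← ENNReal.ofReal_mul (by positivity),
            ← ENNReal.ofReal_add (by positivity) (mul_nonneg (by positivity)
              (pow_nonneg (hf x hx) n))]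
          exact ENNReal.ofReal_le_ofReal (hpow x hx)
    _ = _ := by
        rw [lintegral_add_left measurable_const, setLIntegral_const,
          lintegral_const_mul' _ _ ENNReal.ofReal_ne_top]

theorem gradNorm_le_of_mem_contactSet (hs : IsNonnegSupersolution n lam Lam b v)
    (hv : ∀ x ∈ ball 0 1, v x ≤ 1) {R σ : ℝ} (hR : R < 1) (hσ : 0 < σ)
    {x : EuclideanSpace ℝ (Fin n)} (hxR : ‖x‖ + 1 / σ ≤ R)
    (hx : x ∈ contactSet (ball 0 R) (closedBall 0 R) v (4 * σ ^ 2)) :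
    gradNorm n v x ≤ 3 * σ := by
  have hSB : closedBall (0 : EuclideanSpace ℝ (Fin n)) R ⊆ ball 0 1 := closedBall_subset_ball hR
  have hxB : x ∈ ball (0 : EuclideanSpace ℝ (Fin n)) 1 :=
    hSB (ball_subset_closedBall (contactSet_subset hx))
  have hle := mul_norm_gradient_le_of_mem_contactSet
    ((hs.contDiffAt x hxB).differentiableAt (by norm_num)) hx (by positivity)
    (one_div_pos.2 hσ).le (closedBall_subset_closedBall' (by rwa [dist_zero_right, add_comm]))
    (hs.nonneg x hxB) fun ζ hζ => hv ζ (hSB hζ)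
  rw [norm_gradient, one_div_mul_eq_div, div_le_iff₀ hσ] at hle
  calc gradNorm n v x ≤ (1 + 4 * σ ^ 2 / 2 * (1 / σ) ^ 2) * σ := hle
    _ = 3 * σ := by field_simp; norm_num

/-- At a contact point for `4 σ²` the gradient is at most `3 σ`, so the equation bounds the trace
of `D²v + 4 σ² I`, and the area formula turns this into a volume bound. -/
theorem volume_gradient_image_contactSet_le_lintegral (hlam : 0 < lam) (hLam : lam ≤ Lam)
    (hs : IsNonnegSupersolution n lam Lam b v) (hb : ∀ x ∈ ball 0 1, 0 ≤ b x)
    (hv : ∀ x ∈ ball 0 1, v x ≤ 1) {R σ : ℝ} (hR : R < 1) (hσ : 0 < σ)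
    {E : Set (EuclideanSpace ℝ (Fin n))} (hE : MeasurableSet E)
    (hER : ∀ x ∈ E, ‖x‖ + 1 / σ ≤ R)
    (hEcontact : E ⊆ contactSet (ball 0 R) (closedBall 0 R) v (4 * σ ^ 2)) :
    volume (∇ (fun y => v y + 4 * σ ^ 2 / 2 * ‖y‖ ^ 2) '' E) ≤
      ∫⁻ x in E, ENNReal.ofReal (((Lam * n * (4 * σ ^ 2) + b x * (3 * σ)) / lam) ^ n) := by
  have hEB : E ⊆ ball 0 1 := hEcontact.trans (contactSet_subset.trans (ball_subset_ball hR.le))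
  have hpar : ContDiff ℝ 2 fun y : EuclideanSpace ℝ (Fin n) => 4 * σ ^ 2 / 2 * ‖y‖ ^ 2 := by
    simpa using contDiff_mul_norm_sub_sq (4 * σ ^ 2 / 2) (0 : EuclideanSpace ℝ (Fin n))
  have hhess : ∀ x ∈ E, hess n (fun y => v y + 4 * σ ^ 2 / 2 * ‖y‖ ^ 2) x =
      hess n v x + (4 * σ ^ 2) • (1 : Matrix (Fin n) (Fin n) ℝ) := fun x hx => by
    have := hess_mul_norm_sub_sq (4 * σ ^ 2 / 2) (0 : EuclideanSpace ℝ (Fin n)) x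
    simp only [sub_zero] at this
    rw [hess_add (hs.contDiffAt x (hEB hx)) hpar.contDiffAt, this,
      mul_div_cancel₀ _ (two_ne_zero' ℝ)]
  have hpsd : ∀ x ∈ E,
      (hess n v x + (4 * σ ^ 2) • (1 : Matrix (Fin n) (Fin n) ℝ)).PosSemidef := fun x hx =>
    posSemidef_hess_add_of_mem_contactSet (mem_of_superset
      (isOpen_ball.mem_nhds (contactSet_subset (hEcontact hx))) ball_subset_closedBall)
      (hs.contDiffAt x (hEB hx)) (hEcontact hx)
  have hpucci : ∀ x ∈ E, pucciMinus n lam Lam (hess n v x) ≤ b x * (3 * σ) := fun x hx =>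
    (hs.pucciMinus_le x (hEB hx)).trans (mul_le_mul_of_nonneg_left
      (gradNorm_le_of_mem_contactSet hs hv hR hσ (hER x hx) (hEcontact hx)) (hb x (hEB hx)))
  exact volume_gradient_image_le_lintegral hE
    (fun x hx => (hs.contDiffAt x (hEB hx)).add hpar.contDiffAt)
    (fun x hx => hhess x hx ▸ hpsd x hx)
    fun x hx => hhess x hx ▸ trace_hess_add_smul_one_le hlam hLam (by positivity) (hpsd x hx)
      (hpucci x hx)

theorem volume_gradient_image_contactSet_le (hlam : 0 < lam) (hLam : lam ≤ Lam)
    (hb : IsMorreyDrift n K γ b) (hs : IsNonnegSupersolution n lam Lam b v)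
    (hv : ∀ x ∈ ball 0 1, v x ≤ 1) {R σ : ℝ} (hR : R < 1) (hσ : 0 < σ)
    {E : Set (EuclideanSpace ℝ (Fin n))} (hE : MeasurableSet E)
    (hER : ∀ x ∈ E, ‖x‖ + 1 / σ ≤ R)
    (hEcontact : E ⊆ contactSet (ball 0 R) (closedBall 0 R) v (4 * σ ^ 2)) :
    ENNReal.ofReal ((3 * σ ^ 2)⁻¹ ^ n) *
        volume (∇ (fun y => v y + 4 * σ ^ 2 / 2 * ‖y‖ ^ 2) '' E) ≤
      ENNReal.ofReal ((2 * (4 * Lam * n / (3 * lam))) ^ n) * volume E +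
        ENNReal.ofReal ((2 * (1 / (lam * σ))) ^ n) * ENNReal.ofReal (K ^ n) := by
  have hL : 0 < Lam := hlam.trans_le hLam
  have hEB : E ⊆ ball 0 1 := hEcontact.trans (contactSet_subset.trans (ball_subset_ball hR.le))
  calc ENNReal.ofReal ((3 * σ ^ 2)⁻¹ ^ n) *
        volume (∇ (fun y => v y + 4 * σ ^ 2 / 2 * ‖y‖ ^ 2) '' E)
      ≤ ENNReal.ofReal ((3 * σ ^ 2)⁻¹ ^ n) *
        ∫⁻ x in E, ENNReal.ofReal (((Lam * n * (4 * σ ^ 2) + b x * (3 * σ)) / lam) ^ n) := by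
        gcongr
        exact volume_gradient_image_contactSet_le_lintegral hlam hLam hs hb.nonneg hv hR hσ hE hER
          hEcontact
    _ = ∫⁻ x in E, ENNReal.ofReal ((4 * Lam * n / (3 * lam) + 1 / (lam * σ) * b x) ^ n) := by
        rw [← lintegral_const_mul' _ _ ENNReal.ofReal_ne_top]
        refine lintegral_congr fun x => ?_
        rw [← ENNReal.ofReal_mul (by positivity), ← mul_pow]
        congr 2
        field_simp
    _ ≤ ENNReal.ofReal ((2 * (4 * Lam * n / (3 * lam))) ^ n) * volume E +
        ENNReal.ofReal ((2 * (1 / (lam * σ))) ^ n) * ∫⁻ x in E, ENNReal.ofReal (b x ^ n) :=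
        setLIntegral_add_mul_pow_le hE (fun x hx => hb.nonneg x (hEB hx)) (by positivity)
          (by positivity) n
    _ ≤ _ := by
        gcongr
        simpa using hb.setLIntegral_le zero_le_one hEB (hEB.trans ball_subset_closedBall)

end MeasureDecay

section ContactDecay

variable {n : ℕ} {lam Lam K γ : ℝ} {b v : EuclideanSpace ℝ (Fin n) → ℝ}

theorem IsNonnegSupersolution.measurableSet_contactSet (hs : IsNonnegSupersolution n lam Lam b v)
    {S : Set (EuclideanSpace ℝ (Fin n))} {R : ℝ} (hR : R ≤ 1) (a : ℝ) :
    MeasurableSet (contactSet (ball 0 R) S v a) :=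
  have hv : ∀ x ∈ ball 0 R, ContDiffAt ℝ 2 v x := fun x hx =>
    hs.contDiffAt x (ball_subset_ball hR hx)
  _root_.measurableSet_contactSet isOpen_ball (continuousOn_of_contDiffAt hv)
    (continuousOn_fderiv_of_contDiffAt hv)

theorem volume_ball_diff_contactSet_le (hlam : 0 < lam) (hLam : lam ≤ Lam)
    (hb : IsMorreyDrift n K γ b) (hs : IsNonnegSupersolution n lam Lam b v)
    (hv : ∀ x ∈ ball 0 1, v x ≤ 1) {R ρ σ : ℝ} (hR : R < 1) (hσ : 0 < σ) (hρ : ρ + 2 / σ ≤ R) :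
    volume (ball 0 ρ \ contactSet (ball 0 R) (closedBall 0 R) v (σ ^ 2)) ≤
      ENNReal.ofReal ((2 * (4 * Lam * n / (3 * lam))) ^ n) * volume (ball 0 (ρ + 1 / σ) ∩
        (contactSet (ball 0 R) (closedBall 0 R) v (4 * σ ^ 2) \
          contactSet (ball 0 R) (closedBall 0 R) v (σ ^ 2))) +
      ENNReal.ofReal ((2 * (1 / (lam * σ))) ^ n) * ENNReal.ofReal (K ^ n) := by
  have hσ' : 0 < 1 / σ := one_div_pos.2 hσ
  have hσσ : 2 / σ = 1 / σ + 1 / σ := by ring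
  have hSB : closedBall (0 : EuclideanSpace ℝ (Fin n)) R ⊆ ball 0 1 := closedBall_subset_ball hR
  set Ct := contactSet (ball 0 R) (closedBall 0 R) v
  have hnonContact := volume_le_of_notMem_contactSet (Z := ball 0 ρ \ Ct (σ ^ 2)) (ρ := 1 / σ)
    (isCompact_closedBall _ _) isOpen_ball ball_subset_closedBall
    (continuousOn_of_contDiffAt fun x hx => hs.contDiffAt x (hSB hx))
    (fun x hx => (hs.contDiffAt x (hSB (ball_subset_closedBall hx))).differentiableAt
      (by norm_num))
    (fun x hx => hs.nonneg x (hSB hx)) (fun x hx => hv x (hSB hx)) (sq_pos_of_pos hσ) hσ'.le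
    (by field_simp; rfl) (fun z hz => hz.2)
    (fun z hz => closedBall_subset_ball' (by linarith [mem_ball.1 hz.1]))
  rw [finrank_euclideanSpace_fin] at hnonContact
  refine hnonContact.trans ((mul_le_mul_right (measure_mono (image_mono ?_)) _).trans
    (volume_gradient_image_contactSet_le (R := R) hlam hLam hb hs hv hR hσ
      (measurableSet_ball.inter ((hs.measurableSet_contactSet hR.le _).diff
        (hs.measurableSet_contactSet hR.le _)))
      (fun x hx => by linarith [mem_ball_zero_iff.1 hx.1]) fun x hx => hx.2.1))
  rintro x ⟨hx, z, hz, hxz⟩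
  refine ⟨mem_ball_zero_iff.2 ?_, hx⟩
  linarith [mem_ball_zero_iff.1 hz.1, norm_le_norm_add_norm_sub' x z]

/-- The points between two consecutive contact sets carry a fixed fraction of the noncontact
points, which is what makes the noncontact measure decay geometrically in `σ`. -/
theorem mul_measureReal_ball_diff_contactSet_le (hn : n ≠ 0) (hlam : 0 < lam) (hLam : lam ≤ Lam)
    (hK : 0 ≤ K) (hb : IsMorreyDrift n K γ b) (hs : IsNonnegSupersolution n lam Lam b v)
    (hv : ∀ x ∈ ball 0 1, v x ≤ 1) {R ρ σ : ℝ} (hR : R < 1) (hσ : 1 ≤ σ) (hρ : ρ + 2 / σ ≤ R) :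
    (1 + (2 * (4 * Lam * n / (3 * lam))) ^ n) *
        volume.real (ball 0 ρ \ contactSet (ball 0 R) (closedBall 0 R) v (4 * σ ^ 2)) ≤
      (2 * (4 * Lam * n / (3 * lam))) ^ n *
        volume.real (ball 0 (ρ + 1 / σ) \ contactSet (ball 0 R) (closedBall 0 R) v (σ ^ 2)) +
      (2 * K / lam) ^ n / σ := by
  have hσ₀ : 0 < σ := one_pos.trans_le hσ
  have hL : 0 < Lam := hlam.trans_le hLam
  have hvol := volume_ball_diff_contactSet_le hlam hLam hb hs hv hR hσ₀ hρ
  set C := (2 * (4 * Lam * n / (3 * lam))) ^ n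
  set Ct := contactSet (ball 0 R) (closedBall 0 R) v
  set E := ball (0 : EuclideanSpace ℝ (Fin n)) (ρ + 1 / σ) ∩ (Ct (4 * σ ^ 2) \ Ct (σ ^ 2))
  have hC : 0 ≤ C := by positivity
  have hCt : Ct (σ ^ 2) ⊆ Ct (4 * σ ^ 2) := contactSet_mono (by linarith [sq_nonneg σ])
  have hfin (r : ℝ) (T : Set (EuclideanSpace ℝ (Fin n))) : volume (ball 0 r \ T) ≠ ∞ :=
    measure_ne_top_of_subset sdiff_subset measure_ball_lt_top.ne
  have hEfin : volume E ≠ ∞ := measure_ne_top_of_subset inter_subset_left measure_ball_lt_top.ne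
  have hreal : volume.real (ball 0 ρ \ Ct (σ ^ 2)) ≤
      C * volume.real E + (2 * (1 / (lam * σ))) ^ n * K ^ n := by
    rw [← ofReal_measureReal (hfin _ _), ← ofReal_measureReal hEfin, ← ENNReal.ofReal_mul hC,
      ← ENNReal.ofReal_mul (by positivity), ← ENNReal.ofReal_add (by positivity) (by positivity)]
      at hvol
    exact (ENNReal.ofReal_le_ofReal_iff (by positivity)).1 hvol
  have hdrift : (2 * (1 / (lam * σ))) ^ n * K ^ n ≤ (2 * K / lam) ^ n / σ := by
    calc (2 * (1 / (lam * σ))) ^ n * K ^ n = (2 * K / lam) ^ n / σ ^ n := by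
          rw [← mul_pow, ← div_pow]; congr 1; field_simp
      _ ≤ (2 * K / lam) ^ n / σ := by gcongr; exact le_self_pow₀ hσ hn
  have hsplit : volume.real E + volume.real (ball 0 ρ \ Ct (4 * σ ^ 2)) ≤
      volume.real (ball 0 (ρ + 1 / σ) \ Ct (σ ^ 2)) := by
    rw [← measureReal_union (disjoint_left.2 fun x hx hx' => hx'.2 hx.2.1)
      (measurableSet_ball.diff (hs.measurableSet_contactSet hR.le _)) hEfin (hfin _ _)]
    refine measureReal_mono (union_subset (fun x hx => ⟨hx.1, hx.2.2⟩) ?_) (hfin _ _)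
    exact sdiff_subset_sdiff (ball_subset_ball (by linarith [one_div_pos.2 hσ₀])) hCt
  have hmono : volume.real (ball 0 ρ \ Ct (4 * σ ^ 2)) ≤ volume.real (ball 0 ρ \ Ct (σ ^ 2)) :=
    measureReal_mono (sdiff_subset_sdiff_right hCt) (hfin _ _)
  linarith [mul_le_mul_of_nonneg_left hsplit hC]

theorem measureReal_ball_diff_ball_le (hn : n ≠ 0) {δ : ℝ} (hδ : 0 ≤ δ) :
    volume.real (ball (0 : EuclideanSpace ℝ (Fin n)) 1 \ ball 0 (1 - δ)) ≤
      volume.real (ball (0 : EuclideanSpace ℝ (Fin n)) 1) * (n * δ) := by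
  obtain hδ₁ | hδ₁ := le_total 1 δ
  · exact (measureReal_mono sdiff_subset measure_ball_lt_top.ne).trans <|
      le_mul_of_one_le_right measureReal_nonneg <|
        one_le_mul_of_one_le_of_one_le (Nat.one_le_cast.2 (Nat.one_le_iff_ne_zero.2 hn)) hδ₁
  · have hball : ∀ r ≥ 0, volume.real (ball (0 : EuclideanSpace ℝ (Fin n)) r) =
        ballScale n ^ n * r ^ n := fun r hr => by
      rw [measureReal_def, volume_ball_eq_ballScale_mul_pow hn _ hr, ENNReal.toReal_ofReal
        (pow_nonneg (mul_nonneg (ballScale_pos n).le hr) n), mul_pow]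
    rw [measureReal_sdiff (ball_subset_ball (by linarith)) measurableSet_ball
      measure_ball_lt_top.ne, hball 1 zero_le_one, hball (1 - δ) (sub_nonneg.2 hδ₁), one_pow,
      mul_one, ← mul_one_sub]
    refine mul_le_mul_of_nonneg_left ?_ (pow_nonneg (ballScale_pos n).le n)
    linarith [one_add_mul_sub_le_pow (by linarith : -1 ≤ 1 - δ) n]

theorem le_pow_mul_add_of_mul_succ_le {C c : ℝ} (hC : 0 ≤ C) {m : ℕ → ℝ}
    (hm : ∀ i, (1 + C) * m (i + 1) ≤ C * m i + c) (hc : 0 ≤ c) (i : ℕ) :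
    m i ≤ (C / (1 + C)) ^ i * m 0 + c := by
  induction i with
  | zero => simpa using hc
  | succ i ih =>
    refine le_of_mul_le_mul_left ((hm i).trans ?_) (by positivity : 0 < 1 + C)
    calc C * m i + c ≤ C * ((C / (1 + C)) ^ i * m 0 + c) + c := by gcongr
      _ = (1 + C) * ((C / (1 + C)) ^ (i + 1) * m 0 + c) := by rw [pow_succ]; field_simp; ring

/-- Starting from `σ = 2 ^ j` and doubling `j` times, the domain shrinks by less than
`5 * 2 ^ (-j)` in total. -/
theorem measureReal_ball_diff_contactSet_two_pow_le (hn : n ≠ 0) (hlam : 0 < lam)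
    (hLam : lam ≤ Lam) (hK : 0 ≤ K) (hb : IsMorreyDrift n K γ b)
    (hs : IsNonnegSupersolution n lam Lam b v) (hv : ∀ x ∈ ball 0 1, v x ≤ 1) (j : ℕ) :
    volume.real (ball 0 (1 - 5 * (1 / 2) ^ j) \
        contactSet (ball 0 (1 - (1 / 2) ^ j)) (closedBall 0 (1 - (1 / 2) ^ j)) v ((4 ^ j) ^ 2)) ≤
      ((2 * (4 * Lam * n / (3 * lam))) ^ n / (1 + (2 * (4 * Lam * n / (3 * lam))) ^ n)) ^ j *
        volume.real (ball (0 : EuclideanSpace ℝ (Fin n)) 1) + (2 * K / lam) ^ n * (1 / 2) ^ j := by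
  have hL : 0 < Lam := hlam.trans_le hLam
  have hδ : (0 : ℝ) < (1 / 2) ^ j := by positivity
  set C := (2 * (4 * Lam * n / (3 * lam))) ^ n
  set R : ℝ := 1 - (1 / 2) ^ j
  set m : ℕ → ℝ := fun i => volume.real (ball 0 (1 - 5 * (1 / 2) ^ j + 2 * (1 / 2) ^ (j + i)) \
    contactSet (ball 0 R) (closedBall 0 R) v ((2 ^ (j + i)) ^ 2))
  have hstep : ∀ i, (1 + C) * m (i + 1) ≤ C * m i + (2 * K / lam) ^ n * (1 / 2) ^ j := fun i => by
    have hp : (1 / 2 : ℝ) ^ (j + i) ≤ (1 / 2) ^ j :=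
      pow_le_pow_of_le_one (by norm_num) (by norm_num) (Nat.le_add_right j i)
    have hinv (c : ℝ) : c / 2 ^ (j + i) = c * (1 / 2) ^ (j + i) := by
      rw [one_div, inv_pow, div_eq_mul_inv]
    have h := mul_measureReal_ball_diff_contactSet_le (σ := 2 ^ (j + i)) (R := R)
      (ρ := 1 - 5 * (1 / 2) ^ j + 2 * (1 / 2) ^ (j + (i + 1))) hn hlam hLam hK hb hs hv
      (sub_lt_self 1 hδ) (one_le_pow₀ one_le_two)
      (by rw [hinv, ← add_assoc, pow_succ]; simp only [R]; linarith)
    have hradius : 1 - 5 * (1 / 2) ^ j + 2 * (1 / 2) ^ (j + (i + 1)) + 1 / 2 ^ (j + i) =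
        1 - 5 * (1 / 2) ^ j + 2 * (1 / 2 : ℝ) ^ (j + i) := by
      rw [hinv, ← add_assoc, pow_succ]; ring
    have hopening : (4 : ℝ) * (2 ^ (j + i)) ^ 2 = (2 ^ (j + (i + 1))) ^ 2 := by ring
    rw [hradius, hopening, hinv] at h
    exact h.trans (by gcongr)
  have hm₀ : m 0 ≤ volume.real (ball (0 : EuclideanSpace ℝ (Fin n)) 1) :=
    measureReal_mono (sdiff_subset.trans (ball_subset_ball (by rw [add_zero]; linarith)))
      measure_ball_lt_top.ne
  have hfour : ((4 : ℝ) ^ j) ^ 2 = (2 ^ (j + j)) ^ 2 := by rw [← two_mul, pow_mul]; norm_num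
  rw [hfour]
  calc _ ≤ m j := measureReal_mono (sdiff_subset_sdiff_left
          (ball_subset_ball (le_add_of_nonneg_right (by positivity))))
          (measure_ne_top_of_subset sdiff_subset measure_ball_lt_top.ne)
    _ ≤ (C / (1 + C)) ^ j * m 0 + (2 * K / lam) ^ n * (1 / 2) ^ j :=
        le_pow_mul_add_of_mul_succ_le (by positivity) hstep (by positivity) j
    _ ≤ _ := by gcongr

theorem exists_measureReal_ball_diff_contactSet_le (hn : n ≠ 0) (hlam : 0 < lam)
    (hLam : lam ≤ Lam) (hK : 0 ≤ K) :
    ∃ C θ : ℝ, 0 < C ∧ 1 / 2 ≤ θ ∧ θ < 1 ∧ ∀ b v : EuclideanSpace ℝ (Fin n) → ℝ,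
      IsMorreyDrift n K γ b → IsNonnegSupersolution n lam Lam b v → (∀ x ∈ ball 0 1, v x ≤ 1) →
      ∀ j : ℕ, volume.real (ball 0 1 \ (contactSet (ball 0 (1 - (1 / 2) ^ j))
        (closedBall 0 (1 - (1 / 2) ^ j)) v ((4 ^ j) ^ 2) ∩ ball 0 (1 - 5 * (1 / 2) ^ j))) ≤
          C * θ ^ j := by
  have hL : 0 < Lam := hlam.trans_le hLam
  set C₀ := (2 * (4 * Lam * n / (3 * lam))) ^ n
  set V := volume.real (ball (0 : EuclideanSpace ℝ (Fin n)) 1)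
  have hV : 0 < V := ENNReal.toReal_pos (measure_ball_pos _ _ one_pos).ne' measure_ball_lt_top.ne
  have : 0 ≤ C₀ := by positivity
  set θ := max (C₀ / (1 + C₀)) (1 / 2)
  refine ⟨V + (2 * K / lam) ^ n + V * (n * 5), θ, by positivity, le_max_right _ _,
    max_lt ((div_lt_one (by positivity)).2 (lt_one_add C₀)) one_half_lt_one,
    fun b v hb hs hv j => ?_⟩
  set Ct := contactSet (ball 0 (1 - (1 / 2) ^ j)) (closedBall 0 (1 - (1 / 2) ^ j)) v ((4 ^ j) ^ 2)
  have hhalf : (1 / 2 : ℝ) ^ j ≤ θ ^ j := by gcongr; exact le_max_right _ _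
  calc _ ≤ volume.real (ball 0 1 \ ball 0 (1 - 5 * (1 / 2) ^ j) ∪
          ball 0 (1 - 5 * (1 / 2) ^ j) \ Ct) := by
        refine measureReal_mono (fun x hx => ?_) (measure_ne_top_of_subset
          (union_subset sdiff_subset
            (sdiff_subset.trans (ball_subset_ball (sub_le_self 1 (by positivity)))))
          measure_ball_lt_top.ne)
        by_cases hx' : x ∈ ball (0 : EuclideanSpace ℝ (Fin n)) (1 - 5 * (1 / 2) ^ j)
        · exact .inr ⟨hx', fun hxC => hx.2 ⟨hxC, hx'⟩⟩
        · exact .inl ⟨hx.1, hx'⟩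
    _ ≤ V * (n * (5 * (1 / 2) ^ j)) + ((C₀ / (1 + C₀)) ^ j * V + (2 * K / lam) ^ n * (1 / 2) ^ j) :=
        (measureReal_union_le _ _).trans (add_le_add
          (measureReal_ball_diff_ball_le hn (by positivity))
          (measureReal_ball_diff_contactSet_two_pow_le hn hlam hLam hK hb hs hv j))
    _ ≤ V * (n * (5 * θ ^ j)) + (θ ^ j * V + (2 * K / lam) ^ n * θ ^ j) := by
        gcongr; exact le_max_left _ _
    _ = _ := by ring

end ContactDecay

section Composition

variable {n : ℕ} {lam Lam : ℝ} {b u : EuclideanSpace ℝ (Fin n) → ℝ} {f f' f'' : ℝ → ℝ}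

theorem pucciMinus_smul_sub_le {H P : Matrix (Fin n) (Fin n) ℝ} (hlam : 0 ≤ lam) (hLam : lam ≤ Lam)
    (hH : H.IsHermitian) (hP : P.PosSemidef) {e : ℝ} (he : 0 < e) :
    pucciMinus n lam Lam (e • H - P) ≤ e * pucciMinus n lam Lam H := by
  rw [← div_le_iff₀' he]
  have hone := isElliptic_smul_one (n := n) hLam
  refine le_csInf ⟨_, _, hone.1, hone.2, hone.3, rfl⟩ ?_
  rintro _ ⟨A, h₁, h₂, h₃, rfl⟩
  have hA : IsElliptic lam Lam A := ⟨h₁, h₂, h₃⟩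
  have htrace : 0 ≤ (A * P).trace :=
    (mul_nonneg hlam hP.trace_nonneg).trans (hA.mul_trace_le hP)
  rw [div_le_iff₀' he]
  calc pucciMinus n lam Lam (e • H - P) ≤ (A * (e • H - P)).trace :=
        pucciMinus_le_trace_mul hlam ((hH.smul (.all e)).sub hP.1) hA
    _ = e * (A * H).trace - (A * P).trace := by
        rw [Matrix.mul_sub, Matrix.trace_sub, Matrix.mul_smul, Matrix.trace_smul, smul_eq_mul]
    _ ≤ e * (A * H).trace := sub_le_self _ htrace

theorem exists_posSemidef_hess_comp_eq {x : EuclideanSpace ℝ (Fin n)} (hu : ContDiffAt ℝ 2 u x)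
    (hf : ∀ s, HasDerivAt f (f' s) s) (hf' : ∀ s, HasDerivAt f' (f'' s) s) (hfc : ContDiff ℝ 2 f)
    (hconcave : ∀ s, f'' s ≤ 0) :
    ∃ P : Matrix (Fin n) (Fin n) ℝ, P.PosSemidef ∧
      hess n (fun y => f (u y)) x = f' (u x) • hess n u x - P := by
  refine ⟨(-f'' (u x)) • Matrix.vecMulVec (∇ u x).ofLp (∇ u x).ofLp,
    (Matrix.posSemidef_vecMulVec_self_star _).smul (neg_nonneg.2 (hconcave _)), ?_⟩
  rw [hess_comp hu hf (hf' _) hfc, neg_smul, sub_neg_eq_add, add_comm]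

theorem IsNonnegSupersolution.comp (hlam : 0 ≤ lam) (hLam : lam ≤ Lam)
    (hs : IsNonnegSupersolution n lam Lam b u) (hf : ∀ s, HasDerivAt f (f' s) s)
    (hf' : ∀ s, HasDerivAt f' (f'' s) s) (hfc : ContDiff ℝ 2 f) (hmono : ∀ s, 0 < f' s)
    (hconcave : ∀ s, f'' s ≤ 0) (hnonneg : ∀ s ≥ 0, 0 ≤ f s) :
    IsNonnegSupersolution n lam Lam b fun y => f (u y) where
  contDiffAt x hx := hfc.contDiffAt.comp x (hs.contDiffAt x hx)
  nonneg x hx := hnonneg _ (hs.nonneg x hx)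
  pucciMinus_le x hx := by
    have hu := hs.contDiffAt x hx
    obtain ⟨P, hP, hhess⟩ := exists_posSemidef_hess_comp_eq hu hf hf' hfc hconcave
    calc pucciMinus n lam Lam (hess n (fun y => f (u y)) x)
        ≤ f' (u x) * pucciMinus n lam Lam (hess n u x) :=
          hhess ▸ pucciMinus_smul_sub_le hlam hLam (isHermitian_hess hu) hP (hmono _)
      _ ≤ f' (u x) * (b x * gradNorm n u x) :=
          mul_le_mul_of_nonneg_left (hs.pucciMinus_le x hx) (hmono _).le
      _ = b x * gradNorm n (fun y => f (u y)) x := by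
          rw [gradNorm_comp (hu.differentiableAt (by norm_num)) (hf _), abs_of_pos (hmono _)]
          ring

theorem neg_le_pucciMinus_hess_of_mem_contactSet_comp {Ω S : Set (EuclideanSpace ℝ (Fin n))}
    {x : EuclideanSpace ℝ (Fin n)} {a : ℝ} (hlam : 0 ≤ lam) (hLam : lam ≤ Lam) (ha : 0 ≤ a)
    (hS : S ∈ 𝓝 x) (hu : ContDiffAt ℝ 2 u x) (hf : ∀ s, HasDerivAt f (f' s) s)
    (hf' : ∀ s, HasDerivAt f' (f'' s) s) (hfc : ContDiff ℝ 2 f) (hmono : 0 < f' (u x))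
    (hconcave : ∀ s, f'' s ≤ 0) (hx : x ∈ contactSet Ω S (fun y => f (u y)) a) :
    -(Lam * n * (a / f' (u x))) ≤ pucciMinus n lam Lam (hess n u x) := by
  refine neg_le_pucciMinus hlam hLam (by positivity) ?_
  obtain ⟨P, hP, hhess⟩ := exists_posSemidef_hess_comp_eq hu hf hf' hfc hconcave
  have hpsd := posSemidef_hess_add_of_mem_contactSet (w := fun y => f (u y)) hS
    (hfc.contDiffAt.comp x hu) hx
  have hsum := (hpsd.add hP).smul (inv_nonneg.2 hmono.le)
  rwa [hhess, add_right_comm, sub_add_cancel, smul_add, inv_smul_smul₀ hmono.ne', smul_smul,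
    inv_mul_eq_div] at hsum

end Composition

section Saturation

variable {n : ℕ} {lam Lam M s : ℝ} {b u : EuclideanSpace ℝ (Fin n) → ℝ}

/-- A concave increasing profile with values in `[0, 1)` on `s ≥ 0`. Composing a supersolution with
it gives a bounded supersolution that remains comparable with `u / M` where `u ≲ M`. -/
noncomputable def saturation (M s : ℝ) : ℝ := 1 - Real.exp (-(s / M))

theorem hasDerivAt_exp_neg_div (M s : ℝ) :
    HasDerivAt (fun s => Real.exp (-(s / M))) (-(Real.exp (-(s / M)) / M)) s := by
  simpa [div_eq_mul_inv] using ((hasDerivAt_id' s).div_const M).fun_neg.exp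

theorem hasDerivAt_saturation (M s : ℝ) :
    HasDerivAt (saturation M) (Real.exp (-(s / M)) / M) s :=
  ((hasDerivAt_exp_neg_div M s).const_sub 1).congr_deriv (neg_neg _)

theorem hasDerivAt_exp_neg_div_div (M s : ℝ) :
    HasDerivAt (fun s => Real.exp (-(s / M)) / M) (-(Real.exp (-(s / M)) / M / M)) s :=
  ((hasDerivAt_exp_neg_div M s).div_const M).congr_deriv (neg_div _ _)

theorem contDiff_saturation (M : ℝ) : ContDiff ℝ 2 (saturation M) :=
  contDiff_const.sub (Real.contDiff_exp.comp (contDiff_id.div_const M).neg)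

theorem saturation_nonneg (hM : 0 ≤ M) (hs : 0 ≤ s) : 0 ≤ saturation M s :=
  sub_nonneg.2 (Real.exp_le_one_iff.2 (neg_nonpos.2 (div_nonneg hs hM)))

theorem saturation_le_one (M s : ℝ) : saturation M s ≤ 1 := sub_le_self 1 (Real.exp_pos _).le

theorem saturation_le_div (M s : ℝ) : saturation M s ≤ s / M := by
  linarith [Real.add_one_le_exp (-(s / M)), show saturation M s = 1 - Real.exp (-(s / M)) from rfl]

theorem IsNonnegSupersolution.saturation (hlam : 0 ≤ lam) (hLam : lam ≤ Lam) (hM : 0 < M)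
    (hs : IsNonnegSupersolution n lam Lam b u) :
    IsNonnegSupersolution n lam Lam b fun y => saturation M (u y) :=
  hs.comp hlam hLam (hasDerivAt_saturation M) (hasDerivAt_exp_neg_div_div M) (contDiff_saturation M)
    (fun _ => by positivity) (fun _ => neg_nonpos.2 (by positivity))
    fun _ => saturation_nonneg hM.le

theorem neg_pucciMinus_sub_le_of_mem_contactSet_saturation (hlam : 0 ≤ lam) (hLam : lam ≤ Lam)
    (hM : 0 < M) (hs : IsNonnegSupersolution n lam Lam b u) {R σ : ℝ} (hR : R < 1) (hσ : 0 < σ)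
    {x : EuclideanSpace ℝ (Fin n)} (hb : 0 ≤ b x) (hxR : ‖x‖ + 1 / σ ≤ R)
    (hx : x ∈ contactSet (ball 0 R) (closedBall 0 R) (fun y => saturation M (u y)) (σ ^ 2))
    (hhalf : saturation M (u x) ≤ 1 / 2) :
    -(pucciMinus n lam Lam (hess n u x) - b x * gradNorm n u x) ≤
      Lam * n * (2 * σ ^ 2 * M) + b x * (6 * σ * M) := by
  have hL : 0 ≤ Lam := hlam.trans hLam
  have hxR' : x ∈ ball 0 R := contactSet_subset hx
  have hu := hs.contDiffAt x (ball_subset_ball hR.le hxR')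
  set e := Real.exp (-(u x / M)) / M with he
  have hslope : 1 / (2 * M) ≤ e := by
    rw [he, ← div_div]
    gcongr
    linarith [show saturation M (u x) = 1 - Real.exp (-(u x / M)) from rfl]
  have he₀ : 0 < e := (by positivity : 0 < 1 / (2 * M)).trans_le hslope
  have hdiv : ∀ {p : ℝ}, 0 ≤ p → p / e ≤ 2 * p * M := fun {p} hp => by
    calc p / e ≤ p / (1 / (2 * M)) := by gcongr
      _ = 2 * p * M := by rw [div_div_eq_mul_div, div_one]; ring
  have hgrad : gradNorm n u x ≤ 3 * σ / e := by
    have := gradNorm_le_of_mem_contactSet (hs.saturation hlam hLam hM)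
      (fun _ _ => saturation_le_one _ _) hR hσ hxR
      (contactSet_mono (by linarith [sq_nonneg σ] : σ ^ 2 ≤ 4 * σ ^ 2) hx)
    rwa [gradNorm_comp (hu.differentiableAt (by norm_num)) (hasDerivAt_saturation M _),
      abs_of_pos he₀, ← le_div_iff₀' he₀] at this
  have hhess : -(Lam * n * (σ ^ 2 / e)) ≤ _ :=
    neg_le_pucciMinus_hess_of_mem_contactSet_comp hlam hLam (sq_nonneg σ)
    (mem_of_superset (isOpen_ball.mem_nhds hxR') ball_subset_closedBall) hu
    (hasDerivAt_saturation M) (hasDerivAt_exp_neg_div_div M) (contDiff_saturation M) he₀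
    (fun _ => neg_nonpos.2 (by positivity)) hx
  calc -(pucciMinus n lam Lam (hess n u x) - b x * gradNorm n u x)
      ≤ Lam * n * (σ ^ 2 / e) + b x * (3 * σ / e) := by
        linarith [mul_le_mul_of_nonneg_left hgrad hb]
    _ ≤ Lam * n * (2 * σ ^ 2 * M) + b x * (2 * (3 * σ) * M) := by
        gcongr
        · exact hdiv (sq_nonneg σ)
        · exact hdiv (by positivity)
    _ = _ := by ring

end Saturation

section Distribution

variable {n : ℕ} {lam Lam K γ s c m : ℝ} {N : ℕ} {b u : EuclideanSpace ℝ (Fin n) → ℝ}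
  {x z : EuclideanSpace ℝ (Fin n)}

theorem le_add_of_mem_contactSet {F : Type*} [NormedAddCommGroup F] [NormedSpace ℝ F]
    {Ω S : Set F} {w : F → ℝ} {a r : ℝ} {x y : F} (ha : 0 ≤ a) (hx : x ∈ contactSet Ω S w a)
    (hy : y ∈ S) (hxy : ‖y - x‖ ≤ r) : w x ≤ w y + ‖fderiv ℝ w x‖ * r + a / 2 * r ^ 2 := by
  have hslope : -(‖fderiv ℝ w x‖ * r) ≤ fderiv ℝ w x (y - x) :=
    neg_le_of_abs_le (((fderiv ℝ w x).le_opNorm _).trans (by gcongr))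
  have hsq : a / 2 * ‖y - x‖ ^ 2 ≤ a / 2 * r ^ 2 := by gcongr
  linarith [hx.2 y hy]

theorem HasPropagation.exists_mem_ball_lt {F : Type*} [NormedAddCommGroup F] {u : F → ℝ} {x z : F}
    {r : ℝ} (hu : HasPropagation s c N u) (hc : 0 < c) (hm : 0 ≤ m) (hz : z ∈ ball 0 1)
    (huz : u z < m * (1 - ‖z‖)) (hr : 0 < r) (hrs : r ≤ s * (1 - ‖x‖)) :
    ∃ y ∈ ball x r, u y < m / (c * r ^ N) := by
  by_contra! hle
  have := hu x r hr hrs (m / (c * r ^ N)) (by positivity) hle z hz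
  rw [mul_div_cancel₀ _ (by positivity)] at this
  exact huz.not_ge this

theorem saturation_le_half_of_mem_contactSet (hlam : 0 ≤ lam) (hLam : lam ≤ Lam) {M R σ κ : ℝ}
    (hM : 0 < M) (hs : IsNonnegSupersolution n lam Lam b u) (hR : R < 1) (hσ : 0 < σ)
    (hκ : 0 ≤ κ) (hκ' : κ ≤ 1 / 16) (hxR : ‖x‖ + 1 / σ ≤ R)
    (hx : x ∈ contactSet (ball 0 R) (closedBall 0 R) (fun y => saturation M (u y)) (σ ^ 2))
    {y : EuclideanSpace ℝ (Fin n)} (hyR : y ∈ closedBall 0 R) (hxy : ‖y - x‖ ≤ κ / σ)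
    (hy : u y ≤ M / 8) : saturation M (u x) ≤ 1 / 2 := by
  have hgrad : ‖fderiv ℝ (fun y => saturation M (u y)) x‖ ≤ 3 * σ :=
    gradNorm_le_of_mem_contactSet (hs.saturation hlam hLam hM)
      (fun _ _ => saturation_le_one _ _) hR hσ hxR
      (contactSet_mono (by linarith [sq_nonneg σ] : σ ^ 2 ≤ 4 * σ ^ 2) hx)
  calc saturation M (u x)
      ≤ saturation M (u y) + ‖fderiv ℝ (fun y => saturation M (u y)) x‖ * (κ / σ) +
          σ ^ 2 / 2 * (κ / σ) ^ 2 := le_add_of_mem_contactSet (sq_nonneg σ) hx hyR hxy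
    _ ≤ 1 / 8 + 3 * σ * (κ / σ) + σ ^ 2 / 2 * (κ / σ) ^ 2 := by
        gcongr
        exact (saturation_le_div M _).trans ((div_le_iff₀' hM).2 (by linarith))
    _ = 1 / 8 + 3 * κ + κ ^ 2 / 2 := by field_simp
    _ ≤ 1 / 2 := by nlinarith

/-- Propagation forces a point near `x` where `u` is below `m / (c r ^ N)`; with `M` eight times
this value, the saturation of `u` is far from `1` at the contact point `x`. -/
theorem neg_pucciMinus_sub_le_of_hasPropagation (hlam : 0 ≤ lam) (hLam : lam ≤ Lam) (hs₀ : 0 < s)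
    (hs₈ : s ≤ 1 / 8) (hc : 0 < c) (hu : HasPropagation s c N u)
    (hs : IsNonnegSupersolution n lam Lam b u) (hm : 0 < m) (hz : z ∈ ball 0 1)
    (huz : u z < m * (1 - ‖z‖)) {δ σ M : ℝ} (hδ : 0 < δ) (hσ : 0 < σ) (hσδ : 1 / σ ≤ δ)
    (hM : M = 8 * (m / (c * (s / 16 / σ) ^ N))) (hb : 0 ≤ b x) (hxδ : x ∈ ball 0 (1 - 5 * δ))
    (hx : x ∈ contactSet (ball 0 (1 - δ)) (closedBall 0 (1 - δ)) (fun y => saturation M (u y))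
      (σ ^ 2)) :
    -(pucciMinus n lam Lam (hess n u x) - b x * gradNorm n u x) ≤
      Lam * n * (2 * σ ^ 2 * M) + b x * (6 * σ * M) := by
  have hM₀ : 0 < M := by rw [hM]; positivity
  have hxδ' : ‖x‖ < 1 - 5 * δ := mem_ball_zero_iff.1 hxδ
  have hxR : ‖x‖ + 1 / σ ≤ 1 - δ := by linarith
  have hrδ : s / 16 / σ ≤ s / 16 * δ := by
    rw [div_eq_mul_one_div (s / 16) σ]
    gcongr
  obtain ⟨y, hy, huy⟩ := hu.exists_mem_ball_lt hc hm.le hz huz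
    (by positivity : 0 < s / 16 / σ) (x := x) (by nlinarith)
  have hyx : ‖y - x‖ < s / 16 / σ := mem_ball_iff_norm.1 hy
  have hyR : y ∈ closedBall 0 (1 - δ) := mem_closedBall_zero_iff.2 (by
    nlinarith [norm_le_norm_add_norm_sub' y x])
  exact neg_pucciMinus_sub_le_of_mem_contactSet_saturation hlam hLam hM₀ hs (sub_lt_self 1 hδ) hσ hb
    hxR hx (saturation_le_half_of_mem_contactSet hlam hLam hM₀ hs (sub_lt_self 1 hδ) hσ
      (by positivity) (by linarith) hxR hx hyR hyx.le (by linarith))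

theorem neg_pucciMinus_sub_le_mul_pow (hlam : 0 ≤ lam) (hLam : lam ≤ Lam) (hs₀ : 0 < s)
    (hs₈ : s ≤ 1 / 8) (hc : 0 < c) (hu : HasPropagation s c N u)
    (hs : IsNonnegSupersolution n lam Lam b u) (hm : 0 < m) (hz : z ∈ ball 0 1)
    (huz : u z < m * (1 - ‖z‖)) {j : ℕ} {M : ℝ}
    (hM : M = 8 * (m / (c * (s / 16 / 4 ^ j) ^ N)))
    (hb : 0 ≤ b x) (hbj : b x ≤ 2 ^ j) (hxj : x ∈ ball 0 (1 - 5 * (1 / 2) ^ j))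
    (hx : x ∈ contactSet (ball 0 (1 - (1 / 2) ^ j)) (closedBall 0 (1 - (1 / 2) ^ j))
      (fun y => saturation M (u y)) ((4 ^ j) ^ 2)) :
    -(pucciMinus n lam Lam (hess n u x) - b x * gradNorm n u x) ≤
      (2 * Lam * n + 6) * (8 / (c * (s / 16) ^ N)) * m * (32 * 4 ^ N) ^ j := by
  have hL : 0 ≤ Lam := hlam.trans hLam
  have hM₀ : 0 < M := by rw [hM]; positivity
  have hσδ : (1 : ℝ) / 4 ^ j ≤ (1 / 2) ^ j := by
    rw [← one_div_pow]
    gcongr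
    norm_num
  calc -(pucciMinus n lam Lam (hess n u x) - b x * gradNorm n u x)
      ≤ Lam * n * (2 * (4 ^ j) ^ 2 * M) + b x * (6 * 4 ^ j * M) :=
        neg_pucciMinus_sub_le_of_hasPropagation hlam hLam hs₀ hs₈ hc hu hs hm hz huz
          (by positivity) (by positivity) hσδ hM hb hxj hx
    _ ≤ Lam * n * (2 * (4 ^ j) ^ 2 * (2 ^ j * M)) + 2 ^ j * (6 * (4 ^ j) ^ 2 * M) := by
        gcongr
        · exact le_mul_of_one_le_left hM₀.le (one_le_pow₀ one_le_two)
        · exact le_self_pow₀ (one_le_pow₀ (by norm_num)) two_ne_zero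
    _ = (2 * Lam * n + 6) * (8 / (c * (s / 16) ^ N)) * m *
          (2 ^ j * (4 ^ j) ^ 2 * (4 ^ j) ^ N) := by
        rw [hM, div_pow (s / 16)]
        field_simp
    _ = _ := by
        rw [mul_pow, ← pow_mul, ← pow_mul, ← pow_mul, pow_mul' 4 j 2, ← mul_pow, mul_comm j N]
        norm_num

/-- Where `-g` is large, either the drift is large or the saturation of `u` has no contact. -/
theorem exists_volume_lt_neg_le (hn : n ≠ 0) (hlam : 0 < lam) (hLam : lam ≤ Lam) (hγ : 0 < γ)
    (hγ₁ : γ ≤ 1) (hK : 0 < K) :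
    ∃ C D L θ : ℝ, 0 ≤ C ∧ 0 < D ∧ 1 < L ∧ 0 < θ ∧ θ < 1 ∧
      ∀ b u : EuclideanSpace ℝ (Fin n) → ℝ, IsMorreyDrift n K γ b →
      IsNonnegSupersolution n lam Lam b u → ∀ m > 0, ∀ z ∈ ball 0 1, u z < m * (1 - ‖z‖) →
      ∀ j : ℕ, volume {x ∈ ball 0 1 |
        D * m * L ^ j < -(pucciMinus n lam Lam (hess n u x) - b x * gradNorm n u x)} ≤
          ENNReal.ofReal (C * θ ^ j) := by
  have hL : 0 < Lam := hlam.trans_le hLam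
  obtain ⟨s, c, N, hs₀, hs₈, hc, hprop⟩ := exists_hasPropagation hn hlam hLam hγ hγ₁ hK
  obtain ⟨C, θ, hC, hθ, hθ₁, hcontact⟩ :=
    exists_measureReal_ball_diff_contactSet_le hn hlam hLam hK.le
  have hθ₀ : 0 < θ := one_half_pos.trans_le hθ
  refine ⟨C + K ^ n, (2 * Lam * n + 6) * (8 / (c * (s / 16) ^ N)), 32 * 4 ^ N, θ, by positivity,
    by positivity, one_lt_mul_of_lt_of_le (by norm_num) (one_le_pow₀ (by norm_num)), hθ₀, hθ₁,
    fun b u hb hs m hm z hz huz j => ?_⟩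
  set M := 8 * (m / (c * (s / 16 / 4 ^ j) ^ N)) with hM
  have hM₀ : 0 < M := by positivity
  set G := contactSet (ball 0 (1 - (1 / 2) ^ j)) (closedBall 0 (1 - (1 / 2) ^ j))
    (fun y => saturation M (u y)) ((4 ^ j) ^ 2) ∩ ball 0 (1 - 5 * (1 / 2) ^ j)
  have hnoncontact : volume (ball 0 1 \ G) ≤ ENNReal.ofReal (C * θ ^ j) := by
    rw [← ofReal_measureReal (measure_ne_top_of_subset sdiff_subset measure_ball_lt_top.ne)]
    exact ENNReal.ofReal_le_ofReal (hcontact b _ hb (hs.saturation hlam.le hLam hM₀)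
      (fun _ _ => saturation_le_one _ _) j)
  have hdrift : volume {y ∈ ball (0 : EuclideanSpace ℝ (Fin n)) 1 | 2 ^ j < b y} ≤
      ENNReal.ofReal (K ^ n * θ ^ j) := by
    refine (hb.volume_lt_le (by positivity)).trans (ENNReal.ofReal_le_ofReal ?_)
    calc (K / 2 ^ j) ^ n = K ^ n * ((1 / 2) ^ j) ^ n := by
          rw [one_div_pow, div_eq_mul_one_div, mul_pow]
      _ ≤ K ^ n * (1 / 2) ^ j := by
          gcongr
          exact pow_le_of_le_one (by positivity)
            (pow_le_one₀ one_half_pos.le one_half_lt_one.le) hn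
      _ ≤ K ^ n * θ ^ j := by gcongr
  rw [add_mul C, ENNReal.ofReal_add (by positivity) (by positivity)]
  refine (measure_mono ?_).trans ((measure_union_le _ _).trans (add_le_add hnoncontact hdrift))
  rintro x ⟨hx, hlt⟩
  by_cases hxG : x ∈ G
  · exact .inr ⟨hx, lt_of_not_ge fun hbj => hlt.not_ge <| neg_pucciMinus_sub_le_mul_pow hlam.le hLam
      hs₀ hs₈ hc (hprop b u hb hs) hs hm hz huz hM (hb.nonneg x hx) hbj hxG.2 hxG.1⟩
  · exact .inl ⟨hx, hxG⟩

end Distribution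

section TailIntegral

theorem exists_mul_rpow_lt_one {L θ : ℝ} (hL : 1 < L) (hθ₁ : θ < 1) :
    ∃ ε > (0 : ℝ), θ * L ^ ε < 1 := by
  have htendsto : Tendsto (fun ε : ℝ => θ * L ^ ε) (𝓝[>] 0) (𝓝 (θ * L ^ (0 : ℝ))) :=
    (((Real.continuous_const_rpow (by positivity)).const_mul θ).tendsto 0).mono_left
      nhdsWithin_le_nhds
  rw [Real.rpow_zero, mul_one] at htendsto
  exact ((eventually_mem_nhdsWithin (a := (0 : ℝ))).and (htendsto.eventually_lt_const hθ₁)).exists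

variable {α : Type*} {A L C θ ε : ℝ} {f : α → ℝ}

theorem ofReal_rpow_le_add_tsum_indicator (hA : 0 < A) (hL : 1 < L) (hε : 0 ≤ ε) {S : ℕ → Set α}
    (hS : ∀ j, {x | A * L ^ j < f x} ⊆ S j) {x : α} (hx : 0 ≤ f x) :
    ENNReal.ofReal (f x ^ ε) ≤ ENNReal.ofReal (A ^ ε) +
      ∑' j, (S j).indicator (fun _ => ENNReal.ofReal ((A * L ^ (j + 1)) ^ ε)) x := by
  have hex : ∃ k : ℕ, f x ≤ A * L ^ k := by
    obtain ⟨k, hk⟩ := pow_unbounded_of_one_lt (f x / A) hL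
    exact ⟨k, ((div_lt_iff₀' hA).1 hk).le⟩
  have hle := Nat.find_spec hex
  rcases hk : Nat.find hex with _ | k
  · rw [hk, pow_zero, mul_one] at hle
    exact le_add_right (ENNReal.ofReal_le_ofReal (Real.rpow_le_rpow hx hle hε))
  · have hlt : A * L ^ k < f x := not_le.1 (Nat.find_min hex (hk ▸ k.lt_succ_self))
    rw [hk] at hle
    calc ENNReal.ofReal (f x ^ ε) ≤ ENNReal.ofReal ((A * L ^ (k + 1)) ^ ε) :=
          ENNReal.ofReal_le_ofReal (Real.rpow_le_rpow hx hle hε)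
      _ = (S k).indicator (fun _ => ENNReal.ofReal ((A * L ^ (k + 1)) ^ ε)) x :=
          (indicator_of_mem (hS k hlt) fun _ => _).symm
      _ ≤ _ := le_add_left (ENNReal.le_tsum k)

variable [MeasurableSpace α] {μ : Measure α}

theorem lintegral_ofReal_rpow_le_of_geometric_tail [IsFiniteMeasure μ] (hA : 0 < A) (hL : 1 < L)
    (hC : 0 ≤ C) (hθ : 0 ≤ θ) (hε : 0 ≤ ε) (hLθ : θ * L ^ ε < 1) (hf : ∀ᵐ x ∂μ, 0 ≤ f x)
    (htail : ∀ j : ℕ, μ {x | A * L ^ j < f x} ≤ ENNReal.ofReal (C * θ ^ j)) :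
    ∫⁻ x, ENNReal.ofReal (f x ^ ε) ∂μ ≤
      ENNReal.ofReal (A ^ ε * (μ.real univ + C * L ^ ε * (1 - θ * L ^ ε)⁻¹)) := by
  have hL₀ : 0 < L := one_pos.trans hL
  have hratio : 0 ≤ θ * L ^ ε := by positivity
  have : 0 < 1 - θ * L ^ ε := sub_pos.2 hLθ
  set S : ℕ → Set α := fun j => toMeasurable μ {x | A * L ^ j < f x}
  have hS : ∀ j, MeasurableSet (S j) := fun j => measurableSet_toMeasurable μ _
  have hterm : ∀ j, ENNReal.ofReal ((A * L ^ (j + 1)) ^ ε) * μ (S j) ≤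
      ENNReal.ofReal (A ^ ε * (C * L ^ ε) * (θ * L ^ ε) ^ j) := fun j => by
    calc ENNReal.ofReal ((A * L ^ (j + 1)) ^ ε) * μ (S j)
        ≤ ENNReal.ofReal ((A * L ^ (j + 1)) ^ ε) * ENNReal.ofReal (C * θ ^ j) := by
          gcongr
          exact (measure_toMeasurable _).trans_le (htail j)
      _ = _ := by
          rw [← ENNReal.ofReal_mul (by positivity), Real.mul_rpow hA.le (by positivity),
            ← Real.rpow_pow_comm hL₀.le, pow_succ, mul_pow]
          ring_nf
  calc ∫⁻ x, ENNReal.ofReal (f x ^ ε) ∂μ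
      ≤ ∫⁻ x, (ENNReal.ofReal (A ^ ε) +
          ∑' j, (S j).indicator (fun _ => ENNReal.ofReal ((A * L ^ (j + 1)) ^ ε)) x) ∂μ :=
        lintegral_mono_ae <| hf.mono fun x hx =>
          ofReal_rpow_le_add_tsum_indicator hA hL hε (fun j => subset_toMeasurable _ _) hx
    _ = ENNReal.ofReal (A ^ ε) * μ univ +
          ∑' j, ENNReal.ofReal ((A * L ^ (j + 1)) ^ ε) * μ (S j) := by
        rw [lintegral_add_left measurable_const, lintegral_const,
          lintegral_tsum fun j => (measurable_const.indicator (hS j)).aemeasurable]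
        simp_rw [lintegral_indicator_const (hS _)]
    _ ≤ ENNReal.ofReal (A ^ ε) * μ univ +
          ∑' j, ENNReal.ofReal (A ^ ε * (C * L ^ ε) * (θ * L ^ ε) ^ j) := by
        gcongr with j
        exact hterm j
    _ = ENNReal.ofReal (A ^ ε * (μ.real univ + C * L ^ ε * (1 - θ * L ^ ε)⁻¹)) := by
        rw [← ENNReal.ofReal_tsum_of_nonneg (fun j => by positivity)
          ((summable_geometric_of_lt_one hratio hLθ).mul_left _), tsum_mul_left,
          tsum_geometric_of_lt_one hratio hLθ, ← ofReal_measureReal,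
          ← ENNReal.ofReal_mul (by positivity),
          ← ENNReal.ofReal_add (by positivity) (by positivity)]
        ring_nf

end TailIntegral

section WeakHarnack

variable {n : ℕ} {lam Lam K γ : ℝ}

theorem exists_lintegral_rpow_le_mul (hn : n ≠ 0) (hlam : 0 < lam) (hLam : lam ≤ Lam) (hγ : 0 < γ)
    (hγ₁ : γ ≤ 1) (hK : 0 < K) :
    ∃ ε C : ℝ, 0 < ε ∧ 0 < C ∧ ∀ b u : EuclideanSpace ℝ (Fin n) → ℝ, IsMorreyDrift n K γ b →
      IsNonnegSupersolution n lam Lam b u → ∀ m > 0, ∀ z ∈ ball 0 1, u z < m * (1 - ‖z‖) →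
      (∫⁻ x in ball 0 1, ENNReal.ofReal
        ((-(pucciMinus n lam Lam (hess n u x) - b x * gradNorm n u x)) ^ ε)) ^ (1 / ε) ≤
          ENNReal.ofReal (C * m) := by
  obtain ⟨C, D, L, θ, hC, hD, hL, hθ₀, hθ₁, htail⟩ :=
    exists_volume_lt_neg_le hn hlam hLam hγ hγ₁ hK
  obtain ⟨ε, hε, hLθ⟩ := exists_mul_rpow_lt_one hL hθ₁
  set μ := volume.restrict (ball (0 : EuclideanSpace ℝ (Fin n)) 1) with hμ
  have : IsFiniteMeasure μ := isFiniteMeasure_restrict.2 measure_ball_lt_top.ne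
  set I := μ.real univ + C * L ^ ε * (1 - θ * L ^ ε)⁻¹
  have hI₀ : 0 < I := by
    have hvol : 0 < μ.real univ := by
      rw [measureReal_restrict_apply_univ]
      exact ENNReal.toReal_pos (measure_ball_pos _ _ one_pos).ne' measure_ball_lt_top.ne
    have : 0 < 1 - θ * L ^ ε := sub_pos.2 hLθ
    positivity
  refine ⟨ε, D * I ^ (1 / ε), hε, by positivity, fun b u hb hs m hm z hz huz => ?_⟩
  have hintegral := lintegral_ofReal_rpow_le_of_geometric_tail (μ := μ) (mul_pos hD hm) hL hC
    hθ₀.le hε.le hLθ (ae_restrict_of_forall_mem measurableSet_ball fun x hx =>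
      neg_nonneg.2 (sub_nonpos.2 (hs.pucciMinus_le x hx))) fun j => by
        rw [hμ, Measure.restrict_apply' measurableSet_ball, inter_comm]
        exact htail b u hb hs m hm z hz huz j
  calc _ ≤ ENNReal.ofReal ((D * m) ^ ε * I) ^ (1 / ε) :=
        ENNReal.rpow_le_rpow hintegral (by positivity)
    _ = ENNReal.ofReal (D * I ^ (1 / ε) * m) := by
        rw [ENNReal.ofReal_rpow_of_pos (by positivity), Real.mul_rpow (by positivity) hI₀.le,
          ← Real.rpow_mul (by positivity), mul_one_div_cancel hε.ne', Real.rpow_one, mul_right_comm]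

end WeakHarnack

theorem global_quantitative_strong_maximum_principle_general {n : ℕ} {lam Lam K γ : ℝ}
    (hn : n ≠ 0) (hlam : 0 < lam) (hLam : lam ≤ Lam) (hγ : 0 < γ) (hγ₁ : γ ≤ 1) (hK : 0 < K) :
    ∃ ε c : ℝ, 0 < ε ∧ 0 < c ∧
      ∀ b u : EuclideanSpace ℝ (Fin n) → ℝ,
        IsMorreyDrift n K γ b → IsNonnegSupersolution n lam Lam b u →
        ENNReal.ofReal c *
            (∫⁻ x in ball (0 : EuclideanSpace ℝ (Fin n)) 1,
              ENNReal.ofReal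
                ((-(pucciMinus n lam Lam (hess n u x) - b x * gradNorm n u x)) ^ ε)) ^ (1 / ε)
          ≤ ENNReal.ofReal
              (⨅ x : ball (0 : EuclideanSpace ℝ (Fin n)) 1, u x.1 / (1 - ‖x.1‖)) := by
  obtain ⟨ε, C, hε, hC, hle⟩ := exists_lintegral_rpow_le_mul hn hlam hLam hγ hγ₁ hK
  refine ⟨ε, C⁻¹, hε, inv_pos.2 hC, fun b u hb hs => ?_⟩
  have : Nonempty (ball (0 : EuclideanSpace ℝ (Fin n)) 1) := ⟨0, mem_ball_self one_pos⟩
  have hdist (x : ball (0 : EuclideanSpace ℝ (Fin n)) 1) : 0 < 1 - ‖x.1‖ :=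
    sub_pos.2 (mem_ball_zero_iff.1 x.2)
  have hinf : 0 ≤ ⨅ x : ball (0 : EuclideanSpace ℝ (Fin n)) 1, u x.1 / (1 - ‖x.1‖) :=
    Real.iInf_nonneg fun x => div_nonneg (hs.nonneg x.1 x.2) (hdist x).le
  refine le_of_forall_gt_imp_ge_of_dense fun a ha => ?_
  rcases eq_or_ne a ⊤ with rfl | hatop
  · exact le_top
  have hlt := (ENNReal.ofReal_lt_iff_lt_toReal hinf hatop).1 ha
  obtain ⟨z, hz⟩ := exists_lt_of_ciInf_lt hlt
  calc _ ≤ ENNReal.ofReal C⁻¹ * ENNReal.ofReal (C * a.toReal) := by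
        gcongr
        exact hle b u hb hs _ (hinf.trans_lt hlt) z.1 z.2 ((div_lt_iff₀ (hdist z)).1 hz)
    _ = a := by
        rw [← ENNReal.ofReal_mul (by positivity), inv_mul_cancel_left₀ hC.ne',
          ENNReal.ofReal_toReal hatop]

end Development

/-- Global quantitative strong maximum principle in the unit ball. -/
theorem global_quantitative_strong_maximum_principle
    (n : ℕ) (hn : 2 ≤ n) (lam Lam : ℝ) (hlam : 0 < lam) (hLam : lam ≤ Lam)
    (q K : ℝ) (hq : (n : ℝ) < q) (hK : 0 < K) :
    ∃ ε c : ℝ, 0 < ε ∧ 0 < c ∧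
      ∀ b u : EuclideanSpace ℝ (Fin n) → ℝ,
        ContinuousOn b (Metric.ball 0 1) →
        (∀ x ∈ Metric.ball (0 : EuclideanSpace ℝ (Fin n)) 1, 0 ≤ b x) →
        LpNormE n q b (Metric.ball 0 1) ≤ ENNReal.ofReal K →
        ContDiffOn ℝ 2 u (Metric.ball 0 1) →
        (∀ x ∈ Metric.ball (0 : EuclideanSpace ℝ (Fin n)) 1, 0 ≤ u x) →
        (∀ x ∈ Metric.ball (0 : EuclideanSpace ℝ (Fin n)) 1,
          pucciMinus n lam Lam (hess n u x) - b x * gradNorm n u x ≤ 0) →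
        ENNReal.ofReal c *
            (∫⁻ x in Metric.ball (0 : EuclideanSpace ℝ (Fin n)) 1,
              ENNReal.ofReal
                ((-(pucciMinus n lam Lam (hess n u x) - b x * gradNorm n u x)) ^ ε)) ^ (1 / ε)
          ≤ ENNReal.ofReal
              (⨅ x : Metric.ball (0 : EuclideanSpace ℝ (Fin n)) 1, u x.1 / (1 - ‖x.1‖)) := by
  have hn₀ : n ≠ 0 := by omega
  have hq₀ : 0 < q := n.cast_nonneg.trans_lt hq
  obtain ⟨ε, c, hε, hc, hle⟩ := global_quantitative_strong_maximum_principle_general hn₀ hlam hLam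
    (sub_pos.2 ((div_lt_one hq₀).2 hq)) (sub_le_self 1 (by positivity))
    (mul_pos hK (Real.rpow_pos_of_pos (ballScale_pos n) _))
  exact ⟨ε, c, hε, hc, fun b u hb hb₀ hbK hu hu₀ hsuper => hle b u
    (isMorreyDrift_of_LpNormE_le hn₀ hq hK.le (hb.aemeasurable measurableSet_ball) hb₀ hbK)
    ⟨fun _ hx => hu.contDiffAt (Metric.isOpen_ball.mem_nhds hx), hu₀,
      fun x hx => sub_nonpos.1 (hsuper x hx)⟩⟩
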